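/- arXiv:1806.07325 — 2 statements merged into one kernel-verified Lean document; each statement's English description precedes it below -/
import Mathlib

section
/- Let 𝓜 ⊂ ℝᴺ, N ≥ 3, be a compact j-connected submanifold for some integer j ∈ {1,…,N−2}, contained in an N-dimensional cube Q. Then there exist a closed (N−j−2)-dimensional Lipschitz polyhedron X ⊂ Q ∖ 𝓜, a locally Lipschitz retraction ψ : Q ∖ X → 𝓜, and a constant c = c(N, j, 𝓜) > 0 such that |Dψ(x)| ≤ c/dist(x, X) for every x ∈ Q ∖ X. -/
open MeasureTheory Metric Set Filter Topology Function

noncomputable section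

abbrev Rn (n : ℕ) : Type := EuclideanSpace ℝ (Fin n)

/-- `Du` is a weak (distributional) differential of `u` on the set `Ω`. -/
def IsWeakFDerivOn {n N : ℕ} (Ω : Set (Rn n)) (u : Rn n → Rn N)
    (Du : Rn n → (Rn n →L[ℝ] Rn N)) : Prop :=
  LocallyIntegrableOn u Ω volume ∧
  LocallyIntegrableOn (fun x => ‖Du x‖) Ω volume ∧
  ∀ φ : Rn n → ℝ, ContDiff ℝ (⊤ : ℕ∞) φ → HasCompactSupport φ → tsupport φ ⊆ Ω →
    ∀ e : Rn n,
      ∫ x in Ω, (fderiv ℝ φ x e) • u x = - ∫ x in Ω, φ x • Du x e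

/-- Membership in the Musielak-Orlicz-Sobolev space `W^{1,p(·)}(Ω, ℝ^N)`,
with weak differential `Du`. -/
def MemW1p {n N : ℕ} (Ω : Set (Rn n)) (p : Rn n → ℝ) (u : Rn n → Rn N)
    (Du : Rn n → (Rn n →L[ℝ] Rn N)) : Prop :=
  IsWeakFDerivOn Ω u Du ∧
  IntegrableOn u Ω volume ∧
  IntegrableOn (fun x => ‖Du x‖) Ω volume ∧
  IntegrableOn (fun x => ‖u x‖ ^ p x) Ω volume ∧
  IntegrableOn (fun x => ‖Du x‖ ^ p x) Ω volume

/-- Membership in the local space `W^{1,p(·)}_loc(Ω, ℝ^N)`. -/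
def MemW1pLoc {n N : ℕ} (Ω : Set (Rn n)) (p : Rn n → ℝ) (u : Rn n → Rn N)
    (Du : Rn n → (Rn n →L[ℝ] Rn N)) : Prop :=
  IsWeakFDerivOn Ω u Du ∧
  ∀ K : Set (Rn n), IsCompact K → K ⊆ Ω →
    IntegrableOn u K volume ∧ IntegrableOn (fun x => ‖Du x‖) K volume ∧
    IntegrableOn (fun x => ‖u x‖ ^ p x) K volume ∧
    IntegrableOn (fun x => ‖Du x‖ ^ p x) K volume

/-- `u ∈ W^{1,p(·)}₀(U, ℝ^N)`: zero boundary values, expressed through approximation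
by compactly supported Sobolev maps. -/
def MemW1pZero {n N : ℕ} (U : Set (Rn n)) (p : Rn n → ℝ) (u : Rn n → Rn N)
    (Du : Rn n → (Rn n →L[ℝ] Rn N)) : Prop :=
  MemW1p U p u Du ∧
  ∃ (φ : ℕ → Rn n → Rn N) (Dφ : ℕ → Rn n → (Rn n →L[ℝ] Rn N)),
    (∀ j, MemW1p U p (φ j) (Dφ j) ∧ HasCompactSupport (φ j) ∧ tsupport (φ j) ⊆ U) ∧
    Tendsto
      (fun j => ∫ x in U, (‖u x - φ j x‖ + ‖Du x - Dφ j x‖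
        + ‖u x - φ j x‖ ^ p x + ‖Du x - Dφ j x‖ ^ p x)) atTop (nhds 0)

/-- `W^{1,p(·)}(Ω, M)` : values a.e. in `M`. -/
def MemW1pM {n N : ℕ} (Ω : Set (Rn n)) (p : Rn n → ℝ) (M : Set (Rn N))
    (u : Rn n → Rn N) (Du : Rn n → (Rn n →L[ℝ] Rn N)) : Prop :=
  MemW1p Ω p u Du ∧ ∀ᵐ x ∂(volume.restrict Ω), u x ∈ M

/-- `W^{1,p(·)}_loc(Ω, M)` : values a.e. in `M`. -/
def MemW1pMLoc {n N : ℕ} (Ω : Set (Rn n)) (p : Rn n → ℝ) (M : Set (Rn N))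
    (u : Rn n → Rn N) (Du : Rn n → (Rn n →L[ℝ] Rn N)) : Prop :=
  MemW1pLoc Ω p u Du ∧ ∀ᵐ x ∂(volume.restrict Ω), u x ∈ M

/-- A constrained local minimizer of `w ↦ ∫_Ω k(x) |Dw|^{p(x)} dx` among maps with
values in `M`. -/
def IsConstrainedLocalMin {n N : ℕ} (Ω : Set (Rn n)) (k p : Rn n → ℝ)
    (M : Set (Rn N)) (u : Rn n → Rn N) (Du : Rn n → (Rn n →L[ℝ] Rn N)) : Prop :=
  MemW1pMLoc Ω p M u Du ∧
  LocallyIntegrableOn (fun x => k x * ‖Du x‖ ^ p x) Ω volume ∧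
  ∀ U : Set (Rn n), IsOpen U → IsCompact (closure U) → closure U ⊆ Ω →
    ∀ (w : Rn n → Rn N) (Dw : Rn n → (Rn n →L[ℝ] Rn N)),
      MemW1pM U p M w Dw →
      MemW1pZero U p (fun x => w x - u x) (fun x => Dw x - Du x) →
      ∫ x in U, k x * ‖Du x‖ ^ p x ≤ ∫ x in U, k x * ‖Dw x‖ ^ p x

/-- `M` is an `m`-dimensional `C³` embedded submanifold (without boundary) of `ℝ^N`,
described locally as a regular level set of a `C³` submersion. -/
def IsC3Submanifold {N : ℕ} (m : ℕ) (M : Set (Rn N)) : Prop :=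
  ∀ x ∈ M, ∃ (U : Set (Rn N)) (f : Rn N → Rn (N - m)),
    IsOpen U ∧ x ∈ U ∧ ContDiffOn ℝ 3 f U ∧
    (M ∩ U = {y ∈ U | f y = 0}) ∧
    ∀ y ∈ U, Surjective (fderivWithin ℝ f U y)

/-- Assumptions (M1)-(M2) on the target manifold: `M ⊆ ℝ^N`, `N ≥ 3`, is a compact
`m`-dimensional `C³` submanifold without boundary which is `([γ₂]-1)`-connected. -/
def Mconds (N m : ℕ) (M : Set (Rn N)) (γ₂ : ℝ) : Prop :=
  3 ≤ N ∧ m ≤ N ∧ M.Nonempty ∧ IsCompact M ∧ IsC3Submanifold m M ∧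
  ∀ i : ℕ, i ≤ ⌊γ₂⌋₊ - 1 → ∀ x : ↥M, Subsingleton (HomotopyGroup (Fin i) ↥M x)

/-- Assumptions (P1)-(P2) on the variable exponent: `p` is `α`-Hölder on `Ω` with
seminorm at most `Cp`, and `1 < γ₁ ≤ p(x) ≤ γ₂`. -/
def Pconds {n : ℕ} (Ω : Set (Rn n)) (p : Rn n → ℝ) (α γ₁ γ₂ Cp : ℝ) : Prop :=
  0 < α ∧ α ≤ 1 ∧ (∀ x ∈ Ω, ∀ y ∈ Ω, |p x - p y| ≤ Cp * dist x y ^ α) ∧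
  1 < γ₁ ∧ ∀ x ∈ Ω, γ₁ ≤ p x ∧ p x ≤ γ₂

/-- Assumptions (K1)-(K2) on the coefficient: `k` is `α`-Hölder on `Ω` with seminorm
at most `Ck`, and `0 < λ ≤ k(x) ≤ Λ`. -/
def Kconds {n : ℕ} (Ω : Set (Rn n)) (k : Rn n → ℝ) (α lam Lam Ck : ℝ) : Prop :=
  (∀ x ∈ Ω, ∀ y ∈ Ω, |k x - k y| ≤ Ck * dist x y ^ α) ∧
  0 < lam ∧ ∀ x ∈ Ω, lam ≤ k x ∧ k x ≤ Lam

/-- `u` is `C¹`-regular around the point `x ∈ Ω` (up to modification on a null set). -/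
def C1RegularAt {n N : ℕ} (Ω : Set (Rn n)) (u : Rn n → Rn N) (x : Rn n) : Prop :=
  ∃ ε > 0, ball x ε ⊆ Ω ∧ ∃ ut : Rn n → Rn N,
    (∀ᵐ y ∂(volume.restrict (ball x ε)), ut y = u y) ∧
    ContDiffOn ℝ 1 ut (ball x ε)

/-- The singular set of `u`: the complement in `Ω` of the largest relatively open
subset of `Ω` on which `u` is `C¹`-regular. -/
def SingularSet {n N : ℕ} (Ω : Set (Rn n)) (u : Rn n → Rn N) : Set (Rn n) :=
  {x ∈ Ω | ¬ C1RegularAt Ω u x}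

/-- `u` is locally `C^{1,β}`-regular on the open set `S` (up to modification on a
null set). -/
def IsC1HolderOn {n N : ℕ} (S : Set (Rn n)) (β : ℝ) (u : Rn n → Rn N) : Prop :=
  ∀ x ∈ S, ∃ ε > 0, ball x ε ⊆ S ∧ ∃ (ut : Rn n → Rn N) (C : ℝ),
    (∀ᵐ y ∂(volume.restrict (ball x ε)), ut y = u y) ∧
    ContDiffOn ℝ 1 ut (ball x ε) ∧
    ∀ y ∈ ball x ε, ∀ z ∈ ball x ε,
      ‖fderivWithin ℝ ut (ball x ε) y - fderivWithin ℝ ut (ball x ε) z‖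
        ≤ C * dist y z ^ β

/-- An axis-parallel cube in `ℝ^N`. -/
def IsCube {N : ℕ} (Q : Set (Rn N)) : Prop :=
  ∃ (a : Rn N) (ρ : ℝ), 0 < ρ ∧ Q = {y : Rn N | ∀ i, |y i - a i| ≤ ρ}

/-- A closed `d`-dimensional Lipschitz polyhedron: a finite union of Lipschitz images
of compact subsets of `ℝ^d`. -/
def IsLipschitzPolyhedron {N : ℕ} (d : ℕ) (X : Set (Rn N)) : Prop :=
  IsClosed X ∧
  ∃ (K : ℕ) (F : Fin K → (Rn d → Rn N)) (S : Fin K → Set (Rn d)),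
    (∀ i, IsCompact (S i)) ∧
    (∀ i, ∃ C : NNReal, LipschitzOnWith C (F i) (S i)) ∧
    X = ⋃ i, F i '' S i

/-!
Some neighbourhood of `M` admits a Lipschitz retraction onto `M`. Since `M` is `j`-connected, the
retraction extends to a Lipschitz map into `M` on the `(j + 1)`-skeleton of any sufficiently fine
cubical grid. It remains to push `Q` onto that skeleton without moving the points of `M`. Dilating
each cell about its centre by a factor `1 / τ` and truncating to the cell sends a point to the
skeleton as soon as `N - j - 1` of its coordinates reach the walls of the cell, and does nothing
for `τ = 1`. The largest such `τ` is comparable to the distance from the `(N - j - 2)`-skeleton of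
the dual grid; near `M` it is raised to `1`. The push is Lipschitz with constant of order `1 / τ`,
whence the bound `c / dist(x, X)`.
-/

section Differential

variable {E F : Type*} [NormedAddCommGroup E] [NormedSpace ℝ E]
  [NormedAddCommGroup F] [NormedSpace ℝ F]

lemma norm_le_two_mul_of_norm_comp_sub_id_le {G : Type*} [NormedAddCommGroup G]
    [NormedSpace ℝ G] {A : E →L[ℝ] F} {R : F →L[ℝ] E}
    (h : ‖A ∘L R - ContinuousLinearMap.id ℝ F‖ ≤ 1 / 2) (Λ : F →L[ℝ] G) :
    ‖Λ‖ ≤ 2 * (‖Λ ∘L A‖ * ‖R‖) := by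
  have hdec : Λ = (Λ ∘L A) ∘L R - Λ ∘L (A ∘L R - ContinuousLinearMap.id ℝ F) := by
    ext w; simp
  have hle : ‖Λ‖ ≤ ‖Λ ∘L A‖ * ‖R‖ + ‖Λ‖ * (1 / 2) := by
    conv_lhs => rw [hdec]
    refine (norm_sub_le _ _).trans (add_le_add (ContinuousLinearMap.opNorm_comp_le _ _) ?_)
    exact (ContinuousLinearMap.opNorm_comp_le _ _).trans (by gcongr)
  linarith

lemma surjective_of_norm_comp_sub_id_lt_one [CompleteSpace F] {A : E →L[ℝ] F}
    {R : F →L[ℝ] E} (h : ‖A ∘L R - ContinuousLinearMap.id ℝ F‖ < 1) : Surjective A := by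
  rw [norm_sub_rev] at h
  obtain ⟨T, hT⟩ := isUnit_one_sub_of_norm_lt_one (R := F →L[ℝ] F) h
  intro w
  refine ⟨R ((↑T⁻¹ : F →L[ℝ] F) w), ?_⟩
  have hAR : (T : F →L[ℝ] F) = A ∘L R := by rw [hT]; exact sub_sub_cancel _ _
  simpa [hAR] using congrArg (fun S : F →L[ℝ] F => S w) T.mul_inv

lemma norm_image_sub_sub_fderiv_le_of_lipschitzOnWith {f : E → F} {s : Set E} {K : NNReal}
    (hs : Convex ℝ s) (hf : ∀ y ∈ s, DifferentiableAt ℝ f y)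
    (hK : LipschitzOnWith K (fderiv ℝ f) s) {a b : E} (ha : a ∈ s) (hb : b ∈ s) :
    ‖f b - f a - fderiv ℝ f a (b - a)‖ ≤ K * ‖b - a‖ ^ 2 := by
  have hT := Convex.norm_image_sub_le_of_norm_fderiv_le' (𝕜 := ℝ) (f := f) (φ := fderiv ℝ f a)
    (C := K * ‖b - a‖) (s := s ∩ closedBall a ‖b - a‖) (x := a) (y := b)
    (fun y hy => hf y hy.1) (fun y hy => ?_) (hs.inter (convex_closedBall _ _))
    ⟨ha, by simp⟩ ⟨hb, by simp [dist_eq_norm]⟩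
  · rwa [mul_assoc, ← sq] at hT
  · rw [← dist_eq_norm]
    exact (hK.dist_le_mul _ hy.1 _ ha).trans (by gcongr; exact hy.2)

end Differential

section Reach

variable {E F : Type*} [NormedAddCommGroup E] [InnerProductSpace ℝ E]
  [NormedAddCommGroup F] [NormedSpace ℝ F]

lemma exists_inner_eq_comp_of_isLocalMinOn_dist [CompleteSpace E] [FiniteDimensional ℝ F]
    {f : E → F} {f' : E →L[ℝ] F} {a x : E} (hf : HasStrictFDerivAt f f' a)
    (hsurj : Surjective f') (hmin : IsLocalMinOn (dist x) {y | f y = f a} a) :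
    ∃ Λ : F →L[ℝ] ℝ, ∀ v, inner ℝ (x - a) v = Λ (f' v) := by
  have hdist : HasStrictFDerivAt (fun y => ‖y - x‖ ^ 2) (2 • (innerSL ℝ) (a - x)) a := by
    simpa using (hasStrictFDerivAt_norm_sq (a - x)).comp a ((hasStrictFDerivAt_id a).sub_const x)
  have hext : IsLocalExtrOn (fun y => ‖y - x‖ ^ 2) {y | f y = f a} a := by
    refine Or.inl (hmin.mono fun y hy => ?_)
    rw [dist_eq_norm', dist_eq_norm'] at hy
    exact pow_le_pow_left₀ (norm_nonneg _) hy 2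
  obtain ⟨Λ, Λ₀, hne, hΛ⟩ := hext.exists_linear_map_of_hasStrictFDerivAt hf hdist
  have hΛ₀ : Λ₀ ≠ 0 := by
    rintro rfl
    refine hne (Prod.mk_eq_zero.2 ⟨LinearMap.ext fun w => ?_, rfl⟩)
    obtain ⟨v, rfl⟩ := hsurj w
    simpa using hΛ v
  refine ⟨(2 * Λ₀)⁻¹ • LinearMap.toContinuousLinearMap Λ, fun v => ?_⟩
  have hΛv := hΛ v
  have hneg : inner ℝ (x - a) v = -inner ℝ (a - x) v := by rw [← inner_neg_left, neg_sub]
  simp only [_root_.smul_apply, innerSL_apply_apply, smul_eq_mul, nsmul_eq_mul,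
    LinearMap.coe_toContinuousLinearMap', Nat.cast_ofNat] at hΛv ⊢
  rw [hneg]
  field_simp
  linarith

/-- Federer's inequality at the pair `(a, b)`: if `a` is a nearest point of `M` to `x`, then
`b - a` makes an almost obtuse angle with `x - a`. A uniform constant for all pairs of points of
`M` means that `M` has positive reach. -/
def HasReachBound (M : Set E) (C : ℝ) (a b : E) : Prop :=
  ∀ x, IsMinOn (dist x) M a → inner ℝ (x - a) (b - a) ≤ C * ‖x - a‖ * ‖b - a‖ ^ 2

namespace HasReachBound

variable {M : Set E}

lemma mono {C C' : ℝ} {a b : E} (h : HasReachBound M C a b) (hC : C ≤ C') :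
    HasReachBound M C' a b := fun x hx => (h x hx).trans (by gcongr)

lemma of_ne (M : Set E) {a b : E} {δ : ℝ} (hδ : 0 < δ) (hab : δ ≤ ‖b - a‖) :
    HasReachBound M δ⁻¹ a b := fun x _ => by
  have hsq : ‖b - a‖ ≤ δ⁻¹ * ‖b - a‖ ^ 2 := by
    rw [← div_eq_inv_mul, le_div_iff₀ hδ, sq]
    gcongr
  calc inner ℝ (x - a) (b - a) ≤ ‖x - a‖ * ‖b - a‖ := real_inner_le_norm _ _
    _ ≤ ‖x - a‖ * (δ⁻¹ * ‖b - a‖ ^ 2) := by gcongr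
    _ = δ⁻¹ * ‖x - a‖ * ‖b - a‖ ^ 2 := by ring

lemma dist_le_two_mul {C : ℝ} (hC : 0 < C) {a b x y : E} (hab : HasReachBound M C a b)
    (hba : HasReachBound M C b a) (ha : IsMinOn (dist x) M a) (hb : IsMinOn (dist y) M b)
    (hxa : dist x a ≤ 1 / (4 * C)) (hyb : dist y b ≤ 1 / (4 * C)) :
    dist a b ≤ 2 * dist x y := by
  rw [dist_eq_norm] at hxa hyb
  have key : ‖a - b‖ ^ 2 ≤ ‖x - y‖ * ‖a - b‖ + 1 / 4 * ‖a - b‖ ^ 2 + 1 / 4 * ‖a - b‖ ^ 2 :=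
    calc ‖a - b‖ ^ 2
        = inner ℝ (x - y) (a - b) + inner ℝ (x - a) (b - a) + inner ℝ (y - b) (a - b) := by
          rw [← real_inner_self_eq_norm_sq]
          simp only [inner_sub_left, inner_sub_right]
          ring
      _ ≤ ‖x - y‖ * ‖a - b‖ + C * ‖x - a‖ * ‖b - a‖ ^ 2 + C * ‖y - b‖ * ‖a - b‖ ^ 2 :=
          add_le_add_three (real_inner_le_norm _ _) (hab x ha) (hba y hb)
      _ ≤ ‖x - y‖ * ‖a - b‖ + C * (1 / (4 * C)) * ‖a - b‖ ^ 2
            + C * (1 / (4 * C)) * ‖a - b‖ ^ 2 := by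
          rw [norm_sub_rev b a]
          gcongr
      _ = _ := by field_simp
  rw [dist_eq_norm, dist_eq_norm]
  by_contra! hlt
  nlinarith [norm_nonneg (x - y)]

end HasReachBound

lemma eventually_hasReachBound_of_surjective_fderiv [CompleteSpace E] [FiniteDimensional ℝ F]
    {f : E → F} {M : Set E} {x₀ : E} (hf : ContDiffAt ℝ 2 f x₀)
    (hsurj : Surjective (fderiv ℝ f x₀)) (hM : ∀ᶠ y in 𝓝 x₀, y ∈ M ↔ f y = 0) :
    ∃ C, ∀ᶠ p : E × E in 𝓝 (x₀, x₀), p.1 ∈ M → p.2 ∈ M → HasReachBound M C p.1 p.2 := by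
  have : CompleteSpace F := FiniteDimensional.complete ℝ F
  have hf' : ContDiffAt ℝ 1 (fderiv ℝ f) x₀ := hf.fderiv_right (by norm_num)
  obtain ⟨K, t, ht, hK⟩ := hf'.exists_lipschitzOnWith
  obtain ⟨R, hR⟩ := (fderiv ℝ f x₀).exists_rightInverse_of_surjective
    (LinearMap.range_eq_top.2 hsurj)
  have hnear : ∀ᶠ y in 𝓝 x₀, ‖fderiv ℝ f y ∘L R - ContinuousLinearMap.id ℝ F‖ < 1 / 2 := by
    have hcont : ContinuousAt
        (fun y => ‖fderiv ℝ f y ∘L R - ContinuousLinearMap.id ℝ F‖) x₀ :=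
      ((hf'.continuousAt.clm_comp continuousAt_const).sub continuousAt_const).norm
    exact hcont.eventually_lt_const (by simp [hR])
  have hsmooth : ∀ᶠ y in 𝓝 x₀, ContDiffAt ℝ 2 f y := hf.eventually (by simp)
  obtain ⟨ρ, hρ, hball⟩ := Metric.eventually_nhds_iff_ball.1
    (hM.eventually_nhds.and (hnear.and (hsmooth.and ht)))
  refine ⟨2 * ‖R‖ * K, ?_⟩
  rw [nhds_prod_eq]
  filter_upwards [prod_mem_prod (ball_mem_nhds x₀ hρ) (ball_mem_nhds x₀ hρ)]
  rintro ⟨a, b⟩ ⟨ha, hb⟩ haM hbM x hmin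
  obtain ⟨hMa, hRa, hfa, -⟩ := hball a ha
  have hfa0 : f a = 0 := hMa.self_of_nhds.1 haM
  have hfb0 : f b = 0 := (hball b hb).1.self_of_nhds.1 hbM
  obtain ⟨Λ, hΛ⟩ := exists_inner_eq_comp_of_isLocalMinOn_dist
    (hfa.hasStrictFDerivAt (by norm_num)) (surjective_of_norm_comp_sub_id_lt_one (by linarith))
    (show IsLocalMinOn (dist x) {y | f y = f a} a by
      filter_upwards [mem_nhdsWithin_of_mem_nhds hMa, self_mem_nhdsWithin] with y hyM hy
      exact hmin (hyM.2 (hy.trans hfa0)))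
  have htaylor : ‖fderiv ℝ f a (b - a)‖ ≤ K * ‖b - a‖ ^ 2 := by
    simpa only [hfa0, hfb0, sub_self, zero_sub, norm_neg] using
      norm_image_sub_sub_fderiv_le_of_lipschitzOnWith (convex_ball x₀ ρ)
      (fun y hy => (hball y hy).2.2.1.differentiableAt (by norm_num))
      (hK.mono fun y hy => (hball y hy).2.2.2) ha hb
  have hΛA : ‖Λ ∘L fderiv ℝ f a‖ ≤ ‖x - a‖ :=
    ContinuousLinearMap.opNorm_le_bound _ (norm_nonneg _) fun v => by
      rw [ContinuousLinearMap.comp_apply, ← hΛ]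
      exact norm_inner_le_norm _ _
  calc inner ℝ (x - a) (b - a) = Λ (fderiv ℝ f a (b - a)) := hΛ _
    _ ≤ ‖Λ‖ * ‖fderiv ℝ f a (b - a)‖ := (le_abs_self _).trans (Λ.le_opNorm _)
    _ ≤ 2 * (‖x - a‖ * ‖R‖) * (K * ‖b - a‖ ^ 2) := by
      gcongr
      exact (norm_le_two_mul_of_norm_comp_sub_id_le hRa.le Λ).trans (by gcongr)
    _ = 2 * ‖R‖ * K * ‖x - a‖ * ‖b - a‖ ^ 2 := by ring

lemma exists_hasReachBound_of_isCompact {M : Set E} (hc : IsCompact M)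
    (hloc : ∀ x₀ ∈ M, ∃ C, ∀ᶠ p : E × E in 𝓝 (x₀, x₀),
      p.1 ∈ M → p.2 ∈ M → HasReachBound M C p.1 p.2) :
    ∃ C > 0, ∀ a ∈ M, ∀ b ∈ M, HasReachBound M C a b := by
  suffices ∃ C, ∀ p ∈ M ×ˢ M, HasReachBound M C p.1 p.2 by
    obtain ⟨C, hC⟩ := this
    exact ⟨max C 1, by positivity, fun a ha b hb => (hC (a, b) ⟨ha, hb⟩).mono (le_max_left _ _)⟩
  refine (hc.prod hc).induction_on (p := fun s => ∃ C, ∀ p ∈ s, HasReachBound M C p.1 p.2)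
    ⟨0, by simp⟩ (fun s t hst ⟨C, hC⟩ => ⟨C, fun p hp => hC p (hst hp)⟩) ?_ ?_
  · rintro s t ⟨C, hC⟩ ⟨C', hC'⟩
    exact ⟨max C C', fun p hp => hp.elim (fun h => (hC p h).mono (le_max_left _ _))
      fun h => (hC' p h).mono (le_max_right _ _)⟩
  · rintro ⟨a, b⟩ ⟨ha, -⟩
    rcases eq_or_ne a b with rfl | hab
    · obtain ⟨C, hC⟩ := hloc a ha
      refine ⟨_, inter_mem (mem_nhdsWithin_of_mem_nhds hC) self_mem_nhdsWithin, C, ?_⟩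
      exact fun p hp => hp.1 hp.2.1 hp.2.2
    · have hpos : 0 < ‖b - a‖ := norm_pos_iff.2 (sub_ne_zero.2 hab.symm)
      have hfar : ∀ᶠ p : E × E in 𝓝 (a, b), ‖b - a‖ / 2 < ‖p.2 - p.1‖ :=
        (by fun_prop : Continuous fun p : E × E => ‖p.2 - p.1‖).continuousAt.eventually_const_lt
          (half_lt_self hpos)
      exact ⟨_, mem_nhdsWithin_of_mem_nhds hfar, _,
        fun p hp => HasReachBound.of_ne M (half_pos hpos) (le_of_lt hp)⟩

end Reach

/-- `M` is a Lipschitz retract of one of its closed metric neighbourhoods; the retraction is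
required to be defined and Lipschitz on the whole space. Such a set is nonempty, because
`infDist x ∅ = 0`. -/
def IsLipschitzNbhdRetract {E : Type*} [PseudoMetricSpace E] (M : Set E) : Prop :=
  ∃ (r : E → E) (L : NNReal) (ε : ℝ), 0 < ε ∧ LipschitzWith L r ∧ (∀ a ∈ M, r a = a) ∧
    ∀ x, infDist x M ≤ ε → r x ∈ M

lemma IsLipschitzNbhdRetract.nonempty {E : Type*} [PseudoMetricSpace E] [hE : Nonempty E]
    {M : Set E} (hM : IsLipschitzNbhdRetract M) : M.Nonempty := by
  obtain ⟨r, _, ε, hε, -, -, hrM⟩ := hM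
  rcases M.eq_empty_or_nonempty with rfl | hne
  · exact (hrM hE.some (infDist_empty.trans_le hε.le)).elim
  · exact hne

lemma isLipschitzNbhdRetract_of_hasReachBound {E : Type*} [NormedAddCommGroup E]
    [InnerProductSpace ℝ E] [FiniteDimensional ℝ E] {M : Set E} (hc : IsCompact M)
    (hne : M.Nonempty) {C : ℝ} (hC : 0 < C) (hreach : ∀ a ∈ M, ∀ b ∈ M, HasReachBound M C a b) :
    IsLipschitzNbhdRetract M := by
  choose p hpM hp using hc.exists_infDist_eq_dist hne
  have hmin : ∀ x, IsMinOn (dist x) M (p x) := fun x y hy => by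
    change dist x (p x) ≤ dist x y
    exact hp x ▸ infDist_le_dist_of_mem hy
  have hlip : LipschitzOnWith 2 p {x | infDist x M ≤ 1 / (4 * C)} :=
    LipschitzOnWith.of_dist_le_mul fun x hx y hy =>
      (hreach _ (hpM x) _ (hpM y)).dist_le_two_mul hC (hreach _ (hpM y) _ (hpM x)) (hmin x)
        (hmin y) (hp x ▸ hx) (hp y ▸ hy)
  obtain ⟨r, hr, hrp⟩ := hlip.extend_finite_dimension
  refine ⟨r, _, 1 / (4 * C), by positivity, hr, fun a ha => ?_, fun x hx => hrp hx ▸ hpM x⟩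
  have ha0 : infDist a M = 0 := infDist_zero_of_mem ha
  rw [← hrp (show infDist a M ≤ _ by rw [ha0]; positivity)]
  exact (dist_eq_zero.1 ((hp a).symm.trans ha0)).symm

namespace IsC3Submanifold

variable {N m : ℕ} {M : Set (Rn N)}

lemma isLipschitzNbhdRetract (hM : IsC3Submanifold m M) (hc : IsCompact M) (hne : M.Nonempty) :
    IsLipschitzNbhdRetract M := by
  obtain ⟨C, hC, hreach⟩ := exists_hasReachBound_of_isCompact hc fun x hx => by
    obtain ⟨U, f, hU, hxU, hf, hMU, hs⟩ := hM x hx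
    refine eventually_hasReachBound_of_surjective_fderiv
      ((hf.contDiffAt (hU.mem_nhds hxU)).of_le (by norm_num))
      (by simpa [fderivWithin_of_isOpen hU hxU] using hs x hxU) ?_
    filter_upwards [hU.mem_nhds hxU] with y hy
    simpa [hy] using Set.ext_iff.1 hMU y
  exact isLipschitzNbhdRetract_of_hasReachBound hc hne hC hreach

lemma isOpen_of_dim_le (hM : IsC3Submanifold m M) (hm : N ≤ m) : IsOpen M := by
  have : IsEmpty (Fin (N - m)) := ⟨fun i => absurd i.2 (by omega)⟩
  refine isOpen_iff_mem_nhds.2 fun x hx => ?_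
  obtain ⟨U, f, hU, hxU, -, hMU, -⟩ := hM x hx
  refine mem_of_superset (hU.mem_nhds hxU) fun y hy => ?_
  exact (hMU.symm.subset ⟨hy, Subsingleton.elim _ _⟩).1

lemma interior_eq_empty_of_dim_lt (hM : IsC3Submanifold m M) (hm : m < N) :
    interior M = ∅ := by
  refine eq_empty_of_forall_notMem fun a ha => ?_
  obtain ⟨U, f, hU, haU, -, hMU, hs⟩ := hM a (interior_subset ha)
  have hf0 : f =ᶠ[𝓝 a] fun _ => 0 := by
    filter_upwards [hU.mem_nhds haU, mem_interior_iff_mem_nhds.1 ha] with y hyU hyM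
    exact (hMU.subset ⟨hyM, hyU⟩).2
  have : Nonempty (Fin (N - m)) := ⟨⟨0, by omega⟩⟩
  obtain ⟨w, hw⟩ := exists_ne (0 : Rn (N - m))
  obtain ⟨v, hv⟩ := hs a haU w
  rw [fderivWithin_of_isOpen hU haU, hf0.fderiv_eq] at hv
  exact hw (by simpa using hv.symm)

lemma diff_nonempty_of_interior_nonempty (hN : 0 < N) (hM : IsC3Submanifold m M)
    (hc : IsCompact M) {Q : Set (Rn N)} (hQ : (interior Q).Nonempty) : (Q \ M).Nonempty := by
  by_contra! hQM
  obtain ⟨a, ha⟩ := hQ.mono (interior_mono (sdiff_eq_empty.1 hQM))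
  rcases lt_or_ge m N with hm | hm
  · simp [hM.interior_eq_empty_of_dim_lt hm] at ha
  · have : Nonempty (Fin N) := ⟨⟨0, hN⟩⟩
    have huniv : M = univ :=
      IsClopen.eq_univ ⟨hc.isClosed, hM.isOpen_of_dim_le hm⟩ ⟨a, interior_subset ha⟩
    exact noncompact_univ (Rn N) (huniv ▸ hc)

end IsC3Submanifold

/-- Continuous maps from the unit sphere of `ℝᵈ` to `Y` extend continuously to the unit ball.
Both are taken in the sup norm, so that the ball is a cube. -/
def SphereExtension (d : ℕ) (Y : Type*) [TopologicalSpace Y] : Prop :=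
  ∀ f : (Fin d → ℝ) → Y, ContinuousOn f (sphere 0 1) →
    ∃ G : (Fin d → ℝ) → Y, ContinuousOn G (closedBall 0 1) ∧ EqOn G f (sphere 0 1)

section Wrap

variable {n : ℕ}

/-- Wraps the ball of `ℝⁿ` around the sphere `|x₀| + ‖(x₁, …, xₙ)‖ = 1` of `ℝⁿ⁺¹`: the centre goes
to the north pole, the boundary is collapsed to the south pole. -/
def wrap (v : Fin n → ℝ) : Fin (n + 1) → ℝ :=
  Fin.cons (1 - 2 * ‖v‖) ((2 * (1 - ‖v‖) / max ‖v‖ (1 - ‖v‖)) • v)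

lemma max_norm_one_sub_norm_pos (v : Fin n → ℝ) : 0 < max ‖v‖ (1 - ‖v‖) := by
  rcases le_or_gt ‖v‖ (1 / 2) with h | h
  · exact lt_max_of_lt_right (by linarith)
  · exact lt_max_of_lt_left (by linarith)

lemma continuous_wrap : Continuous (wrap (n := n)) := by
  have hcoef : Continuous fun v : Fin n → ℝ => 2 * (1 - ‖v‖) / max ‖v‖ (1 - ‖v‖) :=
    Continuous.div (by fun_prop) (by fun_prop) fun v => (max_norm_one_sub_norm_pos v).ne'
  exact Continuous.finCons (by fun_prop) (hcoef.smul continuous_id)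

lemma abs_wrap_zero_add_norm_tail_wrap {v : Fin n → ℝ} (hv : ‖v‖ ≤ 1) :
    |wrap v 0| + ‖Fin.tail (wrap v)‖ = 1 := by
  have hmax := max_norm_one_sub_norm_pos v
  have htail : ‖Fin.tail (wrap v)‖ = 2 * (1 - ‖v‖) / max ‖v‖ (1 - ‖v‖) * ‖v‖ := by
    rw [wrap, Fin.tail_cons, norm_smul, Real.norm_of_nonneg]
    exact div_nonneg (by linarith) hmax.le
  rw [htail, wrap, Fin.cons_zero, div_mul_eq_mul_div]
  rcases le_total ‖v‖ (1 - ‖v‖) with h | h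
  · rw [max_eq_right h] at hmax ⊢
    rw [abs_of_nonneg (by linarith)]
    field_simp
    ring
  · rw [max_eq_left h] at hmax ⊢
    rw [abs_of_nonpos (by linarith)]
    field_simp
    ring

lemma wrap_ne_zero {v : Fin n → ℝ} (hv : ‖v‖ ≤ 1) : wrap v ≠ 0 := fun h => by
  have hsum := abs_wrap_zero_add_norm_tail_wrap hv
  rw [h, show Fin.tail (0 : Fin (n + 1) → ℝ) = 0 from rfl] at hsum
  simp at hsum

lemma eq_or_norm_eq_one_of_wrap_eq_smul {v v' : Fin n → ℝ} (hv : ‖v‖ ≤ 1) (hv' : ‖v'‖ ≤ 1)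
    {l : ℝ} (hl : 0 ≤ l) (h : wrap v = l • wrap v') : v = v' ∨ ‖v‖ = 1 ∧ ‖v'‖ = 1 := by
  obtain rfl : l = 1 := by
    have hsum := abs_wrap_zero_add_norm_tail_wrap hv
    rw [h, show Fin.tail (l • wrap v') = l • Fin.tail (wrap v') from rfl, norm_smul, Pi.smul_apply,
      smul_eq_mul, abs_mul, Real.norm_eq_abs, abs_of_nonneg hl, ← mul_add,
      abs_wrap_zero_add_norm_tail_wrap hv', mul_one] at hsum
    exact hsum
  rw [one_smul, wrap, wrap, Fin.cons_inj] at h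
  have hnorm : ‖v‖ = ‖v'‖ := by linarith [h.1]
  rcases hv'.eq_or_lt with h1 | h1
  · exact Or.inr ⟨hnorm.trans h1, h1⟩
  · have hcoef : 2 * (1 - ‖v'‖) / max ‖v'‖ (1 - ‖v'‖) ≠ 0 :=
      div_ne_zero (by linarith) (max_norm_one_sub_norm_pos v').ne'
    exact Or.inl (smul_right_injective _ hcoef (hnorm ▸ h.2))

lemma exists_wrap_eq_cons (hn : 0 < n) {a : ℝ} {w : Fin n → ℝ} (h : |a| + ‖w‖ = 1) :
    ∃ v : Fin n → ℝ, ‖v‖ ≤ 1 ∧ wrap v = Fin.cons a w := by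
  have : Nonempty (Fin n) := ⟨⟨0, hn⟩⟩
  have ha : |a| ≤ 1 := by linarith [norm_nonneg w]
  have hr : 0 ≤ (1 - a) / 2 := by linarith [(abs_le.1 ha).2]
  suffices ∃ v : Fin n → ℝ, ‖v‖ = (1 - a) / 2 ∧
      (2 * (1 - ‖v‖) / max ‖v‖ (1 - ‖v‖)) • v = w by
    obtain ⟨v, hv, hvw⟩ := this
    refine ⟨v, by linarith [(abs_le.1 ha).1], ?_⟩
    rw [wrap, hvw, hv]
    congr 1
    ring
  rcases eq_or_ne w 0 with rfl | hw
  · have hv : ‖fun _ : Fin n => (1 - a) / 2‖ = (1 - a) / 2 := by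
      rw [pi_norm_const, Real.norm_of_nonneg hr]
    refine ⟨_, hv, ?_⟩
    rw [hv]
    rcases (abs_eq zero_le_one).1 (by simpa using h) with rfl | rfl <;>
      · ext i
        norm_num
  · have hw0 := norm_pos_iff.2 hw
    have hv : ‖((1 - a) / 2 / ‖w‖) • w‖ = (1 - a) / 2 := by
      rw [norm_smul, Real.norm_of_nonneg (by positivity), div_mul_cancel₀ _ hw0.ne']
    refine ⟨((1 - a) / 2 / ‖w‖) • w, hv, ?_⟩
    have hmax := max_norm_one_sub_norm_pos (((1 - a) / 2 / ‖w‖) • w)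
    rw [hv] at hmax ⊢
    rw [smul_smul]
    convert one_smul ℝ w using 2
    rw [div_mul_div_comm, div_eq_one_iff_eq (by positivity)]
    rcases le_total 0 a with h0 | h0
    · rw [max_eq_right (by linarith), show ‖w‖ = 1 - a by rw [abs_of_nonneg h0] at h; linarith]
      ring
    · rw [max_eq_left (by linarith), show ‖w‖ = 1 + a by rw [abs_of_nonpos h0] at h; linarith]
      ring

/-- `wrap` rescaled to the unit sphere of the sup norm. -/
def wrapDir (v : Fin n → ℝ) : Fin (n + 1) → ℝ := ‖wrap v‖⁻¹ • wrap v

lemma norm_wrapDir {v : Fin n → ℝ} (hv : ‖v‖ ≤ 1) : ‖wrapDir v‖ = 1 :=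
  norm_smul_inv_norm (wrap_ne_zero hv)

lemma continuousOn_wrapDir : ContinuousOn (wrapDir (n := n)) (closedBall 0 1) :=
  (continuous_wrap.norm.continuousOn.inv₀ fun _ hv =>
    norm_ne_zero_iff.2 (wrap_ne_zero (mem_closedBall_zero_iff.1 hv))).smul
      continuous_wrap.continuousOn

lemma wrapDir_eq_of_norm_eq_one {v : Fin n → ℝ} (hv : ‖v‖ = 1) :
    wrapDir v = Fin.cons (-1) 0 := by
  have hwrap : wrap v = Fin.cons (-1) 0 := by rw [wrap, hv]; norm_num
  have hnorm : ‖(Fin.cons (-1) 0 : Fin (n + 1) → ℝ)‖ = 1 := by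
    refine le_antisymm ((pi_norm_le_iff_of_nonneg zero_le_one).2 fun i => ?_) ?_
    · refine Fin.cases ?_ (fun i => ?_) i <;> simp
    · simpa using norm_le_pi_norm (Fin.cons (-1) 0 : Fin (n + 1) → ℝ) 0
  rw [wrapDir, hwrap, hnorm, inv_one, one_smul]

lemma eq_or_norm_eq_one_of_wrapDir_eq {v v' : Fin n → ℝ} (hv : ‖v‖ ≤ 1) (hv' : ‖v'‖ ≤ 1)
    (h : wrapDir v = wrapDir v') : v = v' ∨ ‖v‖ = 1 ∧ ‖v'‖ = 1 := by
  refine eq_or_norm_eq_one_of_wrap_eq_smul hv hv' (l := ‖wrap v‖ * ‖wrap v'‖⁻¹) (by positivity) ?_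
  rw [mul_smul]
  change _ = ‖wrap v‖ • wrapDir v'
  rw [← h, wrapDir, smul_inv_smul₀ (norm_ne_zero_iff.2 (wrap_ne_zero hv))]

lemma exists_wrapDir_eq (hn : 0 < n) {z : Fin (n + 1) → ℝ} (hz : ‖z‖ = 1) :
    ∃ v : Fin n → ℝ, ‖v‖ ≤ 1 ∧ wrapDir v = z := by
  set s := |z 0| + ‖Fin.tail z‖ with hs
  have hs0 : 0 < s := by
    refine (add_nonneg (abs_nonneg _) (norm_nonneg _)).lt_of_ne' fun h0 => ?_
    obtain ⟨h1, h2⟩ := (add_eq_zero_iff_of_nonneg (abs_nonneg _) (norm_nonneg _)).1 h0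
    have : z = 0 := by
      rw [← Fin.cons_self_tail z, abs_eq_zero.1 h1, norm_eq_zero.1 h2]
      exact funext (Fin.cases rfl fun _ => rfl)
    simp [this] at hz
  obtain ⟨v, hv, hwrap⟩ := exists_wrap_eq_cons hn (a := s⁻¹ * z 0) (w := s⁻¹ • Fin.tail z) (by
    rw [abs_mul, norm_smul, Real.norm_eq_abs, ← mul_add, abs_of_pos (inv_pos.2 hs0), ← hs,
      inv_mul_cancel₀ hs0.ne'])
  have hsz : wrap v = s⁻¹ • z := by
    rw [hwrap]
    exact funext (Fin.cases rfl fun _ => rfl)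
  refine ⟨v, hv, ?_⟩
  rw [wrapDir, hsz, norm_smul, hz, norm_inv, Real.norm_of_nonneg hs0.le, mul_one, inv_inv,
    smul_inv_smul₀ hs0.ne']

end Wrap

section CubeToBall

variable {n : ℕ}

/-- The affine map from the unit cube `Iⁿ` onto the unit ball of the sup norm. -/
def cubeToBall (y : Fin n → unitInterval) : Fin n → ℝ := fun i => 2 * (y i : ℝ) - 1

lemma continuous_cubeToBall : Continuous (cubeToBall (n := n)) := by
  unfold cubeToBall; fun_prop

lemma norm_cubeToBall_le (y : Fin n → unitInterval) : ‖cubeToBall y‖ ≤ 1 :=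
  (pi_norm_le_iff_of_nonneg zero_le_one).2 fun i => by
    rw [cubeToBall, Real.norm_eq_abs, abs_le]
    constructor <;> linarith [(y i).2.1, (y i).2.2]

lemma exists_abs_apply_eq_one_of_norm_eq_one {ι : Type*} [Fintype ι] {v : ι → ℝ} (hv : ‖v‖ = 1) :
    ∃ i, |v i| = 1 := by
  by_contra! hne
  exact hv.not_lt ((pi_norm_lt_iff one_pos).2 fun i =>
    ((norm_le_pi_norm v i).trans hv.le).lt_of_ne (hne i))

lemma norm_cubeToBall_eq_one_iff (y : Fin n → unitInterval) :
    ‖cubeToBall y‖ = 1 ↔ y ∈ Cube.boundary (Fin n) := by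
  constructor
  · intro h
    obtain ⟨i, hi⟩ := exists_abs_apply_eq_one_of_norm_eq_one h
    rw [cubeToBall] at hi
    refine ⟨i, ((abs_eq zero_le_one).1 hi).symm.imp (fun h0 => ?_) fun h1 => ?_⟩ <;>
      · ext
        push_cast
        linarith
  · rintro ⟨i, hi⟩
    refine le_antisymm (norm_cubeToBall_le y) ?_
    refine le_trans (le_of_eq ?_) (norm_le_pi_norm (cubeToBall y) i)
    rcases hi with hi | hi <;> norm_num [cubeToBall, hi]

lemma cubeToBall_injective : Injective (cubeToBall (n := n)) := fun y y' h => by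
  ext i
  have hi : 2 * (y i : ℝ) - 1 = 2 * (y' i : ℝ) - 1 := congrFun h i
  linarith

lemma exists_cubeToBall_eq {v : Fin n → ℝ} (hv : ‖v‖ ≤ 1) : ∃ y, cubeToBall y = v := by
  have hi : ∀ i, |v i| ≤ 1 := fun i => (norm_le_pi_norm v i).trans hv
  refine ⟨fun i => ⟨(v i + 1) / 2, ?_, ?_⟩, funext fun i => ?_⟩
  · linarith [(abs_le.1 (hi i)).1]
  · linarith [(abs_le.1 (hi i)).2]
  · change 2 * ((v i + 1) / 2) - 1 = v i
    ring

end CubeToBall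

section Cone

variable {n : ℕ}

/-- Presents the unit ball of `ℝⁿ⁺¹` as a quotient of `I × Iⁿ`: `coneMap (t, ·)` wraps the cube
around the sphere of radius `1 - t`. -/
def coneMap (p : unitInterval × (Fin n → unitInterval)) : Fin (n + 1) → ℝ :=
  (1 - (p.1 : ℝ)) • wrapDir (cubeToBall p.2)

lemma continuous_wrapDir_cubeToBall :
    Continuous fun y : Fin n → unitInterval => wrapDir (cubeToBall y) :=
  continuousOn_wrapDir.comp_continuous continuous_cubeToBall fun y =>
    mem_closedBall_zero_iff.2 (norm_cubeToBall_le y)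

lemma continuous_coneMap : Continuous (coneMap (n := n)) :=
  (by fun_prop : Continuous fun p : unitInterval × (Fin n → unitInterval) => 1 - (p.1 : ℝ)).smul
    (continuous_wrapDir_cubeToBall.comp continuous_snd)

lemma exists_wrapDir_cubeToBall_eq (hn : 0 < n) {z : Fin (n + 1) → ℝ} (hz : ‖z‖ = 1) :
    ∃ y : Fin n → unitInterval, wrapDir (cubeToBall y) = z := by
  obtain ⟨v, hv, rfl⟩ := exists_wrapDir_eq hn hz
  obtain ⟨y, rfl⟩ := exists_cubeToBall_eq hv
  exact ⟨y, rfl⟩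

lemma closedBall_subset_range_coneMap (hn : 0 < n) :
    closedBall 0 1 ⊆ range (coneMap (n := n)) := fun z hz => by
  rw [mem_closedBall_zero_iff] at hz
  rcases eq_or_ne z 0 with rfl | hz0
  · exact ⟨(1, 0), by simp [coneMap]⟩
  · obtain ⟨y, hy⟩ := exists_wrapDir_cubeToBall_eq hn (norm_smul_inv_norm (𝕜 := ℝ) hz0)
    refine ⟨(⟨1 - ‖z‖, by linarith, by linarith [norm_nonneg z]⟩, y), ?_⟩
    simp [coneMap, hy, smul_smul, hz0]

lemma fst_eq_of_coneMap_eq {p p' : unitInterval × (Fin n → unitInterval)}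
    (h : coneMap p = coneMap p') : p.1 = p'.1 := by
  have hnorm := congrArg norm h
  rw [coneMap, coneMap, norm_smul, norm_smul, norm_wrapDir (norm_cubeToBall_le _),
    norm_wrapDir (norm_cubeToBall_le _), Real.norm_of_nonneg (by linarith [p.1.2.2]),
    Real.norm_of_nonneg (by linarith [p'.1.2.2])] at hnorm
  ext
  linarith

lemma eq_or_mem_boundary_of_coneMap_eq {t : unitInterval} (ht : t ≠ 1)
    {y y' : Fin n → unitInterval} (h : coneMap (t, y) = coneMap (t, y')) :
    y = y' ∨ y ∈ Cube.boundary (Fin n) ∧ y' ∈ Cube.boundary (Fin n) := by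
  have ht' : 1 - (t : ℝ) ≠ 0 := sub_ne_zero.2 fun h1 => ht (Subtype.ext h1.symm)
  rw [← norm_cubeToBall_eq_one_iff, ← norm_cubeToBall_eq_one_iff, ← cubeToBall_injective.eq_iff]
  exact eq_or_norm_eq_one_of_wrapDir_eq (norm_cubeToBall_le y) (norm_cubeToBall_le y')
    (smul_right_injective _ ht' h)

end Cone

lemma continuousOn_range_of_continuous_comp {K X Y : Type*} [TopologicalSpace K] [CompactSpace K]
    [TopologicalSpace X] [T2Space X] [TopologicalSpace Y] {q : K → X} (hq : Continuous q)
    {G : X → Y} (hG : Continuous (G ∘ q)) : ContinuousOn G (range q) := by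
  have hquot : IsQuotientMap (rangeFactorization q) :=
    hq.rangeFactorization.isClosedMap.isQuotientMap hq.rangeFactorization
      rangeFactorization_surjective
  exact continuousOn_iff_continuous_domRestrict.2 (hquot.continuous_iff.2 hG)

namespace SphereExtension

variable {Y : Type*} [TopologicalSpace Y]

lemma zero [Nonempty Y] : SphereExtension 0 Y := fun f _ =>
  ⟨fun _ => Classical.arbitrary Y, continuousOn_const, fun z hz => by
    rw [mem_sphere_zero_iff_norm, Subsingleton.elim z 0, norm_zero] at hz
    exact absurd hz zero_ne_one⟩

lemma one [PathConnectedSpace Y] : SphereExtension 1 Y := fun f _ => by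
  let γ : Path (f fun _ => -1) (f fun _ => 1) := PathConnectedSpace.somePath _ _
  refine ⟨fun z => γ.extend ((z 0 + 1) / 2),
    (γ.continuous_extend.comp (by fun_prop)).continuousOn, fun z hz => ?_⟩
  obtain ⟨i, hi⟩ := exists_abs_apply_eq_one_of_norm_eq_one (mem_sphere_zero_iff_norm.1 hz)
  have hz' : z = fun _ => z i := funext fun k => by rw [Subsingleton.elim k i]
  rw [hz']
  rcases (abs_eq zero_le_one).1 hi with h | h <;> norm_num [h]

-- A null homotopy of the loop `f ∘ wrapDir ∘ cubeToBall` descends along `coneMap` to an extension.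
lemma succ {n : ℕ} (hn : 0 < n) (hπ : ∀ x : Y, Subsingleton (HomotopyGroup (Fin n) Y x)) :
    SphereExtension (n + 1) Y := fun f hf => by
  let loop : GenLoop (Fin n) Y (f (Fin.cons (-1) 0)) :=
    ⟨⟨fun y => f (wrapDir (cubeToBall y)), hf.comp_continuous continuous_wrapDir_cubeToBall fun y =>
      mem_sphere_zero_iff_norm.2 (norm_wrapDir (norm_cubeToBall_le y))⟩, fun y hy =>
      congrArg f (wrapDir_eq_of_norm_eq_one ((norm_cubeToBall_eq_one_iff y).2 hy))⟩
  obtain ⟨H⟩ : GenLoop.Homotopic loop GenLoop.const :=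
    Quotient.exact (s := GenLoop.Homotopic.setoid (Fin n) _) ((hπ _).elim _ _)
  have hfactor : FactorsThrough H coneMap := by
    rintro ⟨t, y⟩ ⟨t', y'⟩ h
    obtain rfl : t = t' := fst_eq_of_coneMap_eq h
    rcases eq_or_ne t 1 with rfl | ht
    · rw [H.apply_one, H.apply_one]
      rfl
    · rcases eq_or_mem_boundary_of_coneMap_eq ht h with rfl | ⟨hy, hy'⟩
      · rfl
      · rw [H.eq_fst t hy, H.eq_fst t hy']
        exact (loop.2 y hy).trans (loop.2 y' hy').symm
  refine ⟨extend coneMap H f, ?_, fun z hz => ?_⟩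
  · refine (continuousOn_range_of_continuous_comp continuous_coneMap ?_).mono
      (closedBall_subset_range_coneMap hn)
    rw [hfactor.extend_comp]
    exact H.continuous
  · obtain ⟨y, rfl⟩ := exists_wrapDir_cubeToBall_eq hn (mem_sphere_zero_iff_norm.1 hz)
    have h0 := hfactor.extend_apply f (0, y)
    rw [H.apply_zero, coneMap, Set.Icc.coe_zero, sub_zero, one_smul] at h0
    exact h0

lemma of_subsingleton_homotopyGroup [Nonempty Y] {j d : ℕ}
    (hπ : ∀ i ≤ j, ∀ x : Y, Subsingleton (HomotopyGroup (Fin i) Y x)) (hd : d ≤ j + 1) :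
    SphereExtension d Y :=
  match d with
  | 0 => zero
  | 1 =>
    have : Subsingleton (ZerothHomotopy Y) :=
      have := hπ 0 (Nat.zero_le j) (Classical.arbitrary Y)
      (HomotopyGroup.pi0EquivZerothHomotopy (x := Classical.arbitrary Y)).symm.subsingleton
    have : PathConnectedSpace Y := pathConnectedSpace_iff_zerothHomotopy.2 ⟨inferInstance, this⟩
    one
  | n + 2 => succ n.succ_pos (hπ (n + 1) (by omega))

end SphereExtension

section Grid

variable {ι : Type*}

/-- The closed cell of the integer grid of `ℝ^ι` with base vertex `c`, extended by one unit in
the directions belonging to `D`. -/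
def gridCell (c : ι → ℤ) (D : Finset ι) : Set (ι → ℝ) :=
  {x | ∀ i, (i ∈ D → x i ∈ Icc (c i : ℝ) (c i + 1)) ∧ (i ∉ D → x i = c i)}

lemma isClosed_gridCell (c : ι → ℤ) (D : Finset ι) : IsClosed (gridCell c D) := by
  simp only [gridCell, ofPred_forall, ofPred_and]
  exact isClosed_iInter fun i => (isClosed_iInter fun _ =>
    isClosed_Icc.preimage (continuous_apply i)).inter
      (isClosed_iInter fun _ => isClosed_eq (continuous_apply i) continuous_const)

lemma mem_Icc_of_mem_gridCell {c : ι → ℤ} {D : Finset ι} {x : ι → ℝ} (hx : x ∈ gridCell c D)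
    (i : ι) : x i ∈ Icc (c i : ℝ) (c i + 1) := by
  by_cases hi : i ∈ D
  · exact (hx i).1 hi
  · rw [(hx i).2 hi]
    exact ⟨le_rfl, by linarith⟩

lemma locallyFinite_gridCell [Finite ι] (P : (ι → ℤ) × Finset ι → Prop) :
    LocallyFinite fun σ : {p // P p} => gridCell σ.1.1 σ.1.2 := fun x => by
  have := Fintype.ofFinite ι
  refine ⟨ball x 1, ball_mem_nhds x one_pos, Finite.subset (Finite.preimage
    Subtype.val_injective.injOn (((Set.Finite.pi' fun i =>
      Set.finite_Icc (⌊x i⌋ - 3) (⌊x i⌋ + 3)).prod (Set.finite_univ (α := Finset ι))))) ?_⟩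
  rintro ⟨⟨c, D⟩, hP⟩ ⟨y, hy, hyx⟩
  refine ⟨fun i => ?_, mem_univ _⟩
  have hdist := (dist_pi_lt_iff one_pos).1 (mem_ball.1 hyx) i
  rw [Real.dist_eq, abs_lt] at hdist
  obtain ⟨hc, hc'⟩ : (c i : ℝ) ≤ y i ∧ y i ≤ c i + 1 := mem_Icc_of_mem_gridCell hy i
  have hfloor := Int.floor_le (x i)
  have hfloor' := Int.lt_floor_add_one (x i)
  change ⌊x i⌋ - 3 ≤ c i ∧ c i ≤ ⌊x i⌋ + 3
  constructor <;> rw [← Int.cast_le (R := ℝ)] <;> push_cast <;> linarith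

section CellChart

variable {d : ℕ} {c : ι → ℤ} {D : Finset ι}

open Classical in
/-- The affine chart of the cell `gridCell c D` on the unit ball of the sup norm. -/
def cellParam (c : ι → ℤ) (e : D ≃ Fin d) (v : Fin d → ℝ) : ι → ℝ := fun i =>
  if h : i ∈ D then c i + (v (e ⟨i, h⟩) + 1) / 2 else c i

/-- The inverse of `cellParam`. -/
def cellCoord (c : ι → ℤ) (e : D ≃ Fin d) (x : ι → ℝ) : Fin d → ℝ := fun k =>
  2 * (x (e.symm k) - c (e.symm k)) - 1

variable {e : D ≃ Fin d}

lemma cellParam_apply_of_mem (v : Fin d → ℝ) {i : ι} (h : i ∈ D) :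
    cellParam c e v i = c i + (v (e ⟨i, h⟩) + 1) / 2 := dif_pos h

lemma cellParam_apply_of_notMem (v : Fin d → ℝ) {i : ι} (h : i ∉ D) :
    cellParam c e v i = c i := dif_neg h

lemma continuous_cellParam : Continuous (cellParam c e) := by
  refine continuous_pi fun i => ?_
  by_cases h : i ∈ D
  · simp only [cellParam_apply_of_mem _ h]
    fun_prop
  · simp only [cellParam_apply_of_notMem _ h]
    fun_prop

lemma continuous_cellCoord : Continuous (cellCoord c e) := by
  unfold cellCoord
  fun_prop

lemma cellParam_mem_gridCell {v : Fin d → ℝ} (hv : ‖v‖ ≤ 1) : cellParam c e v ∈ gridCell c D := by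
  refine fun i => ⟨fun h => ?_, cellParam_apply_of_notMem v⟩
  have habs := abs_le.1 ((norm_le_pi_norm v (e ⟨i, h⟩)).trans hv)
  rw [cellParam_apply_of_mem v h]
  constructor <;> linarith [habs.1, habs.2]

lemma cellParam_cellCoord {x : ι → ℝ} (hx : x ∈ gridCell c D) :
    cellParam c e (cellCoord c e x) = x := funext fun i => by
  by_cases h : i ∈ D
  · rw [cellParam_apply_of_mem _ h, cellCoord, Equiv.symm_apply_apply]
    ring
  · rw [cellParam_apply_of_notMem _ h, (hx i).2 h]

lemma norm_cellCoord_le {x : ι → ℝ} (hx : x ∈ gridCell c D) : ‖cellCoord c e x‖ ≤ 1 :=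
  (pi_norm_le_iff_of_nonneg zero_le_one).2 fun k => by
    obtain ⟨h1, h2⟩ := (hx (e.symm k)).1 (e.symm k).2
    rw [cellCoord, Real.norm_eq_abs, abs_le]
    constructor <;> linarith

end CellChart

variable [Fintype ι]

/-- The indices of the coordinates of `x` that are not integers. -/
def nonint (x : ι → ℝ) : Finset ι := {i | (⌊x i⌋ : ℝ) ≠ x i}

/-- The points with fewer than `d` non-integer coordinates, that is, the `(d - 1)`-skeleton of the
integer grid (empty for `d = 0`). -/
def skel (ι : Type*) [Fintype ι] (d : ℕ) : Set (ι → ℝ) := {x | (nonint x).card < d}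

/-- The smallest closed grid cell containing `x`. -/
def cellOf (x : ι → ℝ) : Set (ι → ℝ) := gridCell (fun i => ⌊x i⌋) (nonint x)

lemma notMem_nonint {x : ι → ℝ} {i : ι} : i ∉ nonint x ↔ (⌊x i⌋ : ℝ) = x i := by
  simp [nonint]

lemma notMem_nonint_of_eq_intCast {x : ι → ℝ} {i : ι} {z : ℤ} (h : x i = z) : i ∉ nonint x := by
  rw [notMem_nonint, h, Int.floor_intCast]

lemma mem_cellOf (x : ι → ℝ) : x ∈ cellOf x := fun _ =>
  ⟨fun _ => ⟨Int.floor_le _, (Int.lt_floor_add_one _).le⟩, fun h => (notMem_nonint.1 h).symm⟩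

lemma dist_le_one_of_mem_cellOf {x y : ι → ℝ} (hy : y ∈ cellOf x) : dist y x ≤ 1 := by
  refine (dist_pi_le_iff zero_le_one).2 fun i => ?_
  have hxi := mem_Icc_of_mem_gridCell (mem_cellOf x) i
  have hyi := mem_Icc_of_mem_gridCell hy i
  exact (Real.dist_le_of_mem_Icc hyi hxi).trans_eq (add_sub_cancel_left _ _)

section Cell

variable {c : ι → ℤ} {D : Finset ι} {x : ι → ℝ}

lemma nonint_subset (hx : x ∈ gridCell c D) : nonint x ⊆ D := fun i hi => by
  by_contra h
  exact notMem_nonint_of_eq_intCast ((hx i).2 h) hi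

lemma floor_eq_of_mem_nonint (hx : x ∈ gridCell c D) {i : ι} (hi : i ∈ nonint x) :
    ⌊x i⌋ = c i := by
  obtain ⟨h1, h2⟩ := (hx i).1 (nonint_subset hx hi)
  refine Int.floor_eq_iff.2 ⟨h1, h2.lt_of_ne fun h => ?_⟩
  exact notMem_nonint_of_eq_intCast (z := c i + 1) (by rw [h]; push_cast; rfl) hi

lemma cellOf_subset (hx : x ∈ gridCell c D) : cellOf x ⊆ gridCell c D := fun y hy i => by
  by_cases hi : i ∈ nonint x
  · have hyi := (hy i).1 hi
    simp only [floor_eq_of_mem_nonint hx hi] at hyi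
    exact ⟨fun _ => hyi, fun h => absurd (nonint_subset hx hi) h⟩
  · rw [(hy i).2 hi, notMem_nonint.1 hi]
    exact hx i

lemma floor_eq_of_nonint_eq (hx : x ∈ gridCell c D) (hD : nonint x = D) :
    (fun i => ⌊x i⌋) = c := funext fun i => by
  by_cases hi : i ∈ nonint x
  · exact floor_eq_of_mem_nonint hx hi
  · rw [(hx i).2 (hD ▸ hi), Int.floor_intCast]

lemma exists_notMem_nonint_of_mem_skel (hx : x ∈ skel ι D.card) : ∃ i ∈ D, i ∉ nonint x := by
  by_contra! h
  exact (Finset.card_le_card h).not_gt hx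

lemma gridCell_subset_skel {d : ℕ} (hD : D.card < d) : gridCell c D ⊆ skel ι d := fun _ hx =>
  (Finset.card_le_card (nonint_subset hx)).trans_lt hD

end Cell

lemma skel_eq_iUnion_gridCell (d : ℕ) :
    skel ι d = ⋃ σ : {p : (ι → ℤ) × Finset ι // p.2.card < d}, gridCell σ.1.1 σ.1.2 :=
  Subset.antisymm (fun x hx => mem_iUnion.2 ⟨⟨(_, nonint x), hx⟩, mem_cellOf x⟩)
    (iUnion_subset fun σ => gridCell_subset_skel σ.2)

lemma isClosed_skel (d : ℕ) : IsClosed (skel ι d) := by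
  rw [skel_eq_iUnion_gridCell]
  exact (locallyFinite_gridCell _).isClosed_iUnion fun _ => isClosed_gridCell _ _

section CellChart

variable {d : ℕ} {c : ι → ℤ} {D : Finset ι} {e : D ≃ Fin d}

lemma cellParam_mem_skel {v : Fin d → ℝ} (hv : ‖v‖ = 1) : cellParam c e v ∈ skel ι d := by
  obtain ⟨k, hk⟩ := exists_abs_apply_eq_one_of_norm_eq_one hv
  have hvk : cellParam c e v (e.symm k) = c (e.symm k) + (v k + 1) / 2 := by
    rw [cellParam_apply_of_mem v (e.symm k).2, Subtype.coe_eta, Equiv.apply_symm_apply]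
  have hint : ((e.symm k : D) : ι) ∉ nonint (cellParam c e v) := by
    rcases (abs_eq zero_le_one).1 hk with h | h
    · exact notMem_nonint_of_eq_intCast (z := c (e.symm k) + 1) (by rw [hvk, h]; push_cast; ring)
    · exact notMem_nonint_of_eq_intCast (z := c (e.symm k)) (by rw [hvk, h]; ring)
  have hssub : nonint (cellParam c e v) ⊂ D :=
    (Finset.ssubset_iff_of_subset (nonint_subset (cellParam_mem_gridCell hv.le))).2
      ⟨_, (e.symm k).2, hint⟩
  have hD : D.card = d := by simpa using Fintype.card_congr e
  exact (Finset.card_lt_card hssub).trans_eq hD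

lemma norm_cellCoord_eq_one {x : ι → ℝ} (hx : x ∈ gridCell c D) (hxs : x ∈ skel ι d) :
    ‖cellCoord c e x‖ = 1 := by
  have hD : D.card = d := by simpa using Fintype.card_congr e
  obtain ⟨i, hiD, hi⟩ := exists_notMem_nonint_of_mem_skel (D := D) (by rwa [hD])
  refine le_antisymm (norm_cellCoord_le hx) (le_trans (le_of_eq ?_)
    (norm_le_pi_norm (cellCoord c e x) (e ⟨i, hiD⟩)))
  have hxi := (hx i).1 hiD
  rw [cellCoord, Equiv.symm_apply_apply, ← notMem_nonint.1 hi]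
  rw [← notMem_nonint.1 hi] at hxi
  have h1 : c i ≤ ⌊x i⌋ := by exact_mod_cast hxi.1
  have h2 : ⌊x i⌋ ≤ c i + 1 := by exact_mod_cast hxi.2
  rcases (show ⌊x i⌋ = c i ∨ ⌊x i⌋ = c i + 1 by omega) with h | h <;> norm_num [h]

end CellChart

section Extension

variable {Y : Type*} [TopologicalSpace Y]

lemma SphereExtension.exists_extend_gridCell {d : ℕ} (hS : SphereExtension d Y)
    {g : (ι → ℝ) → Y} (hg : ContinuousOn g (skel ι d)) (c : ι → ℤ) {D : Finset ι}
    (hD : D.card = d) :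
    ∃ G : (ι → ℝ) → Y, ContinuousOn G (gridCell c D) ∧ EqOn G g (gridCell c D ∩ skel ι d) := by
  let e : D ≃ Fin d := D.equivFinOfCardEq hD
  obtain ⟨G, hG, hGg⟩ := hS (g ∘ cellParam c e) (hg.comp continuous_cellParam.continuousOn
    fun v hv => cellParam_mem_skel (mem_sphere_zero_iff_norm.1 hv))
  refine ⟨G ∘ cellCoord c e, hG.comp continuous_cellCoord.continuousOn fun x hx =>
    mem_closedBall_zero_iff.2 (norm_cellCoord_le hx), fun x hx => ?_⟩
  rw [comp_apply, hGg (mem_sphere_zero_iff_norm.2 (norm_cellCoord_eq_one hx.1 hx.2)), comp_apply,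
    cellParam_cellCoord hx.1]

lemma exists_glue_skel_gridCell {d : ℕ} {g : (ι → ℝ) → Y} (hg : ContinuousOn g (skel ι d))
    {G : (ι → ℤ) → Finset ι → (ι → ℝ) → Y}
    (hG : ∀ c D, D.card = d → ContinuousOn (G c D) (gridCell c D))
    (hGg : ∀ c D, D.card = d → EqOn (G c D) g (gridCell c D ∩ skel ι d)) :
    ∃ g' : (ι → ℝ) → Y, ContinuousOn g' (skel ι (d + 1)) ∧ EqOn g' g (skel ι d) ∧
      ∀ c D, D.card = d → EqOn g' (G c D) (gridCell c D) := by
  classical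
  let g' : (ι → ℝ) → Y := fun x =>
    if x ∈ skel ι d then g x else G (fun i => ⌊x i⌋) (nonint x) x
  have hg'g : EqOn g' g (skel ι d) := fun x hx => if_pos hx
  have hg'G : ∀ c D, D.card = d → EqOn g' (G c D) (gridCell c D) := fun c D hD x hx => by
    by_cases hxs : x ∈ skel ι d
    · exact (hg'g hxs).trans (hGg c D hD ⟨hx, hxs⟩).symm
    · have hxD : nonint x = D :=
        Finset.eq_of_subset_of_card_le (nonint_subset hx) (hD.trans_le (not_lt.1 hxs))
      exact (if_neg hxs).trans (by rw [hxD, floor_eq_of_nonint_eq hx hxD])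
  refine ⟨g', ?_, hg'g, hg'G⟩
  rw [skel_eq_iUnion_gridCell]
  refine (locallyFinite_gridCell _).continuousOn_iUnion (fun σ => isClosed_gridCell _ _) ?_
  rintro ⟨⟨c, D⟩, hD⟩
  rcases Nat.lt_succ_iff_lt_or_eq.1 hD with h | h
  · exact (hg.mono (gridCell_subset_skel h)).congr fun x hx => hg'g (gridCell_subset_skel h hx)
  · exact (hG c D h).congr (hg'G c D h)

lemma exists_continuousOn_skel_eq_of_cellOf_subset {k : ℕ} (hS : ∀ d < k, SphereExtension d Y)
    {O : Set (ι → ℝ)} {ρ : (ι → ℝ) → Y} (hρ : ContinuousOn ρ O) :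
    ∃ g : (ι → ℝ) → Y, ContinuousOn g (skel ι k) ∧ ∀ x ∈ skel ι k, cellOf x ⊆ O → g x = ρ x := by
  induction k with
  | zero =>
    have hempty : skel ι 0 = ∅ := by ext x; simp [skel]
    exact ⟨ρ, hempty ▸ continuousOn_empty ρ, fun _ _ _ => rfl⟩
  | succ d ih =>
    obtain ⟨g, hg, hgρ⟩ := ih fun d' hd' => hS d' (by omega)
    have hcell : ∀ c (D : Finset ι), ∃ G : (ι → ℝ) → Y, D.card = d →
        ContinuousOn G (gridCell c D) ∧ EqOn G g (gridCell c D ∩ skel ι d) ∧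
        (gridCell c D ⊆ O → EqOn G ρ (gridCell c D)) := fun c D => by
      by_cases hO : gridCell c D ⊆ O
      · exact ⟨ρ, fun _ => ⟨hρ.mono hO, fun x hx =>
          (hgρ x hx.2 ((cellOf_subset hx.1).trans hO)).symm, fun _ => eqOn_refl _ _⟩⟩
      · by_cases hD : D.card = d
        · obtain ⟨G, hG, hGg⟩ := (hS d (by omega)).exists_extend_gridCell hg c hD
          exact ⟨G, fun _ => ⟨hG, hGg, fun h => absurd h hO⟩⟩
        · exact ⟨ρ, fun h => absurd h hD⟩
    choose G hG using hcell
    obtain ⟨g', hg', hg'g, hg'G⟩ := exists_glue_skel_gridCell hg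
      (fun c D hD => (hG c D hD).1) fun c D hD => (hG c D hD).2.1
    refine ⟨g', hg', fun x hx hxO => ?_⟩
    rcases Nat.lt_succ_iff_lt_or_eq.1 hx with h | h
    · exact (hg'g h).trans (hgρ x h hxO)
    · exact (hg'G _ _ h (mem_cellOf x)).trans ((hG _ _ h).2.2 hxO (mem_cellOf x))

end Extension

end Grid

section Saw

/-- The sawtooth function, equal to `1` at the integers and to `0` at the half-integers. -/
def saw (x : ℝ) : ℝ := 1 - 2 * |x - round x|

lemma saw_eq_abs_fract (x : ℝ) : saw x = |2 * Int.fract x - 1| := by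
  rw [saw, abs_sub_round_eq_min]
  rcases le_total (Int.fract x) (1 - Int.fract x) with h | h
  · rw [min_eq_left h, abs_of_nonpos (by linarith)]
    ring
  · rw [min_eq_right h, abs_of_nonneg (by linarith)]
    ring

lemma saw_nonneg (x : ℝ) : 0 ≤ saw x := saw_eq_abs_fract x ▸ abs_nonneg _

lemma saw_le_one (x : ℝ) : saw x ≤ 1 := sub_le_self _ (by positivity)

lemma abs_floor_add_half_sub (x : ℝ) : |⌊x⌋ + 1 / 2 - x| = saw x / 2 := by
  have hfract : (⌊x⌋ + 1 / 2 - x : ℝ) = -(2 * Int.fract x - 1) / 2 := by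
    linarith [Int.floor_add_fract x]
  rw [hfract, abs_div, abs_neg, abs_two, saw_eq_abs_fract]

lemma saw_floor_add_half (x : ℝ) : saw (⌊x⌋ + 1 / 2) = 0 := by
  rw [saw_eq_abs_fract, Int.fract_intCast_add, Int.fract_eq_self.2 (by norm_num)]
  norm_num

lemma eq_floor_add_half_of_saw_eq_zero {x : ℝ} (h : saw x = 0) : x = ⌊x⌋ + 1 / 2 := by
  have habs := abs_floor_add_half_sub x
  rw [h, zero_div, abs_eq_zero] at habs
  linarith

lemma saw_natCast (n : ℕ) : saw n = 1 := by simp [saw]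

lemma lipschitzWith_saw : LipschitzWith 2 saw := by
  have habs : ∀ x y : ℝ, |x - round x| ≤ |x - y| + |y - round y| := fun x y =>
    (round_le x (round y)).trans (abs_sub_le _ _ _)
  refine LipschitzWith.of_le_add_mul 2 fun x y => ?_
  have hyx := habs y x
  rw [abs_sub_comm y x] at hyx
  rw [saw, saw, Real.dist_eq, NNReal.coe_ofNat]
  linarith

lemma floor_add_half_mem_Icc {n : ℕ} {x : ℝ} (hx : x ∈ Icc 0 (n : ℝ)) (h : saw x < 1) :
    (⌊x⌋ + 1 / 2 : ℝ) ∈ Icc 0 (n : ℝ) := by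
  have hxn : x < n := hx.2.lt_of_ne fun hxn => by
    rw [hxn, saw_natCast] at h
    exact h.false
  have h0 : (0 : ℝ) ≤ ⌊x⌋ := by exact_mod_cast Int.floor_nonneg.2 hx.1
  have h1 : (⌊x⌋ + 1 : ℝ) ≤ n := by exact_mod_cast Int.floor_lt.2 (by exact_mod_cast hxn)
  constructor <;> linarith

end Saw

section Squeeze

/-- Truncation of a real number to the interval `[-1/2, 1/2]`. -/
def clip (z : ℝ) : ℝ := max (-1 / 2) (min (1 / 2) z)

lemma abs_clip_sub_clip_le (z w : ℝ) : |clip z - clip w| ≤ |z - w| := by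
  have hmax := abs_max_sub_max_le_max (-1 / 2) (min (1 / 2) z) (-1 / 2) (min (1 / 2) w)
  have hmin := abs_min_sub_min_le_max (1 / 2) z (1 / 2) w
  simp only [sub_self, abs_zero, abs_nonneg, max_eq_right] at hmax hmin
  exact hmax.trans hmin

lemma clip_of_le {z : ℝ} (h : z ≤ -1 / 2) : clip z = -1 / 2 := by
  rw [clip, min_eq_right (by linarith), max_eq_left h]

lemma clip_of_ge {z : ℝ} (h : 1 / 2 ≤ z) : clip z = 1 / 2 := by
  rw [clip, min_eq_left h, max_eq_right (by norm_num)]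

lemma clip_of_mem {z : ℝ} (h : z ∈ Icc (-1 / 2) (1 / 2)) : clip z = z := by
  rw [clip, min_eq_right h.2, max_eq_right h.1]

lemma clip_mem (z : ℝ) : clip z ∈ Icc (-1 / 2) (1 / 2) :=
  ⟨le_max_left _ _, max_le (by norm_num) (min_le_left _ _)⟩

lemma clip_div_of_ge {z τ : ℝ} (hτ : 0 < τ) (h : τ / 2 ≤ z) : clip (z / τ) = 1 / 2 :=
  clip_of_ge (by rw [le_div_iff₀ hτ]; linarith)

lemma clip_div_of_le {z τ : ℝ} (hτ : 0 < τ) (h : z ≤ -τ / 2) : clip (z / τ) = -1 / 2 :=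
  clip_of_le (by rw [div_le_iff₀ hτ]; linarith)

lemma abs_clip_div_sub_clip_div_le {b τ τ' : ℝ} (hb : 0 < b) (hτ : b ≤ τ) (hτ' : b ≤ τ') (z : ℝ) :
    |clip (z / τ) - clip (z / τ')| ≤ |τ - τ'| / b := by
  wlog h : τ ≤ τ' generalizing τ τ'
  · rw [abs_sub_comm, abs_sub_comm τ τ']
    exact this hτ' hτ (le_of_not_ge h)
  have hτ0 : 0 < τ := hb.trans_le hτ
  have hτ0' : 0 < τ' := hb.trans_le hτ'
  have hnonneg : 0 ≤ |τ - τ'| / b := by positivity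
  rcases le_total (τ' / 2) z with hz | hz
  · rw [clip_div_of_ge hτ0 (by linarith), clip_div_of_ge hτ0' hz]
    simpa only [sub_self, abs_zero] using hnonneg
  rcases le_total z (-τ' / 2) with hz' | hz'
  · rw [clip_div_of_le hτ0 (by linarith), clip_div_of_le hτ0' hz']
    simpa only [sub_self, abs_zero] using hnonneg
  have hzτ : |z| / τ' ≤ 1 := (div_le_one hτ0').2 (abs_le.2 ⟨by linarith, by linarith⟩)
  calc |clip (z / τ) - clip (z / τ')| ≤ |z / τ - z / τ'| := abs_clip_sub_clip_le _ _
    _ = |z / τ' * ((τ' - τ) / τ)| := by congr 1; field_simp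
    _ = |z| / τ' * (|τ - τ'| / τ) := by
      rw [abs_mul, abs_div, abs_div, abs_of_pos hτ0', abs_of_pos hτ0, abs_sub_comm]
    _ ≤ |τ - τ'| / τ := mul_le_of_le_one_left (by positivity) hzτ
    _ ≤ |τ - τ'| / b := by gcongr

/-- For `0 < τ ≤ 1`: on each unit interval, the dilation by `1 / τ` about the midpoint followed by
truncation to the interval. -/
def squeeze (τ x : ℝ) : ℝ := ⌊x⌋ + 1 / 2 + clip ((Int.fract x - 1 / 2) / τ)

lemma squeeze_mem_Icc_floor (τ x : ℝ) : squeeze τ x ∈ Icc (⌊x⌋ : ℝ) (⌊x⌋ + 1) := by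
  obtain ⟨h0, h1⟩ := clip_mem ((Int.fract x - 1 / 2) / τ)
  constructor <;> rw [squeeze] <;> linarith

lemma abs_squeeze_sub_self_le (τ x : ℝ) : |squeeze τ x - x| ≤ 1 :=
  (abs_sub_le_of_le_of_le (squeeze_mem_Icc_floor τ x).1 (squeeze_mem_Icc_floor τ x).2
    (Int.floor_le x) (Int.lt_floor_add_one x).le).trans_eq (add_sub_cancel_left _ _)

lemma squeeze_one (x : ℝ) : squeeze 1 x = x := by
  have h0 := Int.fract_nonneg x
  have h1 := Int.fract_lt_one x
  rw [squeeze, div_one, clip_of_mem ⟨by linarith, by linarith⟩]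
  linarith [Int.floor_add_fract x]

lemma squeeze_eq_of_mem_Icc {τ x : ℝ} (hτ : 0 < τ) (hτ1 : τ ≤ 1) {n : ℤ}
    (hx : x ∈ Icc (n : ℝ) (n + 1)) : squeeze τ x = n + 1 / 2 + clip ((x - n - 1 / 2) / τ) := by
  rcases hx.2.lt_or_eq with h | rfl
  · rw [squeeze, Int.fract, Int.floor_eq_iff.2 ⟨hx.1, h⟩]
  · have hfloor : ⌊(n + 1 : ℝ)⌋ = n + 1 := by exact_mod_cast Int.floor_intCast (R := ℝ) (n + 1)
    rw [squeeze, Int.fract, hfloor, clip_div_of_le hτ (by push_cast; linarith),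
      clip_div_of_ge hτ (by linarith)]
    push_cast
    ring

lemma squeeze_intCast {τ : ℝ} (hτ : 0 < τ) (hτ1 : τ ≤ 1) (n : ℤ) : squeeze τ n = n := by
  rw [squeeze_eq_of_mem_Icc hτ hτ1 ⟨le_rfl, by linarith⟩, clip_div_of_le hτ (by linarith)]
  ring

lemma squeeze_mem_Icc {τ x : ℝ} (hτ : 0 < τ) (hτ1 : τ ≤ 1) {n : ℕ} (hx : x ∈ Icc 0 (n : ℝ)) :
    squeeze τ x ∈ Icc 0 (n : ℝ) := by
  obtain ⟨h0, h1⟩ := squeeze_mem_Icc_floor τ x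
  refine ⟨le_trans (by exact_mod_cast Int.floor_nonneg.2 hx.1) h0, ?_⟩
  rcases hx.2.lt_or_eq with h | rfl
  · exact h1.trans (by exact_mod_cast Int.floor_lt.2 (by exact_mod_cast h))
  · exact (squeeze_intCast hτ hτ1 n).le

lemma abs_squeeze_sub_le_of_mem_Icc {τ x y : ℝ} (hτ : 0 < τ) (hτ1 : τ ≤ 1) {n : ℤ}
    (hx : x ∈ Icc (n : ℝ) (n + 1)) (hy : y ∈ Icc (n : ℝ) (n + 1)) :
    |squeeze τ x - squeeze τ y| ≤ |x - y| / τ := by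
  rw [squeeze_eq_of_mem_Icc hτ hτ1 hx, squeeze_eq_of_mem_Icc hτ hτ1 hy, add_sub_add_left_eq_sub]
  refine (abs_clip_sub_clip_le _ _).trans_eq ?_
  rw [← sub_div, abs_div, abs_of_pos hτ]
  congr 2
  ring

lemma abs_squeeze_sub_le {τ : ℝ} (hτ : 0 < τ) (hτ1 : τ ≤ 1) (x y : ℝ) :
    |squeeze τ x - squeeze τ y| ≤ |x - y| / τ := by
  wlog hxy : x ≤ y generalizing x y
  · rw [abs_sub_comm, abs_sub_comm x y]
    exact this y x (le_of_not_ge hxy)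
  have hx : x ∈ Icc (⌊x⌋ : ℝ) (⌊x⌋ + 1) := ⟨Int.floor_le x, (Int.lt_floor_add_one x).le⟩
  have hy : y ∈ Icc (⌊y⌋ : ℝ) (⌊y⌋ + 1) := ⟨Int.floor_le y, (Int.lt_floor_add_one y).le⟩
  rcases (Int.floor_le_floor hxy).eq_or_lt with h | h
  · exact abs_squeeze_sub_le_of_mem_Icc hτ hτ1 hx (h ▸ hy)
  -- Different unit intervals: chain through the integers `p` and `q` separating `x` from `y`.
  obtain ⟨p, hp⟩ : ∃ p : ℤ, p = ⌊x⌋ + 1 := ⟨_, rfl⟩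
  obtain ⟨q, hq⟩ : ∃ q : ℤ, q = ⌊y⌋ := ⟨_, rfl⟩
  have hxp : x ≤ p := by rw [hp]; exact_mod_cast hx.2
  have hqy : (q : ℝ) ≤ y := hq ▸ hy.1
  have hpq : (p : ℝ) ≤ q := by rw [hp, hq]; exact_mod_cast h
  have hxp' := abs_squeeze_sub_le_of_mem_Icc hτ hτ1 hx (y := p) (by
    rw [hp]
    push_cast
    exact ⟨by linarith, le_rfl⟩)
  have hqy' := abs_squeeze_sub_le_of_mem_Icc hτ hτ1 (x := q) (by
    rw [hq]
    exact ⟨le_rfl, by linarith⟩) hy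
  rw [squeeze_intCast hτ hτ1] at hxp' hqy'
  calc |squeeze τ x - squeeze τ y|
      ≤ |squeeze τ x - p| + |(p : ℝ) - q| + |q - squeeze τ y| :=
        (abs_sub_le _ (q : ℝ) _).trans (add_le_add_left (abs_sub_le _ _ _) _)
    _ ≤ |x - p| / τ + |(p : ℝ) - q| / τ + |q - y| / τ := by
        gcongr
        exact le_div_self (abs_nonneg _) hτ hτ1
    _ = |x - y| / τ := by
        rw [abs_of_nonpos (sub_nonpos.2 hxp), abs_of_nonpos (sub_nonpos.2 hpq),
          abs_of_nonpos (sub_nonpos.2 hqy), abs_of_nonpos (sub_nonpos.2 hxy)]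
        ring

lemma abs_squeeze_sub_squeeze_le {b τ τ' : ℝ} (hb : 0 < b) (hτ : b ≤ τ) (hτ' : b ≤ τ')
    (hτ1 : τ ≤ 1) (x y : ℝ) : |squeeze τ x - squeeze τ' y| ≤ (|x - y| + |τ - τ'|) / b := by
  have hparam : |squeeze τ y - squeeze τ' y| ≤ |τ - τ'| / b := by
    rw [squeeze, squeeze, add_sub_add_left_eq_sub]
    exact abs_clip_div_sub_clip_div_le hb hτ hτ' _
  calc |squeeze τ x - squeeze τ' y|
      ≤ |squeeze τ x - squeeze τ y| + |squeeze τ y - squeeze τ' y| := abs_sub_le _ _ _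
    _ ≤ |x - y| / τ + |τ - τ'| / b :=
        add_le_add (abs_squeeze_sub_le (hb.trans_le hτ) hτ1 x y) hparam
    _ ≤ |x - y| / b + |τ - τ'| / b := by gcongr
    _ = (|x - y| + |τ - τ'|) / b := (add_div _ _ _).symm

lemma exists_squeeze_eq_intCast {τ x : ℝ} (hτ : 0 < τ) (h : τ ≤ saw x) :
    ∃ n : ℤ, squeeze τ x = n := by
  rw [saw_eq_abs_fract, le_abs] at h
  rcases h with h | h
  · refine ⟨⌊x⌋ + 1, ?_⟩
    rw [squeeze, clip_div_of_ge hτ (by linarith)]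
    push_cast
    ring
  · refine ⟨⌊x⌋, ?_⟩
    rw [squeeze, clip_div_of_le hτ (by linarith)]
    ring

end Squeeze

section OrderStat

variable {N : ℕ} {α : Type*} [LinearOrder α]

/-- The `k`-th smallest of the values of `a`, counted with multiplicity and starting from `0`. -/
def orderStat (a : Fin N → α) (k : Fin N) : α := a (Tuple.sort a k)

lemma orderStat_le_iff {a : Fin N → α} {k : Fin N} {b : α} :
    orderStat a k ≤ b ↔ (k : ℕ) < Finset.card {i | a i ≤ b} := by
  rw [← Finset.card_equiv (Tuple.sort a) (s := {i | (a ∘ Tuple.sort a) i ≤ b}) (by simp),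
    Tuple.lt_card_le_iff_apply_le_of_monotone (Tuple.monotone_sort a)]
  rfl

lemma card_lt_orderStat_le (a : Fin N → α) (k : Fin N) :
    Finset.card {i | a i < orderStat a k} ≤ k := by
  rw [← Finset.card_equiv (Tuple.sort a) (s := {i | (a ∘ Tuple.sort a) i < orderStat a k})
    (by simp), ← not_lt, Tuple.lt_card_lt_iff_apply_lt_of_monotone (Tuple.monotone_sort a)]
  exact lt_irrefl _

lemma lipschitzWith_orderStat (k : Fin N) :
    LipschitzWith 1 fun a : Fin N → ℝ => orderStat a k := by
  refine LipschitzWith.of_le_add fun a b => orderStat_le_iff.2 ?_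
  refine (orderStat_le_iff.1 (le_refl (orderStat b k))).trans_le (Finset.card_le_card ?_)
  refine Finset.monotone_filter_right _ fun i _ hi => ?_
  have hdist := (le_abs_self (a i - b i)).trans (dist_le_pi_dist a b i)
  linarith

end OrderStat

section DualHeight

variable {N : ℕ} {k : Fin N} {x : Fin N → ℝ}

/-- The `k`-th smallest (starting from `0`) of the numbers `saw (x i)`. It vanishes exactly at the
points with more than `k` half-integer coordinates, which form the dual of the `k`-skeleton of the
integer grid. -/
def dualHeight (k : Fin N) (x : Fin N → ℝ) : ℝ := orderStat (fun i => saw (x i)) k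

lemma dualHeight_nonneg (k : Fin N) (x : Fin N → ℝ) : 0 ≤ dualHeight k x := saw_nonneg _

lemma dualHeight_le_one (k : Fin N) (x : Fin N → ℝ) : dualHeight k x ≤ 1 := saw_le_one _

lemma lipschitzWith_dualHeight (k : Fin N) : LipschitzWith 2 (dualHeight k) := by
  have hsaw : LipschitzWith 2 fun (x : Fin N → ℝ) i => saw (x i) :=
    LipschitzWith.of_dist_le_mul fun x y => (dist_pi_le_iff (by positivity)).2 fun i =>
      (lipschitzWith_saw.dist_le_mul _ _).trans
        (mul_le_mul_of_nonneg_left (dist_le_pi_dist x y i) zero_le_two)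
  exact one_mul (2 : NNReal) ▸ (lipschitzWith_orderStat k).comp hsaw

lemma exists_finset_saw_le_dualHeight (k : Fin N) (x : Fin N → ℝ) :
    ∃ D : Finset (Fin N), D.card = k + 1 ∧ ∀ i ∈ D, saw (x i) ≤ dualHeight k x := by
  obtain ⟨D, hD, hDk⟩ := Finset.exists_subset_card_eq
    (Nat.succ_le_of_lt (orderStat_le_iff.1 (le_refl (dualHeight k x))))
  exact ⟨D, hDk, fun i hi => (Finset.mem_filter.1 (hD hi)).2⟩

lemma dualHeight_eq_zero_of_finset {D : Finset (Fin N)} (hD : (k : ℕ) < D.card)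
    (h : ∀ i ∈ D, saw (x i) = 0) : dualHeight k x = 0 := by
  refine le_antisymm (orderStat_le_iff.2 (hD.trans_le (Finset.card_le_card fun i hi => ?_)))
    (dualHeight_nonneg k x)
  exact Finset.mem_filter.2 ⟨Finset.mem_univ i, (h i hi).le⟩

/-- The zero is found by moving `k + 1` coordinates to the midpoints of their unit intervals. -/
lemma exists_dualHeight_eq_zero {n : ℕ} (hx : x ∈ Icc 0 fun _ => (n : ℝ))
    (h : dualHeight k x < 1) :
    ∃ y ∈ Icc (0 : Fin N → ℝ) fun _ => (n : ℝ), dualHeight k y = 0 ∧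
      dist y x ≤ dualHeight k x / 2 := by
  obtain ⟨D, hDk, hD⟩ := exists_finset_saw_le_dualHeight k x
  let y : Fin N → ℝ := fun i => if i ∈ D then ⌊x i⌋ + 1 / 2 else x i
  have hyD : ∀ i ∈ D, y i = ⌊x i⌋ + 1 / 2 := fun i hi => if_pos hi
  have hyD' : ∀ i ∉ D, y i = x i := fun i hi => if_neg hi
  have hy : ∀ i, y i ∈ Icc 0 (n : ℝ) := fun i => by
    by_cases hi : i ∈ D
    · exact hyD i hi ▸ floor_add_half_mem_Icc ⟨hx.1 i, hx.2 i⟩ ((hD i hi).trans_lt h)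
    · exact hyD' i hi ▸ ⟨hx.1 i, hx.2 i⟩
  refine ⟨y, ⟨fun i => (hy i).1, fun i => (hy i).2⟩, ?_, ?_⟩
  · exact dualHeight_eq_zero_of_finset (by omega) fun i hi =>
      hyD i hi ▸ saw_floor_add_half (x i)
  · have hpos := dualHeight_nonneg k x
    refine (dist_pi_le_iff (by positivity)).2 fun i => ?_
    by_cases hi : i ∈ D
    · rw [hyD i hi, Real.dist_eq, abs_floor_add_half_sub]
      linarith [hD i hi]
    · rw [hyD' i hi, dist_self]
      positivity

lemma squeeze_mem_skel {τ : ℝ} (hτ : 0 < τ) (h : τ ≤ dualHeight k x) :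
    (fun i => squeeze τ (x i)) ∈ skel (Fin N) (k + 1) := by
  refine Nat.lt_succ_of_le ((Finset.card_le_card fun i hi => ?_).trans
    (card_lt_orderStat_le (fun i => saw (x i)) k))
  refine Finset.mem_filter.2 ⟨Finset.mem_univ i, ?_⟩
  by_contra! hcon
  obtain ⟨n, hn⟩ := exists_squeeze_eq_intCast hτ (h.trans hcon)
  exact notMem_nonint_of_eq_intCast (x := fun i => squeeze τ (x i)) hn hi

end DualHeight

section Polyhedron

variable {N d k : ℕ} {X : Set (Rn N)}

lemma isLipschitzPolyhedron_of_isometry {ι : Type*} [Finite ι] {F : ι → Rn d → Rn N}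
    (hF : ∀ i, Isometry (F i)) (hX : IsCompact X) (hXF : X ⊆ ⋃ i, range (F i)) :
    IsLipschitzPolyhedron d X := by
  obtain ⟨K, ⟨e⟩⟩ := Finite.exists_equiv_fin ι
  refine ⟨hX.isClosed, K, fun l => F (e.symm l), fun l => F (e.symm l) ⁻¹' X,
    fun l => (hF _).isClosedEmbedding.isCompact_preimage hX,
    fun l => ⟨1, (hF _).lipschitz.lipschitzOnWith⟩, ?_⟩
  simp only [image_preimage_eq_inter_range, ← inter_iUnion]
  rw [e.symm.surjective.iUnion_comp fun i => range (F i), inter_eq_left.2 hXF]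

lemma exists_isometry_range_eq {D : Finset (Fin N)} (hD : D.card = k) (v : D → ℝ) :
    ∃ F : Rn (N - k) → Rn N, Isometry F ∧ {x | ∀ i : D, x i = v i} ⊆ range F := by
  have hDc : Dᶜ.card = N - k := by rw [Finset.card_compl, Fintype.card_fin, hD]
  let e : ↥Dᶜ ≃ Fin (N - k) := Finset.equivFinOfCardEq hDc
  refine ⟨fun z => WithLp.toLp 2 fun i =>
    if h : i ∈ D then v ⟨i, h⟩ else z (e ⟨i, Finset.mem_compl.2 h⟩), ?_, fun x hx => ?_⟩
  · refine Isometry.of_dist_eq fun z w => ?_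
    rw [EuclideanSpace.dist_eq, EuclideanSpace.dist_eq, ← Finset.sum_compl_add_sum D,
      Finset.sum_eq_zero (s := D) fun i hi => by simp [hi], add_zero, ← Finset.sum_coe_sort,
      ← e.sum_comp]
    congr 1
    exact Finset.sum_congr rfl fun i _ => by simp [Finset.mem_compl.1 i.2]
  · refine ⟨WithLp.toLp 2 fun l => x (e.symm l), ?_⟩
    ext i
    by_cases h : i ∈ D
    · simpa [h] using (hx ⟨i, h⟩).symm
    · simp [h]

lemma isLipschitzPolyhedron_of_coord_mem {V : Fin N → Set ℝ} (hV : ∀ i, (V i).Finite)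
    (hX : IsCompact X)
    (h : ∀ x ∈ X, ∃ D : Finset (Fin N), D.card = k ∧ ∀ i ∈ D, x i ∈ V i) :
    IsLipschitzPolyhedron (N - k) X := by
  have hfin : ∀ i, Finite (V i) := fun i => (hV i).to_subtype
  choose F hF hFr using fun σ : Σ D : {D : Finset (Fin N) // D.card = k}, ∀ i : D.1, V i =>
    exists_isometry_range_eq σ.1.2 fun i => (σ.2 i : ℝ)
  refine isLipschitzPolyhedron_of_isometry hF hX fun x hx => ?_
  obtain ⟨D, hDk, hD⟩ := h x hx
  exact mem_iUnion.2 ⟨⟨⟨D, hDk⟩, fun i => ⟨x i, hD i i.2⟩⟩, hFr _ fun i => rfl⟩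

end Polyhedron

section CubicalGrid

variable {N : ℕ}

/-- The subdivision of `ℝ^N` into the cubes of side length `mesh` that has a vertex at `origin`. -/
structure CubicalGrid (N : ℕ) where
  origin : Fin N → ℝ
  mesh : ℝ
  mesh_pos : 0 < mesh

namespace CubicalGrid

/-- The coordinates in which the grid becomes the subdivision of `ℝ^N` into integral unit cubes.
The target carries the supremum distance. -/
def chart (G : CubicalGrid N) : Rn N ≃ₜ (Fin N → ℝ) where
  toFun x i := (x i - G.origin i) / G.mesh
  invFun y := WithLp.toLp 2 fun i => G.origin i + G.mesh * y i
  left_inv x := by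
    ext i
    simp [mul_div_cancel₀ _ G.mesh_pos.ne']
  right_inv y := by
    funext i
    simp [mul_div_cancel_left₀ _ G.mesh_pos.ne']
  continuous_toFun := by fun_prop
  continuous_invFun := by fun_prop

/-- The diameter of the cubes of the grid. -/
def width (G : CubicalGrid N) : ℝ := √N * G.mesh

/-- The union of the `n ^ N` cubes of the grid that fill the cube of side length `n * mesh` with
smallest vertex `origin`. -/
def box (G : CubicalGrid N) (n : ℕ) : Set (Rn N) := G.chart ⁻¹' Icc 0 fun _ => (n : ℝ)

variable (G : CubicalGrid N)

lemma chart_apply (x : Rn N) (i : Fin N) : G.chart x i = (x i - G.origin i) / G.mesh := rfl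

lemma chart_symm_apply (y : Fin N → ℝ) (i : Fin N) :
    G.chart.symm y i = G.origin i + G.mesh * y i := rfl

lemma width_nonneg : 0 ≤ G.width := mul_nonneg (Real.sqrt_nonneg _) G.mesh_pos.le

lemma dist_chart_le (x y : Rn N) : dist (G.chart x) (G.chart y) ≤ dist x y / G.mesh := by
  have hmesh := G.mesh_pos
  refine (dist_pi_le_iff (by positivity)).2 fun i => ?_
  rw [chart_apply, chart_apply, Real.dist_eq, ← sub_div, sub_sub_sub_cancel_right, abs_div,
    abs_of_pos hmesh, dist_eq_norm]
  gcongr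
  exact PiLp.norm_apply_le (x - y) i

lemma dist_chart_symm_le (y z : Fin N → ℝ) :
    dist (G.chart.symm y) (G.chart.symm z) ≤ G.width * dist y z := by
  have hmesh := G.mesh_pos
  rw [EuclideanSpace.dist_eq, width, mul_assoc]
  refine Real.sqrt_le_iff.2 ⟨by positivity, ?_⟩
  calc ∑ i, dist (G.chart.symm y i) (G.chart.symm z i) ^ 2
      ≤ ∑ _i : Fin N, (G.mesh * dist y z) ^ 2 := by
        gcongr with i
        rw [chart_symm_apply, chart_symm_apply, Real.dist_eq,
          add_sub_add_left_eq_sub, ← mul_sub, abs_mul, abs_of_pos hmesh]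
        exact mul_le_mul_of_nonneg_left (dist_le_pi_dist y z i) hmesh.le
    _ = (√N * (G.mesh * dist y z)) ^ 2 := by
        rw [Finset.sum_const, Finset.card_fin, nsmul_eq_mul, mul_pow √(N : ℝ),
          Real.sq_sqrt N.cast_nonneg]

lemma isCompact_box (n : ℕ) : IsCompact (G.box n) := G.chart.isCompact_preimage.2 isCompact_Icc

end CubicalGrid

lemma IsCube.exists_grid {Q : Set (Rn N)} (hQ : IsCube Q) {δ : ℝ} (hδ : 0 < δ) :
    ∃ (G : CubicalGrid N) (n : ℕ), G.width ≤ δ ∧ Q = G.box n := by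
  obtain ⟨a, ρ, hρ, rfl⟩ := hQ
  obtain ⟨n, hn⟩ := exists_nat_gt (√N * (2 * ρ) / δ)
  have hn0 : (0 : ℝ) < n := lt_of_le_of_lt (by positivity) hn
  refine ⟨⟨fun i => a i - ρ, 2 * ρ / n, by positivity⟩, n, ?_, ?_⟩
  · rw [CubicalGrid.width, ← mul_div_assoc, div_le_comm₀ hn0 hδ]
    exact hn.le
  · ext x
    rw [CubicalGrid.box, mem_preimage, mem_Icc, Pi.le_def, Pi.le_def, ← forall_and]
    refine forall_congr' fun i => ?_
    have hmesh : (n : ℝ) * (2 * ρ / n) = 2 * ρ := mul_div_cancel₀ _ hn0.ne'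
    rw [CubicalGrid.chart_apply, Pi.zero_apply, le_div_iff₀ (by positivity),
      div_le_iff₀ (by positivity), hmesh, abs_le]
    constructor <;> rintro ⟨h1, h2⟩ <;> constructor <;> linarith

lemma IsCube.interior_nonempty {Q : Set (Rn N)} (hQ : IsCube Q) : (interior Q).Nonempty := by
  obtain ⟨a, ρ, hρ, rfl⟩ := hQ
  refine ⟨a, mem_interior_iff_mem_nhds.2 (mem_of_superset (ball_mem_nhds a hρ) fun x hx i => ?_)⟩
  exact (PiLp.norm_apply_le (x - a) i).trans (mem_ball_iff_norm.1 hx).le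

end CubicalGrid

section DistCutoff

variable {E : Type*} [PseudoMetricSpace E]

/-- The cutoff function equal to `1` within distance `(k - 1) * η` of `M`, and to `0` beyond
distance `k * η`. -/
def distCutoff (M : Set E) (η k : ℝ) (x : E) : ℝ := max 0 (min 1 (k - infDist x M / η))

variable {M : Set E} {η k : ℝ} {x : E}

lemma distCutoff_nonneg : 0 ≤ distCutoff M η k x := le_max_left _ _

lemma distCutoff_le_one : distCutoff M η k x ≤ 1 := max_le zero_le_one (min_le_left _ _)

lemma distCutoff_eq_one (hη : 0 < η) (h : infDist x M ≤ (k - 1) * η) : distCutoff M η k x = 1 := by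
  have hdiv : infDist x M / η ≤ k - 1 := (div_le_iff₀ hη).2 h
  rw [distCutoff, min_eq_left (by linarith), max_eq_right zero_le_one]

lemma distCutoff_eq_zero (hη : 0 < η) (h : k * η ≤ infDist x M) : distCutoff M η k x = 0 := by
  have hdiv : k ≤ infDist x M / η := (le_div_iff₀ hη).2 h
  exact max_eq_left ((min_le_right _ _).trans (by linarith))

lemma lipschitzWith_distCutoff (hη : 0 < η) :
    LipschitzWith (Real.toNNReal η⁻¹) (distCutoff M η k) := by
  refine LipschitzWith.const_max (LipschitzWith.const_min (LipschitzWith.of_le_add_mul _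
    fun x y => ?_) 1) 0
  have hdist := div_le_div_of_nonneg_right
    (infDist_le_infDist_add_dist (s := M) (x := y) (y := x)) hη.le
  rw [add_div, dist_comm y x] at hdist
  rw [Real.coe_toNNReal _ (by positivity), inv_mul_eq_div]
  linarith

end DistCutoff

section LipschitzApproximation

variable {E F : Type*} [NormedAddCommGroup E] [NormedAddCommGroup F] [NormedSpace ℝ F] {s : Set E}

lemma exists_lipschitzOnWith_dist_lt [NormedSpace ℝ E] [FiniteDimensional ℝ E] (hs : IsCompact s)
    {f : E → F} (hf : Continuous f) {ε : ℝ} (hε : 0 < ε) :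
    ∃ (g : E → F) (C : NNReal), LipschitzOnWith C g s ∧ ∀ x, dist (g x) (f x) < ε := by
  obtain ⟨g, hg, hgf, -⟩ := hf.exists_contDiff_approx 1 continuous_const fun _ => hε
  obtain ⟨R, hR⟩ := hs.isBounded.subset_closedBall 0
  obtain ⟨C, hC⟩ := hg.contDiffOn.exists_lipschitzOnWith one_ne_zero (convex_closedBall 0 R)
    (isCompact_closedBall 0 R)
  exact ⟨g, C, hC.mono hR, hgf⟩

lemma dist_lineMap_lineMap_le_of_le {a b a' b' : F} {t D : ℝ} (ht : t ∈ Icc 0 1)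
    (ha : dist a a' ≤ D) (hb : dist b b' ≤ D) :
    dist (AffineMap.lineMap a b t) (AffineMap.lineMap a' b' t) ≤ D := by
  have hsub : AffineMap.lineMap a b t - AffineMap.lineMap a' b' t
      = AffineMap.lineMap (a - a') (b - b') t := by
    simp only [AffineMap.lineMap_apply_module]
    module
  rw [dist_eq_norm, ← mem_closedBall_zero_iff] at ha hb ⊢
  exact hsub ▸ (convex_closedBall 0 D).lineMap_mem ha hb ht

lemma exists_lipschitzOnWith_lineMap (hs : IsCompact s) {f g : E → F} {v : E → ℝ}
    {Kf Kg Kv : NNReal} (hf : LipschitzOnWith Kf f s) (hg : LipschitzOnWith Kg g s)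
    (hv : LipschitzWith Kv v) (hv01 : ∀ x, v x ∈ Icc 0 1) :
    ∃ C, LipschitzOnWith C (fun x => AffineMap.lineMap (f x) (g x) (v x)) s := by
  obtain ⟨B, hB⟩ := hs.exists_bound_of_continuousOn (hf.continuousOn.sub hg.continuousOn)
  refine ⟨max Kf Kg + Kv * B.toNNReal, LipschitzOnWith.of_dist_le_mul fun x hx y hy => ?_⟩
  calc dist (AffineMap.lineMap (f x) (g x) (v x)) (AffineMap.lineMap (f y) (g y) (v y))
      ≤ dist (AffineMap.lineMap (f x) (g x) (v x)) (AffineMap.lineMap (f y) (g y) (v x))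
        + dist (AffineMap.lineMap (f y) (g y) (v x)) (AffineMap.lineMap (f y) (g y) (v y)) :=
        dist_triangle _ _ _
    _ ≤ max Kf Kg * dist x y + Kv * dist x y * B.toNNReal := by
        refine add_le_add (dist_lineMap_lineMap_le_of_le (hv01 x) ?_ ?_) ?_
        · exact (hf.weaken (le_max_left _ _)).dist_le_mul x hx y hy
        · exact (hg.weaken (le_max_right _ _)).dist_le_mul x hx y hy
        · rw [dist_lineMap_lineMap]
          refine mul_le_mul (hv.dist_le_mul x y) ?_ dist_nonneg (by positivity)
          exact (dist_eq_norm (f y) (g y)).trans_le ((hB y hy).trans (Real.le_coe_toNNReal B))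
    _ = (max Kf Kg + Kv * B.toNNReal : NNReal) * dist x y := by
        push_cast
        ring

end LipschitzApproximation

namespace CubicalGrid

variable {N k : ℕ} (G : CubicalGrid N) {M Q : Set (Rn N)} {r : Rn N → Rn N} {η : ℝ}

lemma exists_continuous_skel_mapsTo (hS : ∀ d < k, SphereExtension d M) (hM : M.Nonempty)
    (hr : Continuous r) (hG : G.width ≤ η) (hrM : ∀ x, infDist x M ≤ 4 * η → r x ∈ M) :
    ∃ g : Rn N → Rn N, Continuous g ∧ ∀ x, G.chart x ∈ skel (Fin N) k →
      g x ∈ M ∧ (infDist x M ≤ 3 * η → g x = r x) := by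
  classical
  obtain ⟨a⟩ := hM.to_subtype
  let O : Set (Fin N → ℝ) := {y | infDist (G.chart.symm y) M ≤ 4 * η}
  let ρ : (Fin N → ℝ) → M := fun y =>
    if h : r (G.chart.symm y) ∈ M then ⟨r (G.chart.symm y), h⟩ else a
  have hρr : ∀ y ∈ O, (ρ y : Rn N) = r (G.chart.symm y) := fun y hy => by
    simp only [ρ, dif_pos (hrM _ hy)]
  have hρ : ContinuousOn ρ O := continuousOn_iff_continuous_domRestrict.2 <|
    continuous_induced_rng.2 <| (hr.comp (G.chart.symm.continuous.comp
      continuous_subtype_val)).congr fun y => (hρr y y.2).symm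
  obtain ⟨g, hg, hgρ⟩ := exists_continuousOn_skel_eq_of_cellOf_subset hS hρ
  let K : Set (Rn N) := G.chart ⁻¹' skel (Fin N) k
  have hK : IsClosed K := (isClosed_skel k).preimage G.chart.continuous
  have hgK : ContinuousOn (fun x => (g (G.chart x) : Rn N)) K :=
    continuous_subtype_val.comp_continuousOn
      (hg.comp G.chart.continuous.continuousOn (mapsTo_preimage _ _))
  obtain ⟨g', hg'⟩ := ContinuousMap.exists_restrict_eq hK
    ⟨_, continuousOn_iff_continuous_domRestrict.1 hgK⟩
  refine ⟨g', g'.continuous, fun x hx => ?_⟩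
  have hgx : g' x = g (G.chart x) := congrArg (fun f : C(K, Rn N) => f ⟨x, hx⟩) hg'
  refine ⟨hgx ▸ (g (G.chart x)).2, fun hxM => ?_⟩
  have hcell : cellOf (G.chart x) ⊆ O := fun y hy => by
    have hdist := G.dist_chart_symm_le y (G.chart x)
    have hmul := mul_le_mul_of_nonneg_left (dist_le_one_of_mem_cellOf hy) G.width_nonneg
    have hinf := infDist_le_infDist_add_dist (s := M) (x := G.chart.symm y) (y := x)
    rw [G.chart.symm_apply_apply] at hdist
    change infDist (G.chart.symm y) M ≤ 4 * η
    linarith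
  rw [hgx, hgρ _ hx hcell, hρr _ (hcell (mem_cellOf _)), G.chart.symm_apply_apply]

/-- The cutoff gluing `r` to the extension over the skeleton does no harm there: where it lies
strictly between `0` and `1`, the extension still equals `r`. -/
lemma exists_lipschitzOnWith_skel (hS : ∀ d < k, SphereExtension d M) (hM : M.Nonempty)
    (hQ : IsCompact Q) {L : NNReal} (hr : LipschitzWith L r) (hη : 0 < η) (hG : G.width ≤ η)
    (hrM : ∀ x, infDist x M ≤ 4 * η → r x ∈ M) :
    ∃ (w : Rn N → Rn N) (C : NNReal), LipschitzOnWith C w Q ∧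
      (∀ x, infDist x M ≤ 2 * η → w x = r x) ∧
      ∀ x, G.chart x ∈ skel (Fin N) k → infDist (w x) M ≤ 4 * η := by
  obtain ⟨g, hg, hgM⟩ := G.exists_continuous_skel_mapsTo hS hM hr.continuous hG hrM
  obtain ⟨g', K, hg', hgg'⟩ := exists_lipschitzOnWith_dist_lt hQ hg (ε := 4 * η) (by positivity)
  obtain ⟨C, hC⟩ := exists_lipschitzOnWith_lineMap hQ hg' hr.lipschitzOnWith
    (lipschitzWith_distCutoff (M := M) (k := 3) hη)
    fun x => ⟨distCutoff_nonneg, distCutoff_le_one⟩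
  refine ⟨_, C, hC, fun x hx => ?_, fun x hx => ?_⟩
  · rw [distCutoff_eq_one hη (by linarith), AffineMap.lineMap_apply_one]
  · obtain ⟨hgxM, hgxr⟩ := hgM x hx
    rcases le_total (infDist x M) (3 * η) with h | h
    · refine (infDist_le_dist_of_mem (hrM x (by linarith))).trans ?_
      rw [dist_lineMap_right, ← hgxr h, Real.norm_of_nonneg (sub_nonneg.2 distCutoff_le_one)]
      exact (mul_le_of_le_one_left dist_nonneg (sub_le_self _ distCutoff_nonneg)).trans
        (hgg' x).le
    · rw [distCutoff_eq_zero hη h, AffineMap.lineMap_apply_zero]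
      exact (infDist_le_dist_of_mem hgxM).trans (hgg' x).le

lemma exists_lipschitzOnWith_mapsTo (hS : ∀ d < k, SphereExtension d M)
    (hM : IsLipschitzNbhdRetract M) :
    ∃ η > 0, ∀ G : CubicalGrid N, G.width ≤ η → ∀ Q : Set (Rn N), IsCompact Q →
      ∃ (f : Rn N → Rn N) (C : NNReal), LipschitzOnWith C f Q ∧ (∀ a ∈ M, f a = a) ∧
        ∀ x, infDist x M ≤ 2 * η ∨ G.chart x ∈ skel (Fin N) k → f x ∈ M := by
  have hne := hM.nonempty
  obtain ⟨r, L, ε, hε, hr, hrid, hrM⟩ := hM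
  obtain ⟨η, hη, rfl⟩ : ∃ η > 0, ε = 4 * η := ⟨ε / 4, by positivity, by ring⟩
  refine ⟨η, hη, fun G hG Q hQ => ?_⟩
  obtain ⟨w, C, hw, hwr, hwM⟩ := G.exists_lipschitzOnWith_skel hS hne hQ hr hη hG hrM
  refine ⟨r ∘ w, L * C, hr.comp_lipschitzOnWith hw, fun a ha => ?_, fun x hx => hrM _ ?_⟩
  · have haM : infDist a M = 0 := infDist_zero_of_mem ha
    rw [comp_apply, hwr a (by rw [haM]; positivity), hrid a ha, hrid a ha]
  · refine hx.elim (fun h => ?_) (hwM x)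
    rw [hwr x h, infDist_zero_of_mem (hrM x (by linarith))]
    exact hε.le

end CubicalGrid

section Collapse

variable {N n : ℕ} {M : Set (Rn N)} {η : ℝ} {k : Fin N} {x : Rn N}

namespace CubicalGrid

variable (G : CubicalGrid N)

/-- The map `squeeze τ` in each coordinate of the chart. -/
def squeezeMap (τ : ℝ) (x : Rn N) : Rn N := G.chart.symm fun i => squeeze τ (G.chart x i)

lemma squeezeMap_one (x : Rn N) : G.squeezeMap 1 x = x := by
  simp only [squeezeMap, squeeze_one]
  exact G.chart.symm_apply_apply x

lemma dist_squeezeMap_self_le (τ : ℝ) (x : Rn N) : dist (G.squeezeMap τ x) x ≤ G.width := by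
  have hdist := G.dist_chart_symm_le (fun i => squeeze τ (G.chart x i)) (G.chart x)
  rw [G.chart.symm_apply_apply] at hdist
  refine hdist.trans (mul_le_of_le_one_right G.width_nonneg ?_)
  exact (dist_pi_le_iff zero_le_one).2 fun i => abs_squeeze_sub_self_le τ _

lemma squeezeMap_mem_box {τ : ℝ} (hτ : 0 < τ) (hτ1 : τ ≤ 1) (hx : x ∈ G.box n) :
    G.squeezeMap τ x ∈ G.box n := by
  rw [box, mem_preimage, squeezeMap, G.chart.apply_symm_apply]
  exact ⟨fun i => (squeeze_mem_Icc hτ hτ1 ⟨hx.1 i, hx.2 i⟩).1,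
    fun i => (squeeze_mem_Icc hτ hτ1 ⟨hx.1 i, hx.2 i⟩).2⟩

lemma chart_squeezeMap_mem_skel {τ : ℝ} (hτ : 0 < τ) (h : τ ≤ dualHeight k (G.chart x)) :
    G.chart (G.squeezeMap τ x) ∈ skel (Fin N) (k + 1) := by
  rw [squeezeMap, G.chart.apply_symm_apply]
  exact squeeze_mem_skel hτ h

lemma dist_squeezeMap_squeezeMap_le {b τ τ' : ℝ} (hb : 0 < b) (hτ : b ≤ τ) (hτ' : b ≤ τ')
    (hτ1 : τ ≤ 1) (x y : Rn N) :
    dist (G.squeezeMap τ x) (G.squeezeMap τ' y)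
      ≤ G.width * ((dist x y / G.mesh + |τ - τ'|) / b) := by
  have hmesh := G.mesh_pos
  refine (G.dist_chart_symm_le _ _).trans (mul_le_mul_of_nonneg_left ?_ G.width_nonneg)
  refine (dist_pi_le_iff (by positivity)).2 fun i => ?_
  refine (abs_squeeze_sub_squeeze_le hb hτ hτ' hτ1 _ _).trans ?_
  gcongr
  exact (dist_le_pi_dist _ _ i).trans (G.dist_chart_le x y)

/-- The parameter with which `collapse` squeezes at `x`. The cutoff makes it equal to `1` on `M`,
where nothing may move. -/
def dilationParam (M : Set (Rn N)) (η : ℝ) (k : Fin N) (x : Rn N) : ℝ :=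
  max (dualHeight k (G.chart x)) (distCutoff M η 1 x)

lemma dilationParam_nonneg : 0 ≤ G.dilationParam M η k x :=
  le_max_of_le_left (dualHeight_nonneg _ _)

lemma dilationParam_le_one : G.dilationParam M η k x ≤ 1 :=
  max_le (dualHeight_le_one _ _) distCutoff_le_one

lemma exists_lipschitzWith_dilationParam (M : Set (Rn N)) (hη : 0 < η) (k : Fin N) :
    ∃ K, LipschitzWith K (G.dilationParam M η k) := by
  have hchart : LipschitzWith (Real.toNNReal G.mesh⁻¹) G.chart :=
    LipschitzWith.of_dist_le_mul fun x y => by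
      rw [Real.coe_toNNReal _ (inv_nonneg.2 G.mesh_pos.le), inv_mul_eq_div]
      exact G.dist_chart_le x y
  exact ⟨_, ((lipschitzWith_dualHeight k).comp hchart).max (lipschitzWith_distCutoff hη)⟩

/-- Away from `M` this retracts the complement of the dual skeleton onto the `k`-skeleton of the
grid; it is the identity on `M`. -/
def collapse (M : Set (Rn N)) (η : ℝ) (k : Fin N) (x : Rn N) : Rn N :=
  G.squeezeMap (G.dilationParam M η k x) x

lemma collapse_eq_self (hη : 0 < η) (hx : x ∈ M) : G.collapse M η k x = x := by
  have hcut : distCutoff M η 1 x = 1 := distCutoff_eq_one hη (by simp [infDist_zero_of_mem hx])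
  rw [collapse, dilationParam, hcut, max_eq_right (dualHeight_le_one _ _), squeezeMap_one]

lemma infDist_collapse_le_or_chart_mem_skel (hη : 0 < η) (hG : G.width ≤ η)
    (hx : 0 < G.dilationParam M η k x) :
    infDist (G.collapse M η k x) M ≤ 2 * η ∨
      G.chart (G.collapse M η k x) ∈ skel (Fin N) (k + 1) := by
  refine (le_total (infDist x M) η).imp (fun h => ?_) fun h => ?_
  · have hinf := infDist_le_infDist_add_dist (s := M) (x := G.collapse M η k x) (y := x)
    have hdist : dist (G.collapse M η k x) x ≤ G.width := G.dist_squeezeMap_self_le _ x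
    linarith
  · refine G.chart_squeezeMap_mem_skel hx ?_
    rw [dilationParam, distCutoff_eq_zero hη (by rwa [one_mul]),
      max_eq_left (dualHeight_nonneg _ _)]

lemma exists_dist_comp_collapse_le {F : Type*} [PseudoMetricSpace F] {f : Rn N → F} {C : NNReal}
    (hf : LipschitzOnWith C f (G.box n)) (M : Set (Rn N)) (hη : 0 < η) (k : Fin N) :
    ∃ K > 0, ∀ b > 0, ∀ y ∈ G.box n, ∀ z ∈ G.box n,
      b ≤ G.dilationParam M η k y → b ≤ G.dilationParam M η k z →
        dist (f (G.collapse M η k y)) (f (G.collapse M η k z)) ≤ K / b * dist y z := by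
  obtain ⟨K, hK⟩ := G.exists_lipschitzWith_dilationParam M hη k
  have hwidth := G.width_nonneg
  have hmesh := G.mesh_pos
  refine ⟨C * (G.width * (G.mesh⁻¹ + K)) + 1, by positivity, fun b hb y hy z hz hby hbz => ?_⟩
  have hbox : ∀ x ∈ G.box n, b ≤ G.dilationParam M η k x → G.collapse M η k x ∈ G.box n :=
    fun x hx hbx => G.squeezeMap_mem_box (hb.trans_le hbx) G.dilationParam_le_one hx
  calc dist (f (G.collapse M η k y)) (f (G.collapse M η k z))
      ≤ C * dist (G.collapse M η k y) (G.collapse M η k z) :=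
        hf.dist_le_mul _ (hbox y hy hby) _ (hbox z hz hbz)
    _ ≤ C * (G.width * ((dist y z / G.mesh + K * dist y z) / b)) := by
        gcongr
        refine (G.dist_squeezeMap_squeezeMap_le hb hby hbz G.dilationParam_le_one y z).trans ?_
        gcongr
        exact hK.dist_le_mul y z
    _ = C * (G.width * (G.mesh⁻¹ + K)) / b * dist y z := by ring
    _ ≤ (C * (G.width * (G.mesh⁻¹ + K)) + 1) / b * dist y z := by
        gcongr
        exact le_add_of_nonneg_right zero_le_one

/-- The part of the dual skeleton of the grid on which `collapse` cannot be continuous, slightly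
enlarged towards `M` so that the distance to it is controlled by `dilationParam`. -/
def holeSet (M : Set (Rn N)) (η : ℝ) (k : Fin N) (n : ℕ) : Set (Rn N) :=
  {x ∈ G.box n | dualHeight k (G.chart x) = 0 ∧ distCutoff M η 1 x ≤ 1 / 2}

lemma holeSet_subset (hη : 0 < η) : G.holeSet M η k n ⊆ G.box n \ M := by
  refine fun x ⟨hx, _, hcut⟩ => ⟨hx, fun hxM => ?_⟩
  rw [distCutoff_eq_one hη (by simp [infDist_zero_of_mem hxM])] at hcut
  norm_num at hcut

lemma dilationParam_pos (hx : x ∈ G.box n) (hxH : x ∉ G.holeSet M η k n) :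
    0 < G.dilationParam M η k x := by
  by_contra! h
  obtain ⟨hheight, hcut⟩ := max_le_iff.1 h
  exact hxH ⟨hx, hheight.antisymm (dualHeight_nonneg _ _), hcut.trans (by norm_num)⟩

lemma isCompact_holeSet (M : Set (Rn N)) (hη : 0 < η) (k : Fin N) (n : ℕ) :
    IsCompact (G.holeSet M η k n) :=
  (G.isCompact_box n).inter_right <|
    (isClosed_eq ((lipschitzWith_dualHeight k).continuous.comp G.chart.continuous)
      continuous_const).inter
        (isClosed_le (lipschitzWith_distCutoff hη).continuous continuous_const)

lemma exists_finite_coord_mem_of_mem_holeSet (M : Set (Rn N)) (η : ℝ) (k : Fin N) (n : ℕ) :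
    ∃ V : Fin N → Set ℝ, (∀ i, (V i).Finite) ∧ ∀ x ∈ G.holeSet M η k n,
      ∃ D : Finset (Fin N), D.card = k + 1 ∧ ∀ i ∈ D, x i ∈ V i := by
  refine ⟨fun i => (fun z : ℤ => G.origin i + G.mesh * (z + 1 / 2)) '' Icc 0 (n : ℤ),
    fun i => (finite_Icc _ _).image _, fun x ⟨hxbox, hheight, _⟩ => ?_⟩
  obtain ⟨D, hDk, hD⟩ := exists_finset_saw_le_dualHeight k (G.chart x)
  refine ⟨D, hDk, fun i hi => ⟨⌊G.chart x i⌋, ⟨Int.floor_nonneg.2 (hxbox.1 i), ?_⟩, ?_⟩⟩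
  · have hfloor : (⌊G.chart x i⌋ : ℝ) ≤ n := (Int.floor_le _).trans (hxbox.2 i)
    exact_mod_cast hfloor
  · have hsaw : saw (G.chart x i) = 0 := ((hD i hi).trans_eq hheight).antisymm (saw_nonneg _)
    simp only [← eq_floor_add_half_of_saw_eq_zero hsaw, ← chart_symm_apply,
      G.chart.symm_apply_apply]

lemma isLipschitzPolyhedron_insert_holeSet (M : Set (Rn N)) (hη : 0 < η) (k : Fin N) (n : ℕ)
    (p : Rn N) : IsLipschitzPolyhedron (N - (k + 1)) (insert p (G.holeSet M η k n)) := by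
  obtain ⟨V, hV, hVmem⟩ := G.exists_finite_coord_mem_of_mem_holeSet M η k n
  refine isLipschitzPolyhedron_of_coord_mem (fun i => (hV i).insert (p i))
    ((G.isCompact_holeSet M hη k n).insert p) ?_
  rintro x (rfl | hx)
  · obtain ⟨D, -, hD⟩ := Finset.exists_subset_card_eq
      (show k + 1 ≤ (Finset.univ : Finset (Fin N)).card by rw [Finset.card_fin]; exact k.2)
    exact ⟨D, hD, fun i _ => mem_insert _ _⟩
  · obtain ⟨D, hDk, hD⟩ := hVmem x hx
    exact ⟨D, hDk, fun i hi => mem_insert_of_mem _ (hD i hi)⟩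

lemma exists_mem_holeSet_dist_le (hη : 0 < η) (hG : G.width ≤ η) (hx : x ∈ G.box n)
    (hT : G.dilationParam M η k x < 1 / 4) :
    ∃ y ∈ G.holeSet M η k n, dist y x ≤ η * G.dilationParam M η k x := by
  have hheight : dualHeight k (G.chart x) ≤ G.dilationParam M η k x := le_max_left _ _
  have hcut : distCutoff M η 1 x ≤ G.dilationParam M η k x := le_max_right _ _
  obtain ⟨y, hybox, hy, hyx⟩ := exists_dualHeight_eq_zero hx (k := k) (by linarith)
  have hdist : dist (G.chart.symm y) x ≤ η * G.dilationParam M η k x := by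
    have hsymm := G.dist_chart_symm_le y (G.chart x)
    rw [G.chart.symm_apply_apply] at hsymm
    refine hsymm.trans (mul_le_mul hG ?_ dist_nonneg hη.le)
    linarith [dualHeight_nonneg k (G.chart x)]
  refine ⟨G.chart.symm y, ⟨?_, ?_, ?_⟩, hdist⟩
  · rwa [box, mem_preimage, G.chart.apply_symm_apply]
  · rwa [G.chart.apply_symm_apply]
  · have hlip := (lipschitzWith_distCutoff (M := M) (k := 1) hη).dist_le_mul (G.chart.symm y) x
    rw [Real.coe_toNNReal _ (by positivity), Real.dist_eq] at hlip
    have hlip' : η⁻¹ * dist (G.chart.symm y) x ≤ G.dilationParam M η k x :=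
      (inv_mul_le_iff₀ hη).2 hdist
    linarith [le_abs_self (distCutoff M η 1 (G.chart.symm y) - distCutoff M η 1 x)]

lemma infDist_insert_holeSet_le (hη : 0 < η) (hG : G.width ≤ η) {p : Rn N} (hp : p ∈ G.box n)
    (hx : x ∈ G.box n) :
    infDist x (insert p (G.holeSet M η k n))
      ≤ (4 * diam (G.box n) + η) * G.dilationParam M η k x := by
  have hT := G.dilationParam_nonneg (M := M) (η := η) (k := k) (x := x)
  have hdiam : 0 ≤ diam (G.box n) := diam_nonneg
  rw [add_mul]
  rcases lt_or_ge (G.dilationParam M η k x) (1 / 4) with h | h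
  · obtain ⟨y, hy, hyx⟩ := G.exists_mem_holeSet_dist_le hη hG hx h
    refine (infDist_le_dist_of_mem (mem_insert_of_mem p hy)).trans ?_
    rw [dist_comm]
    exact hyx.trans (le_add_of_nonneg_left (by positivity))
  · refine (infDist_le_dist_of_mem (mem_insert p _)).trans ?_
    refine (dist_le_diam_of_mem (G.isCompact_box n).isBounded hx hp).trans ?_
    exact le_add_of_le_of_nonneg (by nlinarith) (by positivity)

end CubicalGrid

end Collapse

lemma exists_lipschitzOnWith_div_infDist {E F : Type*} [PseudoMetricSpace E] [PseudoMetricSpace F]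
    {S X : Set E} {T : E → ℝ} {ψ : E → F} {K D : ℝ} {x : E} (hK : 0 < K)
    (hψ : ∀ b > 0, ∀ y ∈ S, ∀ z ∈ S, b ≤ T y → b ≤ T z → dist (ψ y) (ψ z) ≤ K / b * dist y z)
    (hT : ContinuousAt T x) (hTx : 0 < T x) (hX : 0 < infDist x X) (hD : infDist x X ≤ D * T x) :
    ∃ ε > 0, LipschitzOnWith (Real.toNNReal (2 * K * D / infDist x X)) ψ (ball x ε ∩ S) := by
  obtain ⟨ε, hε, hball⟩ := Metric.mem_nhds_iff.1 (hT.eventually (lt_mem_nhds (half_lt_self hTx)))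
  refine ⟨ε, hε, LipschitzOnWith.of_dist_le_mul fun y hy z hz => ?_⟩
  have hconst : K / (T x / 2) ≤ 2 * K * D / infDist x X := by
    rw [div_le_div_iff₀ (by positivity) hX]
    linarith [mul_le_mul_of_nonneg_left hD hK.le]
  calc dist (ψ y) (ψ z) ≤ K / (T x / 2) * dist y z :=
        hψ _ (half_pos hTx) y hy.2 z hz.2 (hball hy.1).le (hball hz.1).le
    _ ≤ Real.toNNReal (2 * K * D / infDist x X) * dist y z :=
        mul_le_mul_of_nonneg_right (hconst.trans (Real.le_coe_toNNReal _)) dist_nonneg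

theorem lipschitz_retraction_onto_connected_manifold_general {N j : ℕ} (hj : j + 2 ≤ N)
    {M : Set (Rn N)} (hM : IsLipschitzNbhdRetract M)
    (hconn : ∀ i : ℕ, i ≤ j → ∀ x : ↥M, Subsingleton (HomotopyGroup (Fin i) ↥M x))
    {Q : Set (Rn N)} (hQ : IsCube Q) (hQM : (Q \ M).Nonempty) :
    ∃ (X : Set (Rn N)) (ψ : Rn N → Rn N) (c : ℝ),
      IsLipschitzPolyhedron (N - j - 2) X ∧ X ⊆ Q \ M ∧ 0 < c ∧
      (∀ a ∈ M, ψ a = a) ∧ (∀ x ∈ Q \ X, ψ x ∈ M) ∧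
      ∀ x ∈ Q \ X, ∃ ε > 0,
        LipschitzOnWith (Real.toNNReal (c / infDist x X)) ψ
          (ball x ε ∩ (Q \ X)) := by
  have hS : ∀ d < j + 2, SphereExtension d M := fun d hd =>
    have := hM.nonempty.to_subtype
    SphereExtension.of_subsingleton_homotopyGroup hconn (Nat.le_of_lt_succ hd)
  obtain ⟨η, hη, hskel⟩ := CubicalGrid.exists_lipschitzOnWith_mapsTo hS hM
  obtain ⟨G, n, hG, rfl⟩ := hQ.exists_grid hη
  obtain ⟨f, C, hf, hfid, hfM⟩ := hskel G hG _ (G.isCompact_box n)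
  obtain ⟨p, hp⟩ := hQM
  let k : Fin N := ⟨j + 1, hj⟩
  obtain ⟨K, hK, hψ⟩ := G.exists_dist_comp_collapse_le hf M hη k
  obtain ⟨L, hL⟩ := G.exists_lipschitzWith_dilationParam M hη k
  -- The point `p` makes the set nonempty: the distance to `∅` would be the junk value `0`.
  let X : Set (Rn N) := insert p (G.holeSet M η k n)
  have hX : IsLipschitzPolyhedron (N - (j + 2)) X :=
    G.isLipschitzPolyhedron_insert_holeSet M hη k n p
  have hT : ∀ x ∈ G.box n \ X, 0 < G.dilationParam M η k x := fun x hx =>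
    G.dilationParam_pos hx.1 fun h => hx.2 (mem_insert_of_mem p h)
  refine ⟨X, f ∘ G.collapse M η k, 2 * K * (4 * diam (G.box n) + η), Nat.sub_sub N j 2 ▸ hX,
    insert_subset hp (G.holeSet_subset hη), by positivity, fun a ha => ?_, fun x hx => ?_,
    fun x hx => ?_⟩
  · rw [comp_apply, G.collapse_eq_self hη ha, hfid a ha]
  · exact hfM _ (G.infDist_collapse_le_or_chart_mem_skel hη hG (hT x hx))
  · exact exists_lipschitzOnWith_div_infDist hK (fun b hb y hy z hz => hψ b hb y hy.1 z hz.1)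
      hL.continuous.continuousAt (hT x hx)
      ((hX.1.notMem_iff_infDist_pos (insert_nonempty p _)).1 hx.2)
      (G.infDist_insert_holeSet_le hη hG hp.1 hx.1)

/-- **Retraction lemma.** If `M ⊆ ℝ^N` (`N ≥ 3`) is a compact `j`-connected
submanifold, `j ∈ {1, …, N−2}`, contained in a cube `Q`, then there are a closed
`(N−j−2)`-dimensional Lipschitz polyhedron `X ⊆ Q ∖ M` and a locally Lipschitz
retraction `ψ : Q ∖ X → M` with `|Dψ(x)| ≤ c / dist(x, X)` on `Q ∖ X`, for some
`c = c(N, j, M) > 0` (the gradient bound being expressed through local Lipschitz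
constants). -/
theorem lipschitz_retraction_onto_connected_manifold
    (N m j : ℕ) (hN : 3 ≤ N) (hj1 : 1 ≤ j) (hj2 : j ≤ N - 2)
    (M : Set (Rn N)) (hMne : M.Nonempty) (hMcpt : IsCompact M)
    (hMsub : IsC3Submanifold m M)
    (hconn : ∀ i : ℕ, i ≤ j → ∀ x : ↥M, Subsingleton (HomotopyGroup (Fin i) ↥M x))
    (Q : Set (Rn N)) (hQ : IsCube Q) (hMQ : M ⊆ Q) :
    ∃ (X : Set (Rn N)) (ψ : Rn N → Rn N) (c : ℝ),
      IsLipschitzPolyhedron (N - j - 2) X ∧ X ⊆ Q \ M ∧ 0 < c ∧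
      (∀ a ∈ M, ψ a = a) ∧ (∀ x ∈ Q \ X, ψ x ∈ M) ∧
      ∀ x ∈ Q \ X, ∃ ε > 0,
        LipschitzOnWith (Real.toNNReal (c / infDist x X)) ψ
          (ball x ε ∩ (Q \ X)) := by
  exact lipschitz_retraction_onto_connected_manifold_general (by omega)
    (hMsub.isLipschitzNbhdRetract hMcpt hMne) hconn hQ
    (hMsub.diff_nonempty_of_interior_nonempty (by omega) hMcpt hQ.interior_nonempty)
end
end

section
/- Let p satisfy (P1)–(P2) and let w ∈ L^∞_loc(Ω,ℝᴺ) ∩ W^{1,p(·)}_loc(Ω,ℝᴺ), and let B_r ⋐ Ω be a ball with 0 < r ≤ 1. Then ∫_{B_r} |(w − (w)_r)/r|^{p(x)} dx ≤ c (∫_{B_r} |Dw|^{p(x)} dx + |B_r|) with c = c(n, N, γ₁, γ₂, [p]_{0,α}, α, ‖w‖_{L^∞(B_r)}). Furthermore, if for some 0 < θ < 1 the map w ∈ L^∞(A_{rθ},ℝᴺ) ∩ W^{1,p(·)}(A_{rθ},ℝᴺ) has zero trace on ∂B_r, where A_{rθ} = B_r ∖ B_{r(1−θ)}, then ∫_{A_{rθ}}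 |w/(rθ)|^{p(x)} dx ≤ c (∫_{A_{rθ}} |Dw|^{p(x)} dx + |A_{rθ}|) with c = c(n, N, γ₁, γ₂, [p]_{0,α}, α, ‖w‖_{L^∞(A_{rθ})}). -/
/-!
Both inequalities are obtained from difference quotients, without mollification. If `u` has weak
differential `D` on `U`, then for a fixed vector `h` and almost every `x` whose segment `[x, x + h]`
lies in `U`, `u (x + h) - u x = ∫₀¹ D (x + t h) h dt`: tested against a bump function, both sides
have the same integral, because translates of the test function differ by the integral of its
directional derivative. Jensen's inequality then gives
`|u (x + h) - u x| ^ q ≤ |h| ^ q ∫₀¹ |D (x + t h)| ^ q dt` for all `q ≥ 1` at once.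

The variable exponent `p` is replaced by a smaller exponent `q ≥ 1`. On the scale `ρ ≤ 1` the gap is
at most `M ρ ^ α`, and `(1 / ρ) ^ (M ρ ^ α) ≤ exp (M / α)`, so together with the bound on `w` this
costs only a constant factor. Since `q ≤ p`, `|Dw| ^ q ≤ 1 + |Dw| ^ p`, which is where the measure
of the domain on the right-hand side comes from.

* Ball: here `q` is constant, and the deviation from the mean is bounded by the double integral of
  `|w x - w y| ^ q`. Writing `y = x + h` with `|h| < 2 r`, the segments stay in the ball, and
  integrating over `x` and `t` for fixed `h` gives `|h| ^ q ∫ |Dw| ^ q`.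
* Annulus of width `ρ`: it is covered by `2 n` cones around the coordinate half-axes. On the cone
  around `e`, translation by `(n + 1) ρ e` leads out of the ball, where the zero extension of `w`
  vanishes, without ever meeting the inner ball; so `w` itself is the difference.

`IsWeakFDerivOn` only requires the norm of the differential to be locally integrable, so the
differential itself may fail to be measurable. In such a direction integrals against it take the
junk value `0`, and the zero function serves as weak derivative.
-/

open MeasureTheory Metric Set Filter Topology Function

noncomputable section

lemma integral_smul_add_sub {G F : Type*} [AddCommGroup G] [TopologicalSpace G]
    [IsTopologicalAddGroup G] [MeasurableSpace G] [BorelSpace G] {μ : Measure G}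
    [μ.IsAddRightInvariant] [NormedAddCommGroup F] [NormedSpace ℝ F] {ψ : G → ℝ}
    (hψ : Continuous ψ) (hψc : HasCompactSupport ψ) {u : G → F} (hu : Integrable u μ) (h : G) :
    ∫ x, ψ x • (u (x + h) - u x) ∂μ = ∫ x, (ψ (x - h) - ψ x) • u x ∂μ := by
  obtain ⟨C, hC⟩ := hψ.bounded_above_of_compact_support hψc
  have hψu : ∀ a b : G, Integrable (fun x => ψ (x + a) • u (x + b)) μ := fun a b =>
    (hu.comp_add_right b).bdd_smul C (Continuous.aestronglyMeasurable (by fun_prop))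
      (Eventually.of_forall fun x => hC _)
  have h1 := hψu 0 h
  have h2 := hψu 0 0
  have h3 := hψu (-h) 0
  simp only [add_zero, ← sub_eq_add_neg] at h1 h2 h3
  simp_rw [smul_sub, sub_smul]
  rw [integral_sub h1 h2, integral_sub h3 h2,
    ← integral_add_right_eq_self (fun x => ψ (x - h) • u x) h]
  simp

section Translation

variable {E F : Type*} [NormedAddCommGroup E] [NormedSpace ℝ E] [FiniteDimensional ℝ E]
  [MeasurableSpace E] [BorelSpace E] {μ : Measure E} [μ.IsAddHaarMeasure] [NormedAddCommGroup F]

lemma quasiMeasurePreserving_add_smul (h : E) (ν : Measure ℝ) [SFinite ν] :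
    Measure.QuasiMeasurePreserving (fun z : E × ℝ => z.1 + z.2 • h) (μ.prod ν) μ := by
  have hshear : MeasurePreserving (fun z : ℝ × E => (z.1, z.2 + z.1 • h)) (ν.prod μ) (ν.prod μ) :=
    (MeasurePreserving.id ν).skew_product (by fun_prop)
      (Eventually.of_forall fun t => map_add_right_eq_self μ (t • h))
  exact Measure.quasiMeasurePreserving_snd.comp
    (hshear.quasiMeasurePreserving.comp Measure.measurePreserving_swap.quasiMeasurePreserving)

lemma lintegral_lintegral_add_smul (h : E) (ν : Measure ℝ) [SFinite ν] {G : E → ENNReal}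
    (hG : AEMeasurable G μ) :
    ∫⁻ x, ∫⁻ t, G (x + t • h) ∂ν ∂μ = ν univ * ∫⁻ x, G x ∂μ := by
  rw [lintegral_lintegral_swap (f := fun x t => G (x + t • h))
    (hG.comp_quasiMeasurePreserving (quasiMeasurePreserving_add_smul h ν))]
  simp_rw [lintegral_add_right_eq_self, lintegral_const, mul_comm]

lemma integrable_comp_add_smul {f : E → F} (hf : Integrable f μ) (h : E)
    (ν : Measure ℝ) [IsFiniteMeasure ν] :
    Integrable (fun z : E × ℝ => f (z.1 + z.2 • h)) (μ.prod ν) := by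
  have hm : AEStronglyMeasurable (fun z : E × ℝ => f (z.1 + z.2 • h)) (μ.prod ν) :=
    hf.1.comp_quasiMeasurePreserving (quasiMeasurePreserving_add_smul h ν)
  refine ⟨hm, ?_⟩
  rw [hasFiniteIntegral_iff_enorm, lintegral_prod _ hm.enorm]
  rw [lintegral_lintegral_add_smul h ν hf.1.enorm]
  exact ENNReal.mul_lt_top (measure_lt_top _ _) hf.2

end Translation

section Segments

variable {E F : Type*} [NormedAddCommGroup E] [NormedSpace ℝ E] [NormedAddCommGroup F]

lemma sub_eq_integral_fderiv_sub_smul {ψ : E → ℝ} (hψ : ContDiff ℝ 1 ψ) (x h : E) :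
    ψ (x - h) - ψ x = ∫ s in Ioc (0 : ℝ) 1, -fderiv ℝ ψ (x - s • h) h := by
  have hderiv : ∀ s : ℝ, HasDerivAt (fun s => ψ (x - s • h)) (-fderiv ℝ ψ (x - s • h) h) s := by
    intro s
    have hline : HasDerivAt (fun s : ℝ => x - s • h) (-h) s := by
      simpa using ((hasDerivAt_id s).smul_const h).const_sub x
    have hcomp := (hψ.differentiable one_ne_zero (x - s • h)).hasFDerivAt.comp_hasDerivAt s hline
    rwa [map_neg] at hcomp
  have hcont : Continuous fun s : ℝ => -fderiv ℝ ψ (x - s • h) h := by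
    have := hψ.continuous_fderiv one_ne_zero
    fun_prop
  rw [← intervalIntegral.integral_of_le zero_le_one,
    intervalIntegral.integral_eq_sub_of_hasDerivAt (fun s _ => hderiv s)
      (hcont.intervalIntegrable _ _)]
  simp

lemma exists_isCompact_forall_add_smul_mem {S U K : Set E} {h : E}
    (hpath : ∀ x ∈ S, ∀ t ∈ Icc (0 : ℝ) 1, x + t • h ∈ U) (hK : IsCompact K) (hKS : K ⊆ S) :
    ∃ K', IsCompact K' ∧ K' ⊆ U ∧ ∀ x ∈ K, ∀ t ∈ Icc (0 : ℝ) 1, x + t • h ∈ K' := by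
  refine ⟨(fun z : E × ℝ => z.1 + z.2 • h) '' (K ×ˢ Icc 0 1),
    (hK.prod isCompact_Icc).image (by fun_prop), ?_, fun x hx t ht => ⟨(x, t), ⟨hx, ht⟩, rfl⟩⟩
  rintro _ ⟨⟨x, t⟩, ⟨hx, ht⟩, rfl⟩
  exact hpath x (hKS hx) t ht

variable [NormedSpace ℝ F]

lemma indicator_sub_sub_integral_eq {K K' : Set E} {u d : E → F} {h x : E}
    (hpath : ∀ x ∈ K, ∀ t ∈ Icc (0 : ℝ) 1, x + t • h ∈ K') (hx : x ∈ K) :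
    K'.indicator u (x + h) - K'.indicator u x
        - ∫ t in Ioc (0 : ℝ) 1, K'.indicator d (x + t • h)
      = u (x + h) - u x - ∫ t in Ioc (0 : ℝ) 1, d (x + t • h) := by
  have h0 := hpath x hx 0 (by simp)
  have h1 := hpath x hx 1 (by simp)
  rw [zero_smul, add_zero] at h0
  rw [one_smul] at h1
  rw [indicator_of_mem h0, indicator_of_mem h1]
  congr 1
  exact setIntegral_congr_fun measurableSet_Ioc fun t ht =>
    indicator_of_mem (hpath x hx t ⟨ht.1.le, ht.2⟩) d

lemma integral_smul_indicator_eq_setIntegral {X F : Type*} [MeasurableSpace X] {μ : Measure X}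
    [NormedAddCommGroup F] [NormedSpace ℝ F] {s t : Set X} (hst : s ⊆ t) {f : X → ℝ}
    (hf : support f ⊆ s) (g : X → F) :
    ∫ x, f x • s.indicator g x ∂μ = ∫ x in t, f x • g x ∂μ := by
  have hf0 : ∀ x ∉ s, f x = 0 := fun x hx => notMem_support.1 fun hx' => hx (hf hx')
  rw [setIntegral_eq_integral_of_forall_compl_eq_zero fun x hx => by
    rw [hf0 x fun hxs => hx (hst hxs), zero_smul]]
  refine integral_congr_ae (Eventually.of_forall fun x => ?_)
  by_cases hx : x ∈ s
  · simp only [indicator_of_mem hx]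
  · simp only [hf0 x hx, zero_smul]

variable [MeasurableSpace E] {μ : Measure E}

/-- `d` is a weak (distributional) derivative of `u` on `U` in the direction `h`: the relation
between `u` and one directional part of its weak differential. -/
structure IsWeakLineDerivOn (U : Set E) (u d : E → F) (h : E) (μ : Measure E) : Prop where
  locallyIntegrableOn : LocallyIntegrableOn u U μ
  locallyIntegrableOn_deriv : LocallyIntegrableOn d U μ
  integral_fderiv_smul : ∀ φ : E → ℝ, ContDiff ℝ (⊤ : ℕ∞) φ → HasCompactSupport φ →
    tsupport φ ⊆ U → ∫ x in U, fderiv ℝ φ x h • u x ∂μ = -∫ x in U, φ x • d x ∂μ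

namespace IsWeakLineDerivOn

variable {U K : Set E} {u d : E → F} {h : E}

lemma integral_fderiv_smul_indicator (hd : IsWeakLineDerivOn U u d h μ) (hK : IsCompact K)
    (hKU : K ⊆ U) {φ : E → ℝ} (hφ : ContDiff ℝ (⊤ : ℕ∞) φ) (hφK : tsupport φ ⊆ K) :
    ∫ x, fderiv ℝ φ x h • K.indicator u x ∂μ = -∫ x, φ x • K.indicator d x ∂μ := by
  have hsupp : support (fun x => fderiv ℝ φ x h) ⊆ K := fun x hx => by
    by_contra hxK
    exact hx (by simp [fderiv_of_notMem_tsupport ℝ fun hx' => hxK (hφK hx')])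
  rw [integral_smul_indicator_eq_setIntegral hKU hsupp,
    integral_smul_indicator_eq_setIntegral hKU ((subset_tsupport φ).trans hφK)]
  exact hd.integral_fderiv_smul φ hφ (hK.of_isClosed_subset (isClosed_tsupport φ) hφK)
    (hφK.trans hKU)

lemma integrable_indicator [BorelSpace E] (hd : IsWeakLineDerivOn U u d h μ) (hK : IsCompact K)
    (hKU : K ⊆ U) : Integrable (K.indicator u) μ ∧ Integrable (K.indicator d) μ :=
  ⟨(integrable_indicator_iff hK.measurableSet).2
      (hd.locallyIntegrableOn.integrableOn_compact_subset hKU hK),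
    (integrable_indicator_iff hK.measurableSet).2
      (hd.locallyIntegrableOn_deriv.integrableOn_compact_subset hKU hK)⟩

end IsWeakLineDerivOn

variable [BorelSpace E] [FiniteDimensional ℝ E] [μ.IsAddHaarMeasure]

lemma integrable_add_sub_sub_integral {u d : E → F} (hu : Integrable u μ) (hd : Integrable d μ)
    (h : E) : Integrable (fun x => u (x + h) - u x - ∫ t in Ioc (0 : ℝ) 1, d (x + t • h)) μ :=
  ((hu.comp_add_right h).sub hu).sub (integrable_comp_add_smul hd h _).integral_prod_left

lemma integral_smul_add_sub_eq [CompleteSpace F] {ψ : E → ℝ} (hψ : ContDiff ℝ 1 ψ)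
    (hψc : HasCompactSupport ψ) {u d : E → F} (hu : Integrable u μ) (hd : Integrable d μ) {h : E}
    (hweak : ∀ s ∈ Ioc (0 : ℝ) 1,
      ∫ x, fderiv ℝ ψ (x - s • h) h • u x ∂μ = -∫ x, ψ (x - s • h) • d x ∂μ) :
    ∫ x, ψ x • (u (x + h) - u x) ∂μ = ∫ x, ψ x • (∫ t in Ioc (0 : ℝ) 1, d (x + t • h)) ∂μ := by
  have hψ' := hψ.continuous_fderiv one_ne_zero
  obtain ⟨C, hC⟩ := hψ.continuous.bounded_above_of_compact_support hψc
  obtain ⟨C', hC'⟩ := hψ'.bounded_above_of_compact_support (hψc.fderiv (𝕜 := ℝ))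
  have hprod_u : Integrable (uncurry fun (x : E) (s : ℝ) => -fderiv ℝ ψ (x - s • h) h • u x)
      (μ.prod (volume.restrict (Ioc (0 : ℝ) 1))) :=
    (hu.comp_fst _).bdd_smul (φ := fun z : E × ℝ => -fderiv ℝ ψ (z.1 - z.2 • h) h) (C' * ‖h‖)
      (Continuous.aestronglyMeasurable (by fun_prop)) (Eventually.of_forall fun z => by
        rw [norm_neg]
        exact (ContinuousLinearMap.le_opNorm _ _).trans (by gcongr; exact hC' _))
  have hprod_d : Integrable (uncurry fun (x : E) (s : ℝ) => ψ x • d (x + s • h))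
      (μ.prod (volume.restrict (Ioc (0 : ℝ) 1))) :=
    (integrable_comp_add_smul hd h _).bdd_smul (φ := fun z : E × ℝ => ψ z.1) C
      (Continuous.aestronglyMeasurable (by fun_prop)) (Eventually.of_forall fun z => hC _)
  calc ∫ x, ψ x • (u (x + h) - u x) ∂μ
      = ∫ x, (ψ (x - h) - ψ x) • u x ∂μ :=
        integral_smul_add_sub hψ.continuous hψc hu h
    _ = ∫ x, (∫ s in Ioc (0 : ℝ) 1, -fderiv ℝ ψ (x - s • h) h • u x) ∂μ := by
        simp_rw [sub_eq_integral_fderiv_sub_smul hψ, integral_smul_const]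
    _ = ∫ s in Ioc (0 : ℝ) 1, ∫ x, -fderiv ℝ ψ (x - s • h) h • u x ∂μ :=
        integral_integral_swap hprod_u
    _ = ∫ s in Ioc (0 : ℝ) 1, ∫ x, ψ x • d (x + s • h) ∂μ := by
        refine setIntegral_congr_fun measurableSet_Ioc fun s hs => ?_
        simp only [neg_smul]
        rw [integral_neg, hweak s hs, neg_neg,
          ← integral_add_right_eq_self (fun x => ψ (x - s • h) • d x) (s • h)]
        simp
    _ = ∫ x, ψ x • (∫ t in Ioc (0 : ℝ) 1, d (x + t • h)) ∂μ := by
        rw [← integral_integral_swap hprod_d]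
        simp_rw [integral_smul]

namespace IsWeakLineDerivOn

variable [CompleteSpace F] {U S K : Set E} {u d : E → F} {h : E}

lemma integral_smul_eq_zero (hd : IsWeakLineDerivOn U u d h μ)
    (hK : IsCompact K) (hKU : K ⊆ U) {ψ : E → ℝ} (hψ : ContDiff ℝ (⊤ : ℕ∞) ψ)
    (hψc : HasCompactSupport ψ) (hpath : ∀ x ∈ tsupport ψ, ∀ t ∈ Icc (0 : ℝ) 1, x + t • h ∈ K) :
    ∫ x, ψ x • (K.indicator u (x + h) - K.indicator u x
      - ∫ t in Ioc (0 : ℝ) 1, K.indicator d (x + t • h)) ∂μ = 0 := by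
  obtain ⟨hu, hd'⟩ := hd.integrable_indicator hK hKU
  obtain ⟨C, hC⟩ := hψ.continuous.bounded_above_of_compact_support hψc
  have hψm : AEStronglyMeasurable ψ μ := hψ.continuous.aestronglyMeasurable
  have hweak : ∀ s ∈ Ioc (0 : ℝ) 1, ∫ x, fderiv ℝ ψ (x - s • h) h • K.indicator u x ∂μ
      = -∫ x, ψ (x - s • h) • K.indicator d x ∂μ := by
    intro s hs
    have hsupp : tsupport (fun x => ψ (x - s • h)) ⊆ K := fun x hx => by
      have hx' := hpath _
        (tsupport_comp_subset_preimage ψ (f := fun x => x - s • h) (by fun_prop) hx) s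
        ⟨hs.1.le, hs.2⟩
      simpa using hx'
    have key := hd.integral_fderiv_smul_indicator hK hKU
      (hψ.comp (contDiff_id.sub contDiff_const)) hsupp
    simpa only [comp_def, id, fderiv_comp_sub] using key
  simp_rw [smul_sub _ (_ - _)]
  rw [integral_sub, integral_smul_add_sub_eq (hψ.of_le (by simp)) hψc hu hd' hweak, sub_self]
  · exact ((hu.comp_add_right h).sub hu).bdd_smul C hψm (Eventually.of_forall hC)
  · exact (integrable_comp_add_smul hd' h _).integral_prod_left.bdd_smul C hψm
      (Eventually.of_forall hC)

theorem ae_sub_eq_integral (hd : IsWeakLineDerivOn U u d h μ) (hS : IsOpen S)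
    (hpath : ∀ x ∈ S, ∀ t ∈ Icc (0 : ℝ) 1, x + t • h ∈ U) :
    ∀ᵐ x ∂μ, x ∈ S → u (x + h) - u x = ∫ t in Ioc (0 : ℝ) 1, d (x + t • h) := by
  simp_rw [← sub_eq_zero (b := integral _ _)]
  refine hS.ae_eq_zero_of_integral_contDiff_smul_eq_zero ?_ fun ψ hψ hψc hψS => ?_
  · rw [locallyIntegrableOn_iff hS.isLocallyClosed]
    intro K hKS hK
    obtain ⟨K', hK', hK'U, hpathK⟩ := exists_isCompact_forall_add_smul_mem hpath hK hKS
    obtain ⟨hu, hd'⟩ := hd.integrable_indicator hK' hK'U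
    exact (integrable_add_sub_sub_integral hu hd' h).integrableOn.congr_fun
      (fun x hx => indicator_sub_sub_integral_eq hpathK hx) hK.measurableSet
  · obtain ⟨K', hK', hK'U, hpathK⟩ := exists_isCompact_forall_add_smul_mem hpath hψc hψS
    rw [← hd.integral_smul_eq_zero hK' hK'U hψ hψc hpathK]
    refine integral_congr_ae (Eventually.of_forall fun x => ?_)
    by_cases hx : x ∈ tsupport ψ
    · simp only [indicator_sub_sub_integral_eq hpathK hx]
    · simp only [image_eq_zero_of_notMem_tsupport hx, zero_smul]

end IsWeakLineDerivOn

end Segments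

section LineDeriv

variable {E F : Type*} [NormedAddCommGroup E] [NormedSpace ℝ E] [FiniteDimensional ℝ E]
  [MeasurableSpace E] [BorelSpace E] {μ : Measure E} [NormedAddCommGroup F] [NormedSpace ℝ F]
  {U : Set E} {u d : E → F} {h : E}

lemma integrableOn_fderiv_smul (hU : IsOpen U) (hu : LocallyIntegrableOn u U μ) {φ : E → ℝ}
    (hφ : ContDiff ℝ 1 φ) (hφc : HasCompactSupport φ) (hφU : tsupport φ ⊆ U) (h : E) :
    IntegrableOn (fun x => fderiv ℝ φ x h • u x) U μ := by
  have hloc : LocallyIntegrableOn (fun x => fderiv ℝ φ x h • u x) U μ :=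
    hu.continuousOn_smul hU.isLocallyClosed
      ((hφ.continuous_fderiv one_ne_zero).clm_apply continuous_const).continuousOn
  refine (hloc.integrableOn_compact_subset hφU hφc).of_forall_sdiff_eq_zero hU.measurableSet
    fun x hx => ?_
  simp [fderiv_of_notMem_tsupport ℝ hx.2]

lemma integrableAtFilter_of_integrableOn_smul {φ : E → ℝ} (hφ : Continuous φ) {z : E}
    (hU : U ∈ 𝓝 z) (hφz : φ z ≠ 0) (hint : IntegrableOn (fun x => φ x • d x) U μ) :
    IntegrableAtFilter d (𝓝 z) μ := by
  have hV : IsOpen {x | φ x ≠ 0} := isOpen_ne_fun hφ continuous_const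
  have hφd : LocallyIntegrableOn (fun x => φ x • d x) (interior U ∩ {x | φ x ≠ 0}) μ :=
    (hint.mono_set (inter_subset_left.trans interior_subset)).locallyIntegrableOn
  have hinv := hφd.continuousOn_smul (isOpen_interior.inter hV).isLocallyClosed
    (hφ.continuousOn.inv₀ fun x hx => hx.2)
  have hz : interior U ∩ {x | φ x ≠ 0} ∈ 𝓝 z :=
    inter_mem (interior_mem_nhds.2 hU) (hV.mem_nhds hφz)
  obtain ⟨s, hs, hint_s⟩ := hinv z (mem_of_mem_nhds hz)
  rw [nhdsWithin_eq_nhds.2 hz] at hs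
  obtain ⟨t, hts, ht, hzt⟩ := _root_.mem_nhds_iff.1 (inter_mem hs hz)
  refine ⟨t, ht.mem_nhds hzt, (hint_s.mono_set (hts.trans inter_subset_left)).congr_fun
    (fun x hx => inv_smul_smul₀ (hts hx).2.2 (d x)) ht.measurableSet⟩

-- If `d` is not integrable near `z`, the integral of `φ • d` is the junk value `0` whenever
-- `φ z ≠ 0`, and every test function is a difference of two such functions.
lemma integral_fderiv_smul_eq_zero_of_not_locallyIntegrableOn (hU : IsOpen U)
    (hu : LocallyIntegrableOn u U μ) (hd : ¬ LocallyIntegrableOn d U μ)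
    (hweak : ∀ φ : E → ℝ, ContDiff ℝ (⊤ : ℕ∞) φ → HasCompactSupport φ → tsupport φ ⊆ U →
      ∫ x in U, fderiv ℝ φ x h • u x ∂μ = -∫ x in U, φ x • d x ∂μ)
    {φ : E → ℝ} (hφ : ContDiff ℝ (⊤ : ℕ∞) φ) (hφc : HasCompactSupport φ) (hφU : tsupport φ ⊆ U) :
    ∫ x in U, fderiv ℝ φ x h • u x ∂μ = 0 := by
  obtain ⟨z, hzU, hz⟩ : ∃ z ∈ U, ¬ IntegrableAtFilter d (𝓝 z) μ := by
    contrapose! hd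
    exact fun z hz => (hd z hz).filter_mono nhdsWithin_le_nhds
  have hne : ∀ φ : E → ℝ, ContDiff ℝ (⊤ : ℕ∞) φ → HasCompactSupport φ → tsupport φ ⊆ U →
      φ z ≠ 0 → ∫ x in U, fderiv ℝ φ x h • u x ∂μ = 0 := fun φ hφ hφc hφU hφz => by
    rw [hweak φ hφ hφc hφU, integral_undef, neg_zero]
    exact fun hint => hz (integrableAtFilter_of_integrableOn_smul hφ.continuous
      (hU.mem_nhds hzU) hφz hint)
  by_cases hφz : φ z = 0
  · obtain ⟨ψ, hψU, hψc, hψ, -, hψz⟩ :=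
      exists_contDiff_tsupport_subset (n := (⊤ : ℕ∞)) (hU.mem_nhds hzU)
    have hsum := hne (φ + ψ) (hφ.add hψ) (hφc.add hψc)
      ((tsupport_add φ ψ).trans (union_subset hφU hψU)) (by simp [hφz, hψz])
    have hfderiv : ∀ x, fderiv ℝ (φ + ψ) x h = fderiv ℝ φ x h + fderiv ℝ ψ x h := fun x => by
      rw [fderiv_add (hφ.differentiable (by simp) x) (hψ.differentiable (by simp) x),
        add_apply]
    simp_rw [hfderiv, add_smul] at hsum
    rwa [integral_add (integrableOn_fderiv_smul hU hu (hφ.of_le (by simp)) hφc hφU h)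
      (integrableOn_fderiv_smul hU hu (hψ.of_le (by simp)) hψc hψU h),
      hne ψ hψ hψc hψU (by simp [hψz]), add_zero] at hsum
  · exact hne φ hφ hφc hφU hφz

lemma exists_isWeakLineDerivOn_norm_le (hU : IsOpen U) (hu : LocallyIntegrableOn u U μ)
    (hweak : ∀ φ : E → ℝ, ContDiff ℝ (⊤ : ℕ∞) φ → HasCompactSupport φ → tsupport φ ⊆ U →
      ∫ x in U, fderiv ℝ φ x h • u x ∂μ = -∫ x in U, φ x • d x ∂μ) :
    ∃ d' : E → F, (∀ x, ‖d' x‖ ≤ ‖d x‖) ∧ IsWeakLineDerivOn U u d' h μ := by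
  by_cases hd : LocallyIntegrableOn d U μ
  · exact ⟨d, fun _ => le_rfl, hu, hd, hweak⟩
  · refine ⟨0, fun x => by simp, hu, locallyIntegrableOn_zero, fun φ hφ hφc hφU => ?_⟩
    simpa using integral_fderiv_smul_eq_zero_of_not_locallyIntegrableOn hU hu hd hweak hφ hφc hφU

end LineDeriv

lemma rpow_lintegral_le_lintegral_rpow {X : Type*} [MeasurableSpace X] (μ : Measure X)
    [IsProbabilityMeasure μ] (f : X → ENNReal) {q : ℝ} (hq : 1 ≤ q) :
    (∫⁻ x, f x ∂μ) ^ q ≤ ∫⁻ x, f x ^ q ∂μ := by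
  have hq0 : 0 < q := by linarith
  obtain ⟨g, hg, hgf, hfg⟩ := exists_measurable_le_lintegral_eq μ f
  have hmono := eLpNorm'_le_eLpNorm'_of_exponent_le one_pos hq μ hg.aestronglyMeasurable
  simp only [eLpNorm', enorm_eq_self, ENNReal.rpow_one, div_one, one_div] at hmono
  calc (∫⁻ x, f x ∂μ) ^ q = (∫⁻ x, g x ∂μ) ^ q := by rw [hfg]
    _ ≤ ∫⁻ x, g x ^ q ∂μ := (ENNReal.le_rpow_inv_iff hq0).1 hmono
    _ ≤ ∫⁻ x, f x ^ q ∂μ := lintegral_mono fun x => ENNReal.rpow_le_rpow (hgf x) hq0.le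

namespace IsWeakFDerivOn

variable {n N : ℕ} {U S : Set (Rn n)} {u : Rn n → Rn N} {Du : Rn n → (Rn n →L[ℝ] Rn N)}

lemma mono {Ω : Set (Rn n)} (hu : IsWeakFDerivOn Ω u Du) (hU : U ⊆ Ω) :
    IsWeakFDerivOn U u Du := by
  have hset : ∀ {f : Rn n → ℝ} (g : Rn n → Rn N), support f ⊆ U →
      ∫ x in U, f x • g x = ∫ x in Ω, f x • g x := fun g hf => by
    rw [← integral_smul_indicator_eq_setIntegral Subset.rfl hf,
      ← integral_smul_indicator_eq_setIntegral hU hf]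
  refine ⟨hu.1.mono_set hU, hu.2.1.mono_set hU, fun φ hφ hφc hφU e => ?_⟩
  rw [hset u, hset, hu.2.2 φ hφ hφc (hφU.trans hU) e]
  · exact (subset_tsupport φ).trans hφU
  · exact fun x hx => hφU (support_fderiv_subset ℝ fun h0 => hx (by simp [h0]))

lemma exists_isWeakLineDerivOn (hu : IsWeakFDerivOn U u Du) (hU : IsOpen U) (h : Rn n) :
    ∃ d, (∀ x, ‖d x‖ ≤ ‖h‖ * ‖Du x‖) ∧ IsWeakLineDerivOn U u d h volume := by
  obtain ⟨d, hd, hud⟩ := exists_isWeakLineDerivOn_norm_le hU hu.1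
    fun φ hφ hφc hφU => hu.2.2 φ hφ hφc hφU h
  exact ⟨d, fun x => (hd x).trans (by rw [mul_comm]; exact (Du x).le_opNorm h), hud⟩

lemma ae_enorm_sub_rpow_le (hu : IsWeakFDerivOn U u Du) (hU : IsOpen U) (hS : IsOpen S)
    {h : Rn n} (hpath : ∀ x ∈ S, ∀ t ∈ Icc (0 : ℝ) 1, x + t • h ∈ U) :
    ∀ᵐ x, x ∈ S → ∀ q : ℝ, 1 ≤ q →
      ‖u (x + h) - u x‖ₑ ^ q ≤ ‖h‖ₑ ^ q * ∫⁻ t in Ioc (0 : ℝ) 1, ‖Du (x + t • h)‖ₑ ^ q := by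
  obtain ⟨d, hd, hud⟩ := hu.exists_isWeakLineDerivOn hU h
  have : IsProbabilityMeasure ((volume : Measure ℝ).restrict (Ioc (0 : ℝ) 1)) := ⟨by simp⟩
  filter_upwards [hud.ae_sub_eq_integral hS hpath] with x hx hxS q hq
  have hq0 : 0 ≤ q := by linarith
  have hd' : ∀ y, ‖d y‖ₑ ≤ ‖h‖ₑ * ‖Du y‖ₑ := fun y => by
    rw [← enorm_norm h, ← enorm_norm (Du y), ← enorm_mul, enorm_le_iff_norm_le]
    exact (hd y).trans (Real.le_norm_self _)
  calc ‖u (x + h) - u x‖ₑ ^ q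
      = ‖∫ t in Ioc (0 : ℝ) 1, d (x + t • h)‖ₑ ^ q := by rw [hx hxS]
    _ ≤ (∫⁻ t in Ioc (0 : ℝ) 1, ‖d (x + t • h)‖ₑ) ^ q :=
        ENNReal.rpow_le_rpow (enorm_integral_le_lintegral_enorm _) hq0
    _ ≤ ∫⁻ t in Ioc (0 : ℝ) 1, ‖d (x + t • h)‖ₑ ^ q := rpow_lintegral_le_lintegral_rpow _ _ hq
    _ ≤ ∫⁻ t in Ioc (0 : ℝ) 1, ‖h‖ₑ ^ q * ‖Du (x + t • h)‖ₑ ^ q := lintegral_mono fun t => by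
        rw [← ENNReal.mul_rpow_of_nonneg _ _ hq0]
        exact ENNReal.rpow_le_rpow (hd' _) hq0
    _ = ‖h‖ₑ ^ q * ∫⁻ t in Ioc (0 : ℝ) 1, ‖Du (x + t • h)‖ₑ ^ q :=
        lintegral_const_mul' _ _ (ENNReal.rpow_ne_top_of_nonneg hq0 enorm_ne_top)

lemma setLIntegral_enorm_smul_sub_rpow_le (hu : IsWeakFDerivOn U u Du) (hU : IsOpen U)
    (hS : IsOpen S) {h : Rn n} (hpath : ∀ x ∈ S, ∀ t ∈ Icc (0 : ℝ) 1, x + t • h ∈ U) {c : ℝ}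
    {q : Rn n → ℝ} (hq : ∀ x ∈ S, 1 ≤ q x) {L : ENNReal} (hL : ∀ x ∈ S, ‖c • h‖ₑ ^ q x ≤ L)
    {G : Rn n → ENNReal} (hG : AEMeasurable G (volume.restrict U))
    (hDu : ∀ x ∈ S, ∀ t ∈ Ioc (0 : ℝ) 1, ‖Du (x + t • h)‖ₑ ^ q x ≤ G (x + t • h)) :
    ∫⁻ x in S, ‖c • (u (x + h) - u x)‖ₑ ^ q x ≤ L * ∫⁻ x in U, G x := by
  have hG' : AEMeasurable (U.indicator G) volume :=
    (aemeasurable_indicator_iff hU.measurableSet).2 hG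
  have hpoint : ∀ᵐ x, x ∈ S → ‖c • (u (x + h) - u x)‖ₑ ^ q x
      ≤ L * ∫⁻ t in Ioc (0 : ℝ) 1, U.indicator G (x + t • h) := by
    filter_upwards [hu.ae_enorm_sub_rpow_le hU hS hpath] with x hx hxS
    have hq0 : 0 ≤ q x := zero_le_one.trans (hq x hxS)
    rw [enorm_smul, ENNReal.mul_rpow_of_nonneg _ _ hq0]
    grw [hx hxS (q x) (hq x hxS), ← mul_assoc, ← ENNReal.mul_rpow_of_nonneg _ _ hq0, ← enorm_smul,
      hL x hxS]
    gcongr 1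
    refine setLIntegral_mono' measurableSet_Ioc fun t ht => ?_
    rw [indicator_of_mem (hpath x hxS t ⟨ht.1.le, ht.2⟩)]
    exact hDu x hxS t ht
  calc ∫⁻ x in S, ‖c • (u (x + h) - u x)‖ₑ ^ q x
      ≤ ∫⁻ x in S, L * ∫⁻ t in Ioc (0 : ℝ) 1, U.indicator G (x + t • h) :=
        lintegral_mono_ae ((ae_restrict_iff' hS.measurableSet).2 hpoint)
    _ ≤ ∫⁻ x, L * ∫⁻ t in Ioc (0 : ℝ) 1, U.indicator G (x + t • h) := setLIntegral_le_lintegral _ _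
    _ = L * ∫⁻ x in U, G x := by
        rw [lintegral_const_mul'', lintegral_lintegral_add_smul h _ hG',
          lintegral_indicator hU.measurableSet]
        · simp
        · exact (hG'.comp_quasiMeasurePreserving
            (quasiMeasurePreserving_add_smul h _)).lintegral_prod_right'

end IsWeakFDerivOn

section ConvexPoincare

open scoped Pointwise

lemma setLIntegral_setLIntegral_eq_lintegral_add {G : Type*} [AddGroup G] [MeasurableSpace G]
    [MeasurableAdd₂ G] (μ : Measure G) [SFinite μ] [μ.IsAddLeftInvariant] {s : Set G}
    (hs : MeasurableSet s) {F : G → G → ENNReal}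
    (hF : AEMeasurable (uncurry F) ((μ.restrict s).prod (μ.restrict s))) :
    ∫⁻ x in s, (∫⁻ y in s, F x y ∂μ) ∂μ
      = ∫⁻ h, (∫⁻ x in s ∩ (fun x => x + h) ⁻¹' s, F x (x + h) ∂μ) ∂μ := by
  have hF' : AEMeasurable ((s ×ˢ s).indicator (uncurry F)) (μ.prod μ) := by
    rwa [aemeasurable_indicator_iff (hs.prod hs), ← Measure.prod_restrict]
  calc ∫⁻ x in s, (∫⁻ y in s, F x y ∂μ) ∂μ
      = ∫⁻ x, (∫⁻ y, (s ×ˢ s).indicator (uncurry F) (x, y) ∂μ) ∂μ := by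
        rw [← lintegral_indicator hs]
        refine lintegral_congr fun x => ?_
        by_cases hx : x ∈ s
        · rw [indicator_of_mem hx, ← lintegral_indicator hs]
          refine lintegral_congr fun y => ?_
          by_cases hy : y ∈ s <;> simp [hx, hy]
        · simp [indicator, hx]
    _ = ∫⁻ x, (∫⁻ h, (s ×ˢ s).indicator (uncurry F) (x, x + h) ∂μ) ∂μ :=
        lintegral_congr fun x => (lintegral_add_left_eq_self _ x).symm
    _ = ∫⁻ h, (∫⁻ x, (s ×ˢ s).indicator (uncurry F) (x, x + h) ∂μ) ∂μ :=
        lintegral_lintegral_swap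
          (hF'.comp_quasiMeasurePreserving (measurePreserving_prod_add μ μ).quasiMeasurePreserving)
    _ = ∫⁻ h, (∫⁻ x in s ∩ (fun x => x + h) ⁻¹' s, F x (x + h) ∂μ) ∂μ := by
        refine lintegral_congr fun h => ?_
        rw [← lintegral_indicator (hs.inter (measurable_add_const h hs))]
        rfl

lemma enorm_smul_sub_average_rpow_le {X E : Type*} [MeasurableSpace X] {μ : Measure X}
    [IsFiniteMeasure μ] [NeZero μ] [NormedAddCommGroup E] [NormedSpace ℝ E] [CompleteSpace E]
    {f : X → E} (hf : Integrable f μ) (a : E) (c : ℝ) {q : ℝ} (hq : 1 ≤ q) :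
    ‖c • (a - ⨍ y, f y ∂μ)‖ₑ ^ q ≤ ⨍⁻ y, ‖c • (f y - a)‖ₑ ^ q ∂μ := by
  have hmean : c • (a - ⨍ y, f y ∂μ) = -∫ y, c • (f y - a) ∂(μ univ)⁻¹ • μ := by
    rw [integral_smul, integral_sub hf.to_average (integrable_const a), integral_const,
      probReal_univ, one_smul, average_eq', ← smul_neg, neg_sub]
  rw [hmean, enorm_neg, laverage_eq']
  exact (ENNReal.rpow_le_rpow (enorm_integral_le_lintegral_enorm _) (by linarith)).trans
    (rpow_lintegral_le_lintegral_rpow _ _ hq)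

namespace IsWeakFDerivOn

variable {n N : ℕ} {C : Set (Rn n)} {u : Rn n → Rn N} {Du : Rn n → (Rn n →L[ℝ] Rn N)}

lemma setLIntegral_setLIntegral_enorm_smul_sub_rpow_le (hu : IsWeakFDerivOn C u Du)
    (hC : IsOpen C) (hconv : Convex ℝ C) (hui : IntegrableOn u C) (c : ℝ) {q : ℝ} (hq : 1 ≤ q)
    {G : Rn n → ENNReal} (hG : AEMeasurable G (volume.restrict C))
    (hDu : ∀ x ∈ C, ‖Du x‖ₑ ^ q ≤ G x) :
    ∫⁻ x in C, ∫⁻ y in C, ‖c • (u y - u x)‖ₑ ^ q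
      ≤ volume (C - C) * ((‖c‖ₑ * ediam C) ^ q * ∫⁻ x in C, G x) := by
  have hmeas : AEMeasurable (uncurry fun x y => ‖c • (u y - u x)‖ₑ ^ q)
      ((volume.restrict C).prod (volume.restrict C)) := by
    have hum := hui.aestronglyMeasurable.aemeasurable
    exact (((hum.comp_snd.sub hum.comp_fst).const_smul c).enorm).pow_const q
  have hfiber : ∀ h ∈ C - C, ∫⁻ x in C ∩ (fun x => x + h) ⁻¹' C, ‖c • (u (x + h) - u x)‖ₑ ^ q
      ≤ (‖c‖ₑ * ediam C) ^ q * ∫⁻ x in C, G x := by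
    rintro _ ⟨y, hy, z, hz, rfl⟩
    have hpath : ∀ x ∈ C ∩ (fun x => x + (y - z)) ⁻¹' C, ∀ t ∈ Icc (0 : ℝ) 1,
        x + t • (y - z) ∈ C := fun x hx t ht => hconv.add_smul_mem hx.1 hx.2 ht
    refine hu.setLIntegral_enorm_smul_sub_rpow_le hC
      (hC.inter (hC.preimage (continuous_add_const _))) hpath (fun _ _ => hq) (fun _ _ => ?_) hG
      fun x hx t ht => hDu _ (hpath x hx t (Ioc_subset_Icc_self ht))
    rw [enorm_smul, ← edist_eq_enorm_sub]
    gcongr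
    exact edist_le_ediam_of_mem hy hz
  have hempty : ∀ h ∉ C - C, C ∩ (fun x => x + h) ⁻¹' C = ∅ := fun h hh =>
    eq_empty_of_forall_notMem fun x hx => hh ⟨x + h, hx.2, x, hx.1, add_sub_cancel_left x h⟩
  rw [setLIntegral_setLIntegral_eq_lintegral_add volume hC.measurableSet hmeas, mul_comm,
    ← setLIntegral_const, ← lintegral_indicator (hC.sub_left).measurableSet]
  refine lintegral_mono fun h => ?_
  by_cases hh : h ∈ C - C
  · simpa only [indicator_of_mem hh] using hfiber h hh
  · simp [hempty h hh]

lemma setLIntegral_enorm_smul_sub_average_rpow_le (hu : IsWeakFDerivOn C u Du)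
    (hC : IsOpen C) (hconv : Convex ℝ C) (hne : C.Nonempty) (hfin : volume C ≠ ⊤)
    (hui : IntegrableOn u C) (c : ℝ) {q : ℝ} (hq : 1 ≤ q)
    {G : Rn n → ENNReal} (hG : AEMeasurable G (volume.restrict C))
    (hDu : ∀ x ∈ C, ‖Du x‖ₑ ^ q ≤ G x) :
    ∫⁻ x in C, ‖c • (u x - ⨍ y in C, u y)‖ₑ ^ q
      ≤ volume (C - C) / volume C * (‖c‖ₑ * ediam C) ^ q * ∫⁻ x in C, G x := by
  have hpos : volume C ≠ 0 := (hC.measure_pos volume hne).ne'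
  have : NeZero (volume.restrict C) := ⟨by simpa using hpos⟩
  have : IsFiniteMeasure (volume.restrict C) := ⟨by simpa using hfin.lt_top⟩
  calc ∫⁻ x in C, ‖c • (u x - ⨍ y in C, u y)‖ₑ ^ q
      ≤ ∫⁻ x in C, (⨍⁻ y in C, ‖c • (u y - u x)‖ₑ ^ q ∂volume) :=
        lintegral_mono fun x => enorm_smul_sub_average_rpow_le hui (u x) c hq
    _ = (∫⁻ x in C, ∫⁻ y in C, ‖c • (u y - u x)‖ₑ ^ q) / volume C := by
        simp only [setLAverage_eq, div_eq_mul_inv]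
        exact lintegral_mul_const' _ _ (ENNReal.inv_ne_top.2 hpos)
    _ ≤ volume (C - C) * ((‖c‖ₑ * ediam C) ^ q * ∫⁻ x in C, G x) / volume C := by
        gcongr
        exact hu.setLIntegral_setLIntegral_enorm_smul_sub_rpow_le hC hconv hui c hq hG hDu
    _ = volume (C - C) / volume C * (‖c‖ₑ * ediam C) ^ q * ∫⁻ x in C, G x := by
        simp only [div_eq_mul_inv]
        ring

lemma setLIntegral_ball_enorm_smul_sub_average_rpow_le {x₀ : Rn n} {r : ℝ} (hr : 0 < r)
    (hu : IsWeakFDerivOn (ball x₀ r) u Du) (hui : IntegrableOn u (ball x₀ r)) {q : ℝ}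
    (hq : 1 ≤ q) {G : Rn n → ENNReal} (hG : AEMeasurable G (volume.restrict (ball x₀ r)))
    (hDu : ∀ x ∈ ball x₀ r, ‖Du x‖ₑ ^ q ≤ G x) :
    ∫⁻ x in ball x₀ r, ‖r⁻¹ • (u x - ⨍ y in ball x₀ r, u y)‖ₑ ^ q
      ≤ 2 ^ n * 2 ^ q * ∫⁻ x in ball x₀ r, G x := by
  have hvol : volume (ball x₀ r - ball x₀ r) / volume (ball x₀ r) = 2 ^ n := by
    rw [ball_sub_ball hr hr, sub_self, ← two_mul, Measure.addHaar_ball_mul_of_pos _ _ two_pos,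
      ← Measure.addHaar_ball_center volume x₀ r, finrank_euclideanSpace_fin, ENNReal.ofReal_pow,
      ENNReal.ofReal_ofNat, ENNReal.mul_div_cancel_right]
    · exact (measure_ball_pos _ _ hr).ne'
    · exact measure_ball_lt_top.ne
    · positivity
  have hdiam : ‖r⁻¹‖ₑ * ediam (ball x₀ r) ≤ 2 := by
    rw [← eball_ofReal, Real.enorm_of_nonneg (by positivity)]
    grw [ediam_eball_le, mul_left_comm, ← ENNReal.ofReal_mul (by positivity),
      inv_mul_cancel₀ hr.ne', ENNReal.ofReal_one, mul_one]
  refine (hu.setLIntegral_enorm_smul_sub_average_rpow_le isOpen_ball (convex_ball x₀ r)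
    (nonempty_ball.2 hr) measure_ball_lt_top.ne hui r⁻¹ hq hG hDu).trans ?_
  rw [hvol]
  gcongr

end IsWeakFDerivOn

end ConvexPoincare

section Freezing

lemma rpow_le_rpow_mul_rpow_of_exponent_le {x T : ENNReal} (hx : x ≤ T) (hT : 1 ≤ T) {q s δ : ℝ}
    (hq : 0 ≤ q) (hqs : q ≤ s) (hs : s ≤ q + δ) : x ^ s ≤ T ^ δ * x ^ q := by
  calc x ^ s = x ^ (s - q) * x ^ q := by
        rw [← ENNReal.rpow_add_of_nonneg _ _ (sub_nonneg.2 hqs) hq, sub_add_cancel]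
    _ ≤ T ^ (s - q) * x ^ q := by gcongr
    _ ≤ T ^ δ * x ^ q := by gcongr; linarith

lemma rpow_le_one_add_rpow (x : ENNReal) {q s : ℝ} (hq : 0 ≤ q) (hqs : q ≤ s) :
    x ^ q ≤ 1 + x ^ s := by
  rcases le_total x 1 with hx | hx
  · exact (ENNReal.rpow_le_one hx hq).trans le_self_add
  · exact (ENNReal.rpow_le_rpow_of_exponent_le hx hqs).trans le_add_self

-- The factor is bounded as `ρ → 0` because `ρ ^ α * log (1 / ρ) ≤ 1 / α`.
lemma div_rpow_mul_rpow_le {b ρ M α : ℝ} (hb : 1 ≤ b) (hρ : 0 < ρ) (hρ1 : ρ ≤ 1) (hM : 0 ≤ M)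
    (hα : 0 < α) : (b / ρ) ^ (M * ρ ^ α) ≤ b ^ M * Real.exp (M / α) := by
  have hlog : Real.log ρ⁻¹ * ρ ^ α ≤ 1 / α := by
    have h := Real.log_le_rpow_div (inv_nonneg.2 hρ.le) hα
    rwa [Real.inv_rpow hρ.le, div_eq_mul_one_div, ← div_eq_inv_mul,
      le_div_iff₀ (Real.rpow_pos_of_pos hρ α)] at h
  rw [div_eq_mul_inv, Real.mul_rpow (by positivity) (by positivity)]
  gcongr
  · exact mul_le_of_le_one_right hM (Real.rpow_le_one hρ.le hρ1 hα.le)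
  · rw [Real.rpow_def_of_pos (inv_pos.2 hρ), Real.exp_le_exp, mul_left_comm, div_eq_mul_one_div]
    gcongr

variable {X E F : Type*} [MeasurableSpace X] {μ : Measure X} [NormedAddCommGroup E]
  [NormedAddCommGroup F] {p : X → ℝ} {f : X → E} {g : X → F}

lemma lintegral_enorm_rpow_le_of_exponent_le {q : X → ℝ} {b ρ M α : ℝ} (hb : 1 ≤ b) (hρ : 0 < ρ)
    (hρ1 : ρ ≤ 1) (hM : 0 ≤ M) (hα : 0 < α)
    (hq : ∀ᵐ x ∂μ, 0 ≤ q x ∧ q x ≤ p x ∧ p x ≤ q x + M * ρ ^ α)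
    (hf : ∀ᵐ x ∂μ, ‖f x‖ ≤ b / ρ) :
    ∫⁻ x, ‖f x‖ₑ ^ p x ∂μ
      ≤ ENNReal.ofReal (b ^ M * Real.exp (M / α)) * ∫⁻ x, ‖f x‖ₑ ^ q x ∂μ := by
  have hbρ : 1 ≤ b / ρ := (one_le_div hρ).2 (hρ1.trans hb)
  rw [← lintegral_const_mul' _ _ ENNReal.ofReal_ne_top]
  refine lintegral_mono_ae ?_
  filter_upwards [hq, hf] with x ⟨hq0, hqp, hpq⟩ hfx
  have hfx' : ‖f x‖ₑ ≤ ENNReal.ofReal (b / ρ) := by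
    rw [← ofReal_norm]
    exact ENNReal.ofReal_le_ofReal hfx
  grw [rpow_le_rpow_mul_rpow_of_exponent_le hfx' (ENNReal.one_le_ofReal.2 hbρ) hq0 hqp hpq,
    ENNReal.ofReal_rpow_of_pos (by positivity), div_rpow_mul_rpow_le hb hρ hρ1 hM hα]

lemma ae_enorm_norm_rpow_eq (hp : ∀ᵐ x ∂μ, 0 ≤ p x) (f : X → E) :
    (fun x => ‖‖f x‖ ^ p x‖ₑ) =ᵐ[μ] fun x => ‖f x‖ₑ ^ p x :=
  hp.mono fun x hx => by simp only [Real.enorm_rpow_of_nonneg (norm_nonneg _) hx, enorm_norm]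

lemma integral_norm_rpow_le_of_lintegral_le [IsFiniteMeasure μ] (hp : ∀ᵐ x ∂μ, 0 ≤ p x)
    (hg : Integrable (fun x => ‖g x‖ ^ p x) μ) {c : ℝ} (hc : 0 ≤ c)
    (h : ∫⁻ x, ‖f x‖ₑ ^ p x ∂μ ≤ ENNReal.ofReal c * ∫⁻ x, (1 + ‖g x‖ₑ ^ p x) ∂μ) :
    ∫ x, ‖f x‖ ^ p x ∂μ ≤ c * ((∫ x, ‖g x‖ ^ p x ∂μ) + μ.real univ) := by
  have hg' : ∫⁻ x, ‖g x‖ₑ ^ p x ∂μ = ENNReal.ofReal (∫ x, ‖g x‖ ^ p x ∂μ) := by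
    rw [← lintegral_congr_ae (ae_enorm_norm_rpow_eq hp _),
      ← ofReal_integral_norm_eq_lintegral_enorm hg]
    simp only [Real.norm_of_nonneg (Real.rpow_nonneg (norm_nonneg _) _)]
  have hf' : ENNReal.ofReal (∫ x, ‖f x‖ ^ p x ∂μ) ≤ ∫⁻ x, ‖f x‖ₑ ^ p x ∂μ := by
    rw [← Real.enorm_of_nonneg (by positivity), ← lintegral_congr_ae (ae_enorm_norm_rpow_eq hp _)]
    exact enorm_integral_le_lintegral_enorm _
  rw [← ENNReal.ofReal_le_ofReal_iff (by positivity)]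
  refine hf'.trans (h.trans_eq ?_)
  rw [lintegral_add_left measurable_const, hg', lintegral_one, ENNReal.ofReal_mul hc,
    ENNReal.ofReal_add (by positivity) (by positivity), ofReal_measureReal, add_comm]

end Freezing

section VariableExponent

variable {n N : ℕ} {p : Rn n → ℝ} {w : Rn n → Rn N} {Dw : Rn n → (Rn n →L[ℝ] Rn N)}

lemma aemeasurable_enorm_rpow {A : Set (Rn n)} (hA : MeasurableSet A) (hp : ∀ x ∈ A, 0 ≤ p x)
    (hDw : IntegrableOn (fun x => ‖Dw x‖ ^ p x) A) :
    AEMeasurable (fun x => ‖Dw x‖ₑ ^ p x) (volume.restrict A) :=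
  hDw.aemeasurable.enorm.congr
    (ae_enorm_norm_rpow_eq ((ae_restrict_mem hA).mono hp) Dw)

lemma norm_inv_smul_le_div {E : Type*} [NormedAddCommGroup E] [NormedSpace ℝ E] {v : E} {b ρ : ℝ}
    (hρ : 0 < ρ) (hv : ‖v‖ ≤ b) : ‖ρ⁻¹ • v‖ ≤ b / ρ := by
  rw [norm_smul, norm_inv, Real.norm_of_nonneg hρ.le, ← div_eq_inv_mul]
  gcongr

lemma norm_setAverage_le {E F : Type*} [MeasurableSpace E] {μ : Measure E} {A : Set E}
    [NormedAddCommGroup F] [NormedSpace ℝ F] [CompleteSpace F] {f : E → F} {K : ℝ}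
    (hA : μ A ≠ 0) (hA' : μ A ≠ ⊤) (hf : IntegrableOn f A μ)
    (hK : ∀ᵐ x ∂μ.restrict A, ‖f x‖ ≤ K) :
    ‖⨍ x in A, f x ∂μ‖ ≤ K := by
  simpa using (convex_closedBall (0 : F) K).set_average_mem isClosed_closedBall hA hA'
    (by simpa using hK) hf

lemma exists_one_le_const_exponent {C α : NNReal} {x₀ : Rn n} {r : ℝ} (hr : 0 < r)
    (hp : HolderOnWith C α p (ball x₀ r)) (hp1 : ∀ x ∈ ball x₀ r, 1 ≤ p x) :
    ∃ q, 1 ≤ q ∧ ∀ x ∈ ball x₀ r, q ≤ p x ∧ p x ≤ q + C * (2 * r) ^ (α : ℝ) := by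
  have : Nonempty (ball x₀ r) := ⟨x₀, mem_ball_self hr⟩
  refine ⟨⨅ y : ball x₀ r, p y, le_ciInf fun y => hp1 y y.2, fun x hx =>
    ⟨ciInf_le (f := fun y : ball x₀ r => p y) ⟨1, ?_⟩ ⟨x, hx⟩, ?_⟩⟩
  · rintro _ ⟨y, rfl⟩
    exact hp1 y y.2
  · rw [← sub_le_iff_le_add]
    refine le_ciInf fun y => ?_
    have hxy : dist x y ≤ 2 * r := by
      linarith [dist_triangle_right x y x₀, mem_ball.1 hx, mem_ball.1 y.2]
    have := hp.dist_le_of_le hx y.2 hxy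
    rw [Real.dist_eq] at this
    linarith [le_abs_self (p x - p y)]

theorem integral_ball_norm_smul_sub_average_rpow_le {C α : NNReal} (hα : 0 < α) {γ K r : ℝ}
    {x₀ : Rn n} (hr : 0 < r) (hr1 : r ≤ 1) (hpC : HolderOnWith C α p (ball x₀ r))
    (hp : ∀ x ∈ ball x₀ r, 1 ≤ p x ∧ p x ≤ γ) (hw : IsWeakFDerivOn (ball x₀ r) w Dw)
    (hDw : IntegrableOn (fun x => ‖Dw x‖ ^ p x) (ball x₀ r))
    (hK : ∀ᵐ x ∂volume.restrict (ball x₀ r), ‖w x‖ ≤ K) :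
    ∫ x in ball x₀ r, ‖r⁻¹ • (w x - ⨍ y in ball x₀ r, w y)‖ ^ p x
      ≤ max 1 (2 * K) ^ (C * 2 ^ (α : ℝ) : ℝ) * Real.exp (C * 2 ^ (α : ℝ) / α)
          * (2 ^ n * 2 ^ γ)
        * ((∫ x in ball x₀ r, ‖Dw x‖ ^ p x) + volume.real (ball x₀ r)) := by
  obtain ⟨q, hq1, hq⟩ := exists_one_le_const_exponent hr hpC fun x hx => (hp x hx).1
  have hmem : ∀ᵐ x ∂volume.restrict (ball x₀ r), x ∈ ball x₀ r :=
    ae_restrict_mem measurableSet_ball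
  have : IsFiniteMeasure (volume.restrict (ball x₀ r)) := ⟨by simpa using measure_ball_lt_top⟩
  have hwi : IntegrableOn w (ball x₀ r) :=
    .of_bound measure_ball_lt_top hw.1.aestronglyMeasurable K hK
  have hmean : ‖⨍ y in ball x₀ r, w y‖ ≤ K :=
    norm_setAverage_le (measure_ball_pos _ _ hr).ne' measure_ball_lt_top.ne hwi hK
  have hbound : ∀ᵐ x ∂volume.restrict (ball x₀ r),
      ‖r⁻¹ • (w x - ⨍ y in ball x₀ r, w y)‖ ≤ max 1 (2 * K) / r := by
    filter_upwards [hK] with x hx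
    exact norm_inv_smul_le_div hr
      ((norm_sub_le _ _).trans (le_max_of_le_right (by linarith)))
  have hexp : ∀ᵐ x ∂volume.restrict (ball x₀ r),
      0 ≤ q ∧ q ≤ p x ∧ p x ≤ q + C * 2 ^ (α : ℝ) * r ^ (α : ℝ) :=
    hmem.mono fun x hx => ⟨by linarith, (hq x hx).1, by
      rw [mul_assoc, ← Real.mul_rpow zero_le_two hr.le]; exact (hq x hx).2⟩
  have hqγ : q ≤ γ := (hq x₀ (mem_ball_self hr)).1.trans (hp x₀ (mem_ball_self hr)).2
  have hp0 : ∀ x ∈ ball x₀ r, 0 ≤ p x := fun x hx => zero_le_one.trans (hp x hx).1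
  rw [← measureReal_restrict_apply_univ]
  refine integral_norm_rpow_le_of_lintegral_le (hmem.mono hp0) hDw (by positivity) ?_
  grw [lintegral_enorm_rpow_le_of_exponent_le (le_max_left _ _) hr hr1 (by positivity)
    (by exact_mod_cast hα) hexp hbound,
    hw.setLIntegral_ball_enorm_smul_sub_average_rpow_le hr hwi hq1
    ((aemeasurable_enorm_rpow measurableSet_ball hp0 hDw).const_add 1)
    fun x hx => rpow_le_one_add_rpow _ (by linarith) (hq x hx).1]
  rw [ENNReal.ofReal_mul (by positivity) (q := 2 ^ n * 2 ^ γ), ← mul_assoc]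
  gcongr
  rw [ENNReal.ofReal_mul (by positivity), ENNReal.ofReal_pow zero_le_two, ENNReal.ofReal_ofNat,
    ← ENNReal.ofReal_rpow_of_pos two_pos, ENNReal.ofReal_ofNat]
  gcongr
  exact one_le_two

end VariableExponent

section Cones

lemma norm_le_norm_add_smul {E : Type*} [NormedAddCommGroup E] [InnerProductSpace ℝ E] {e y : E}
    {t : ℝ} (ht : 0 ≤ t) (hy : 0 ≤ inner ℝ e y) : ‖y‖ ≤ ‖y + t • e‖ := by
  refine le_of_sq_le_sq ?_ (norm_nonneg _)
  rw [norm_add_sq_real, inner_smul_right, real_inner_comm]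
  nlinarith [mul_nonneg ht hy, sq_nonneg ‖t • e‖]

lemma norm_add_le_norm_add_smul {E : Type*} [NormedAddCommGroup E] [InnerProductSpace ℝ E]
    {e y : E} (he : ‖e‖ = 1) {a ρ : ℝ} (ha : 1 ≤ a) (hρ : 0 ≤ ρ) (hy : ‖y‖ ≤ a * inner ℝ e y) :
    ‖y‖ + ρ ≤ ‖y + (a * ρ) • e‖ := by
  refine le_of_sq_le_sq ?_ (norm_nonneg _)
  rw [norm_add_sq_real, norm_smul, he, inner_smul_right, real_inner_comm,
    Real.norm_of_nonneg (by positivity)]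
  have hcross : ρ * ‖y‖ ≤ ρ * (a * inner ℝ e y) := by gcongr
  have hsquare : ρ ^ 2 ≤ (a * ρ) ^ 2 := by gcongr; exact le_mul_of_one_le_left hρ ha
  linarith

lemma exists_norm_lt_mul_inner_single {n : ℕ} {y : Rn n} (hy : y ≠ 0) :
    ∃ i : Fin n × Bool,
      ‖y‖ < (n + 1) * inner ℝ (EuclideanSpace.single i.1 (if i.2 then (1 : ℝ) else -1)) y := by
  by_contra! hcon
  have hcoord (i : Fin n) : (n + 1) * |y i| ≤ ‖y‖ := by
    have hpos := hcon (i, true)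
    have hneg := hcon (i, false)
    simp only [↓reduceIte, EuclideanSpace.inner_single_left, Real.ringHom_apply, one_mul,
      Bool.false_eq_true, neg_mul, mul_neg] at hpos hneg
    rcases abs_cases (y i) with h | h <;> rw [h.1] <;> linarith
  have hsum : ‖y‖ ≤ ∑ i, |y i| := by
    conv_lhs => rw [← (EuclideanSpace.basisFun (Fin n) ℝ).sum_repr y]
    exact (norm_sum_le _ _).trans_eq (by simp [norm_smul])
  have hle : (n + 1) * ‖y‖ ≤ n * ‖y‖ := by
    calc (n + 1) * ‖y‖ ≤ (n + 1) * ∑ i, |y i| := by gcongr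
      _ ≤ ∑ _i : Fin n, ‖y‖ := by
        rw [Finset.mul_sum]
        exact Finset.sum_le_sum fun i _ => hcoord i
      _ = n * ‖y‖ := by simp
  linarith [norm_pos_iff.2 hy]

end Cones

section Annulus

variable {n N : ℕ} {p : Rn n → ℝ} {w : Rn n → Rn N} {Dw : Rn n → (Rn n →L[ℝ] Rn N)}

lemma setLIntegral_enorm_smul_rpow_le_of_indicator {A U S : Set (Rn n)}
    (hw : IsWeakFDerivOn U (A.indicator w) (A.indicator Dw)) (hU : IsOpen U) (hS : IsOpen S)
    (hA : MeasurableSet A) (hAU : A ⊆ U) (hSA : S ⊆ A) {h : Rn n}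
    (hpath : ∀ x ∈ S, ∀ t ∈ Icc (0 : ℝ) 1, x + t • h ∈ U) (hexit : ∀ x ∈ S, x + h ∉ A)
    {c : ℝ} {q : Rn n → ℝ} (hq : ∀ x ∈ S, 1 ≤ q x) {L : ENNReal}
    (hL : ∀ x ∈ S, ‖c • h‖ₑ ^ q x ≤ L)
    (hDw : AEMeasurable (fun x => ‖Dw x‖ₑ ^ p x) (volume.restrict A))
    (hqp : ∀ x ∈ S, ∀ t ∈ Ioc (0 : ℝ) 1, x + t • h ∈ A → q x ≤ p (x + t • h)) :
    ∫⁻ x in S, ‖c • w x‖ₑ ^ q x ≤ L * ∫⁻ x in A, (1 + ‖Dw x‖ₑ ^ p x) := by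
  set G : Rn n → ENNReal := A.indicator fun x => 1 + ‖Dw x‖ₑ ^ p x with hG
  have hGm : AEMeasurable G (volume.restrict U) :=
    ((aemeasurable_indicator_iff hA).2 (hDw.const_add 1)).restrict
  have hDG : ∀ x ∈ S, ∀ t ∈ Ioc (0 : ℝ) 1,
      ‖A.indicator Dw (x + t • h)‖ₑ ^ q x ≤ G (x + t • h) := by
    intro x hx t ht
    have hq0 : 0 < q x := zero_lt_one.trans_le (hq x hx)
    by_cases hxt : x + t • h ∈ A
    · rw [hG, indicator_of_mem hxt, indicator_of_mem hxt]
      exact rpow_le_one_add_rpow _ hq0.le (hqp x hx t ht hxt)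
    · rw [indicator_of_notMem hxt, ← ofReal_norm, norm_zero, ENNReal.ofReal_zero,
        ENNReal.zero_rpow_of_pos hq0]
      exact zero_le
  calc ∫⁻ x in S, ‖c • w x‖ₑ ^ q x
      = ∫⁻ x in S, ‖c • (A.indicator w (x + h) - A.indicator w x)‖ₑ ^ q x := by
        refine setLIntegral_congr_fun hS.measurableSet fun x hx => ?_
        simp only [indicator_of_notMem (hexit x hx), indicator_of_mem (hSA hx), zero_sub, smul_neg,
          enorm_neg]
    _ ≤ L * ∫⁻ x in U, G x :=
        hw.setLIntegral_enorm_smul_sub_rpow_le hU hS hpath hq hL hGm hDG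
    _ = L * ∫⁻ x in A, (1 + ‖Dw x‖ₑ ^ p x) := by
        rw [hG, setLIntegral_indicator hA, inter_eq_left.2 hAU]

lemma setLIntegral_annulus_inter_cone_enorm_smul_rpow_le {x₀ e : Rn n} {r s a γ : ℝ} (he : ‖e‖ = 1)
    (ha : 1 ≤ a) (hsr : s < r)
    (hw : IsWeakFDerivOn (closedBall x₀ s)ᶜ ((ball x₀ r \ closedBall x₀ s).indicator w)
      ((ball x₀ r \ closedBall x₀ s).indicator Dw))
    (hDw : AEMeasurable (fun x => ‖Dw x‖ₑ ^ p x) (volume.restrict (ball x₀ r \ closedBall x₀ s)))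
    {q : Rn n → ℝ} (hq : ∀ x ∈ ball x₀ r \ closedBall x₀ s, 1 ≤ q x ∧ q x ≤ γ)
    (hqp : ∀ x ∈ ball x₀ r \ closedBall x₀ s, ∀ y ∈ ball x₀ r \ closedBall x₀ s,
      dist x y ≤ a * (r - s) → q x ≤ p y) :
    ∫⁻ x in (ball x₀ r \ closedBall x₀ s) ∩ {x | ‖x - x₀‖ < a * inner ℝ e (x - x₀)},
        ‖(r - s)⁻¹ • w x‖ₑ ^ q x
      ≤ ENNReal.ofReal (a ^ γ) * ∫⁻ x in ball x₀ r \ closedBall x₀ s, (1 + ‖Dw x‖ₑ ^ p x) := by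
  have ha0 : 0 < a := zero_lt_one.trans_le ha
  have hρ : 0 < r - s := sub_pos.2 hsr
  have hopen : IsOpen (ball x₀ r \ closedBall x₀ s) := isOpen_ball.sdiff isClosed_closedBall
  have hnorm : ‖(a * (r - s)) • e‖ = a * (r - s) := by
    rw [norm_smul, he, mul_one, Real.norm_of_nonneg (by positivity)]
  refine setLIntegral_enorm_smul_rpow_le_of_indicator (h := (a * (r - s)) • e) hw
    isClosed_closedBall.isOpen_compl
    (hopen.inter (isOpen_lt (by fun_prop) (by fun_prop))) hopen.measurableSet (fun x hx => hx.2)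
    inter_subset_left ?_ ?_ (fun x hx => (hq x hx.1).1) ?_ hDw ?_
  · rintro x ⟨hx, hcone⟩ t ht
    have hinner : 0 ≤ inner ℝ e (x - x₀) :=
      (pos_of_mul_pos_right ((norm_nonneg _).trans_lt hcone) ha0.le).le
    have hxs := hx.2
    rw [mem_closedBall, dist_eq_norm, not_le] at hxs
    rw [mem_compl_iff, mem_closedBall, dist_eq_norm, not_le, smul_smul, add_sub_right_comm]
    exact hxs.trans_le (norm_le_norm_add_smul (mul_nonneg ht.1 (by positivity)) hinner)
  · rintro x ⟨hx, hcone⟩ ⟨hball, -⟩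
    have hxs := hx.2
    rw [mem_closedBall, dist_eq_norm, not_le] at hxs
    rw [mem_ball, dist_eq_norm, add_sub_right_comm] at hball
    linarith [norm_add_le_norm_add_smul he ha hρ.le hcone.le]
  · intro x hx
    have hq := hq x hx.1
    rw [smul_smul, mul_left_comm, inv_mul_cancel₀ hρ.ne', mul_one, ← ofReal_norm, norm_smul, he,
      mul_one, Real.norm_of_nonneg ha0.le, ENNReal.ofReal_rpow_of_pos ha0]
    exact ENNReal.ofReal_le_ofReal (Real.rpow_le_rpow_of_exponent_le ha hq.2)
  · intro x hx t ht hy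
    refine hqp x hx.1 _ hy ?_
    rw [dist_self_add_right, norm_smul, hnorm, Real.norm_of_nonneg ht.1.le]
    exact mul_le_of_le_one_left (by positivity) ht.2

lemma setLIntegral_annulus_enorm_smul_rpow_le {x₀ : Rn n} {r s γ : ℝ} (hs : 0 ≤ s) (hsr : s < r)
    (hw : IsWeakFDerivOn (closedBall x₀ s)ᶜ ((ball x₀ r \ closedBall x₀ s).indicator w)
      ((ball x₀ r \ closedBall x₀ s).indicator Dw))
    (hDw : AEMeasurable (fun x => ‖Dw x‖ₑ ^ p x) (volume.restrict (ball x₀ r \ closedBall x₀ s)))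
    {q : Rn n → ℝ} (hq : ∀ x ∈ ball x₀ r \ closedBall x₀ s, 1 ≤ q x ∧ q x ≤ γ)
    (hqp : ∀ x ∈ ball x₀ r \ closedBall x₀ s, ∀ y ∈ ball x₀ r \ closedBall x₀ s,
      dist x y ≤ (n + 1) * (r - s) → q x ≤ p y) :
    ∫⁻ x in ball x₀ r \ closedBall x₀ s, ‖(r - s)⁻¹ • w x‖ₑ ^ q x
      ≤ ENNReal.ofReal (2 * n * (n + 1) ^ γ)
        * ∫⁻ x in ball x₀ r \ closedBall x₀ s, (1 + ‖Dw x‖ₑ ^ p x) := by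
  set A := ball x₀ r \ closedBall x₀ s
  let e : Fin n × Bool → Rn n := fun i => EuclideanSpace.single i.1 (if i.2 then (1 : ℝ) else -1)
  have he (i) : ‖e i‖ = 1 := by
    obtain ⟨i, b⟩ := i
    cases b <;> simp [e]
  have hcover : A ⊆ ⋃ i, A ∩ {x | ‖x - x₀‖ < (n + 1) * inner ℝ (e i) (x - x₀)} := by
    intro x hx
    have hx₀ : x - x₀ ≠ 0 := sub_ne_zero.2 fun h => hx.2 (h ▸ mem_closedBall_self hs)
    obtain ⟨i, hi⟩ := exists_norm_lt_mul_inner_single hx₀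
    exact mem_iUnion.2 ⟨i, hx, hi⟩
  calc ∫⁻ x in A, ‖(r - s)⁻¹ • w x‖ₑ ^ q x
      ≤ ∑' i, ∫⁻ x in A ∩ {x | ‖x - x₀‖ < (n + 1) * inner ℝ (e i) (x - x₀)},
          ‖(r - s)⁻¹ • w x‖ₑ ^ q x :=
        (lintegral_mono_set hcover).trans (lintegral_iUnion_le _ _)
    _ ≤ ∑' _i : Fin n × Bool,
          ENNReal.ofReal ((n + 1) ^ γ) * ∫⁻ x in A, (1 + ‖Dw x‖ₑ ^ p x) :=
        ENNReal.tsum_le_tsum fun i => setLIntegral_annulus_inter_cone_enorm_smul_rpow_le (he i)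
          (by simp) hsr hw hDw hq hqp
    _ = ENNReal.ofReal (2 * n * (n + 1) ^ γ) * ∫⁻ x in A, (1 + ‖Dw x‖ₑ ^ p x) := by
        rw [tsum_fintype, Finset.sum_const, nsmul_eq_mul, ← mul_assoc,
          ENNReal.ofReal_mul (by positivity)]
        simp [mul_comm]

lemma exists_one_le_exponent_le_of_dist_le {X : Type*} [PseudoMetricSpace X] {C α : NNReal}
    {A : Set X} {p : X → ℝ} (hp : HolderOnWith C α p A) (hp1 : ∀ x ∈ A, 1 ≤ p x) {ρ : ℝ}
    (hρ : 0 ≤ ρ) : ∃ q : X → ℝ, (∀ x, 1 ≤ q x) ∧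
      (∀ x ∈ A, q x ≤ p x ∧ p x ≤ q x + C * ρ ^ (α : ℝ)) ∧
      ∀ x ∈ A, ∀ y ∈ A, dist x y ≤ ρ → q x ≤ p y := by
  refine ⟨fun x => max 1 (p x - C * ρ ^ (α : ℝ)), fun x => le_max_left _ _,
    fun x hx => ⟨max_le (hp1 x hx) (sub_le_self _ (by positivity)), ?_⟩, fun x hx y hy hxy => ?_⟩
  · rw [← sub_le_iff_le_add]
    exact le_max_right _ _
  · have hpxy := hp.dist_le_of_le hx hy hxy
    rw [Real.dist_eq] at hpxy
    exact max_le (hp1 y hy) (by linarith [le_abs_self (p x - p y)])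

theorem integral_annulus_norm_smul_rpow_le {C α : NNReal} (hα : 0 < α) {γ K r s : ℝ} {x₀ : Rn n}
    (hs : 0 ≤ s) (hsr : s < r) (hrs : r ≤ s + 1)
    (hpC : HolderOnWith C α p (ball x₀ r \ closedBall x₀ s))
    (hp : ∀ x ∈ ball x₀ r \ closedBall x₀ s, 1 ≤ p x ∧ p x ≤ γ)
    (hw : IsWeakFDerivOn (closedBall x₀ s)ᶜ ((ball x₀ r \ closedBall x₀ s).indicator w)
      ((ball x₀ r \ closedBall x₀ s).indicator Dw))
    (hDw : IntegrableOn (fun x => ‖Dw x‖ ^ p x) (ball x₀ r \ closedBall x₀ s))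
    (hK : ∀ᵐ x ∂volume.restrict (ball x₀ r \ closedBall x₀ s), ‖w x‖ ≤ K) :
    ∫ x in ball x₀ r \ closedBall x₀ s, ‖(r - s)⁻¹ • w x‖ ^ p x
      ≤ max 1 K ^ (C * (n + 1) ^ (α : ℝ) : ℝ) * Real.exp (C * (n + 1) ^ (α : ℝ) / α)
          * (2 * (n + 1) * (n + 1) ^ γ)
        * ((∫ x in ball x₀ r \ closedBall x₀ s, ‖Dw x‖ ^ p x)
          + volume.real (ball x₀ r \ closedBall x₀ s)) := by
  set A := ball x₀ r \ closedBall x₀ s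
  have hρ : 0 < r - s := sub_pos.2 hsr
  have hA : MeasurableSet A := measurableSet_ball.diff measurableSet_closedBall
  have : IsFiniteMeasure (volume.restrict A) :=
    ⟨by simpa using measure_lt_top_mono sdiff_subset measure_ball_lt_top⟩
  have hp0 : ∀ x ∈ A, 0 ≤ p x := fun x hx => zero_le_one.trans (hp x hx).1
  obtain ⟨q, hq1, hq, hqp⟩ := exists_one_le_exponent_le_of_dist_le hpC (fun x hx => (hp x hx).1)
    (ρ := (n + 1) * (r - s)) (by positivity)
  have hexp : ∀ᵐ x ∂volume.restrict A,
      0 ≤ q x ∧ q x ≤ p x ∧ p x ≤ q x + C * (n + 1) ^ (α : ℝ) * (r - s) ^ (α : ℝ) := by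
    filter_upwards [ae_restrict_mem hA] with x hx
    rw [mul_assoc, ← Real.mul_rpow (by positivity) hρ.le]
    exact ⟨zero_le_one.trans (hq1 x), hq x hx⟩
  have hbound : ∀ᵐ x ∂volume.restrict A, ‖(r - s)⁻¹ • w x‖ ≤ max 1 K / (r - s) :=
    hK.mono fun x hx => norm_inv_smul_le_div hρ (le_max_of_le_right hx)
  rw [← measureReal_restrict_apply_univ]
  refine integral_norm_rpow_le_of_lintegral_le ((ae_restrict_mem hA).mono hp0) hDw
    (by positivity) ?_
  grw [lintegral_enorm_rpow_le_of_exponent_le (le_max_left _ _) hρ (by linarith) (by positivity)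
    (by exact_mod_cast hα) hexp hbound, setLIntegral_annulus_enorm_smul_rpow_le hs hsr hw
      (aemeasurable_enorm_rpow hA hp0 hDw)
      (fun x hx => ⟨hq1 x, (hq x hx).1.trans (hp x hx).2⟩) hqp]
  rw [ENNReal.ofReal_mul (by positivity) (q := 2 * (n + 1) * (n + 1) ^ γ), ← mul_assoc]
  gcongr
  exact (lt_add_one _).le

end Annulus

lemma holderOnWith_toNNReal {X : Type*} [PseudoMetricSpace X] {A : Set X} {p : X → ℝ} {α C : ℝ}
    (hα : 0 ≤ α) (hp : ∀ x ∈ A, ∀ y ∈ A, |p x - p y| ≤ C * dist x y ^ α) :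
    HolderOnWith C.toNNReal α.toNNReal p A := by
  intro x hx y hy
  rw [edist_dist, edist_dist, Real.dist_eq, Real.coe_toNNReal _ hα,
    ENNReal.ofReal_rpow_of_nonneg dist_nonneg hα, ← ENNReal.ofReal, ← ENNReal.ofReal_mul']
  · exact ENNReal.ofReal_le_ofReal (hp x hx y hy)
  · positivity

theorem poincare_inequality_variable_exponent_general (n N : ℕ) (α γ C K : ℝ) (hα : 0 < α) :
    (∃ c : ℝ, 0 < c ∧
      ∀ (p : Rn n → ℝ) (w : Rn n → Rn N) (Dw : Rn n → (Rn n →L[ℝ] Rn N)) (x₀ : Rn n) (r : ℝ),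
        0 < r → r ≤ 1 →
        (∀ x ∈ ball x₀ r, ∀ y ∈ ball x₀ r, |p x - p y| ≤ C * dist x y ^ α) →
        (∀ x ∈ ball x₀ r, 1 ≤ p x ∧ p x ≤ γ) →
        IsWeakFDerivOn (ball x₀ r) w Dw →
        IntegrableOn (fun x => ‖Dw x‖ ^ p x) (ball x₀ r) →
        (∀ᵐ x ∂volume.restrict (ball x₀ r), ‖w x‖ ≤ K) →
        ∫ x in ball x₀ r, ‖(1 / r) • (w x - ⨍ y in ball x₀ r, w y)‖ ^ p x
          ≤ c * ((∫ x in ball x₀ r, ‖Dw x‖ ^ p x) + volume.real (ball x₀ r))) ∧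
    (∃ c : ℝ, 0 < c ∧
      ∀ (p : Rn n → ℝ) (w : Rn n → Rn N) (Dw : Rn n → (Rn n →L[ℝ] Rn N)) (x₀ : Rn n) (r θ : ℝ)
        (A : Set (Rn n)), 0 < r → 0 < θ → θ ≤ 1 → r * θ ≤ 1 →
        A = ball x₀ r \ closedBall x₀ (r * (1 - θ)) →
        (∀ x ∈ A, ∀ y ∈ A, |p x - p y| ≤ C * dist x y ^ α) →
        (∀ x ∈ A, 1 ≤ p x ∧ p x ≤ γ) →
        IsWeakFDerivOn (closedBall x₀ (r * (1 - θ)))ᶜ (A.indicator w) (A.indicator Dw) →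
        IntegrableOn (fun x => ‖Dw x‖ ^ p x) A →
        (∀ᵐ x ∂volume.restrict A, ‖w x‖ ≤ K) →
        ∫ x in A, ‖(1 / (r * θ)) • w x‖ ^ p x
          ≤ c * ((∫ x in A, ‖Dw x‖ ^ p x) + volume.real A)) := by
  have hα' : 0 < α.toNNReal := Real.toNNReal_pos.2 hα
  constructor
  · refine ⟨max 1 (2 * K) ^ (C.toNNReal * 2 ^ (α.toNNReal : ℝ) : ℝ)
      * Real.exp (C.toNNReal * 2 ^ (α.toNNReal : ℝ) / α.toNNReal) * (2 ^ n * 2 ^ γ),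
      by positivity, fun p w Dw x₀ r hr hr1 hpC hp hw hDw hK => ?_⟩
    rw [one_div]
    exact integral_ball_norm_smul_sub_average_rpow_le hα' hr hr1 (holderOnWith_toNNReal hα.le hpC)
      hp hw hDw hK
  · refine ⟨max 1 K ^ (C.toNNReal * (n + 1) ^ (α.toNNReal : ℝ) : ℝ)
      * Real.exp (C.toNNReal * (n + 1) ^ (α.toNNReal : ℝ) / α.toNNReal)
      * (2 * (n + 1) * (n + 1) ^ γ),
      by positivity, fun p w Dw x₀ r θ A hr hθ hθ1 hrθ hA hpC hp hw hDw hK => ?_⟩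
    have hradius : r - r * (1 - θ) = r * θ := by ring
    subst hA
    rw [one_div, ← hradius]
    exact integral_annulus_norm_smul_rpow_le hα' (mul_nonneg hr.le (sub_nonneg.2 hθ1))
      (by nlinarith) (by linarith) (holderOnWith_toNNReal hα.le hpC) hp hw hDw hK

/-- **Poincaré's inequality** for bounded maps in `W^{1,p(·)}`, on balls and on
annuli with zero trace on the outer boundary (the latter expressed through the
zero extension remaining weakly differentiable across `∂B_r`). The constants depend
only on `n, N, γ₁, γ₂, [p]_{0,α}, α` and the `L^∞`-bound `K`. -/
theorem poincare_inequality_variable_exponent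
    (n N : ℕ) (hn : 2 ≤ n)
    (α γ₁ γ₂ Cp K : ℝ) (hα : 0 < α) (hα1 : α ≤ 1) (hγ₁ : 1 < γ₁) :
    (∃ c : ℝ, 0 < c ∧
      ∀ (Ω : Set (Rn n)), IsOpen Ω →
      ∀ p : Rn n → ℝ, Pconds Ω p α γ₁ γ₂ Cp →
      ∀ (w : Rn n → Rn N) (Dw : Rn n → (Rn n →L[ℝ] Rn N)), MemW1pLoc Ω p w Dw →
      ∀ (x₀ : Rn n) (r : ℝ), 0 < r → r ≤ 1 → closedBall x₀ r ⊆ Ω →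
        (∀ x ∈ ball x₀ r, ‖w x‖ ≤ K) →
        ∫ x in ball x₀ r, ‖(1 / r) • (w x - ⨍ y in ball x₀ r, w y)‖ ^ p x
          ≤ c * ((∫ x in ball x₀ r, ‖Dw x‖ ^ p x)
              + (volume (ball x₀ r)).toReal)) ∧
    (∃ c : ℝ, 0 < c ∧
      ∀ (Ω : Set (Rn n)), IsOpen Ω →
      ∀ p : Rn n → ℝ, Pconds Ω p α γ₁ γ₂ Cp →
      ∀ (x₀ : Rn n) (r θ : ℝ), 0 < r → r ≤ 1 → 0 < θ → θ < 1 →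
        closedBall x₀ r ⊆ Ω →
      ∀ (w : Rn n → Rn N) (Dw : Rn n → (Rn n →L[ℝ] Rn N)),
        MemW1p (ball x₀ r \ closedBall x₀ (r * (1 - θ))) p w Dw →
        (∀ x ∈ ball x₀ r \ closedBall x₀ (r * (1 - θ)), ‖w x‖ ≤ K) →
        IsWeakFDerivOn ((closedBall x₀ (r * (1 - θ)))ᶜ)
          ((ball x₀ r \ closedBall x₀ (r * (1 - θ))).indicator w)
          ((ball x₀ r \ closedBall x₀ (r * (1 - θ))).indicator Dw) →
        ∫ x in ball x₀ r \ closedBall x₀ (r * (1 - θ)), ‖(1 / (r * θ)) • w x‖ ^ p x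
          ≤ c * ((∫ x in ball x₀ r \ closedBall x₀ (r * (1 - θ)), ‖Dw x‖ ^ p x)
              + (volume (ball x₀ r \ closedBall x₀ (r * (1 - θ)))).toReal)) := by
  obtain ⟨⟨c, hc, hball⟩, ⟨c', hc', hannulus⟩⟩ :=
    poincare_inequality_variable_exponent_general n N α γ₂ Cp K hα
  refine ⟨⟨c, hc, fun Ω _ p ⟨_, _, hpC, _, hp⟩ w Dw hw x₀ r hr hr1 hΩ hK => ?_⟩,
    ⟨c', hc', fun Ω _ p ⟨_, _, hpC, _, hp⟩ x₀ r θ hr hr1 hθ hθ1 hΩ w Dw hw hK hzero => ?_⟩⟩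
  · have hBΩ : ball x₀ r ⊆ Ω := ball_subset_closedBall.trans hΩ
    exact hball p w Dw x₀ r hr hr1 (fun x hx y hy => hpC x (hBΩ hx) y (hBΩ hy))
      (fun x hx => ⟨hγ₁.le.trans (hp x (hBΩ hx)).1, (hp x (hBΩ hx)).2⟩) (hw.1.mono hBΩ)
      ((hw.2 _ (isCompact_closedBall x₀ r) hΩ).2.2.2.mono_set ball_subset_closedBall)
      (ae_restrict_of_forall_mem measurableSet_ball hK)
  · have hAΩ : ball x₀ r \ closedBall x₀ (r * (1 - θ)) ⊆ Ω :=
      sdiff_subset.trans (ball_subset_closedBall.trans hΩ)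
    exact hannulus p w Dw x₀ r θ _ hr hθ hθ1.le (by nlinarith) rfl
      (fun x hx y hy => hpC x (hAΩ hx) y (hAΩ hy))
      (fun x hx => ⟨hγ₁.le.trans (hp x (hAΩ hx)).1, (hp x (hAΩ hx)).2⟩) hzero hw.2.2.2.2
      (ae_restrict_of_forall_mem (measurableSet_ball.diff measurableSet_closedBall) hK)
end
end
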